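/- arXiv:1905.00368 — 2 statements merged into one kernel-verified Lean document; each statement's English description precedes it below -/
import Mathlib

section
/- SCW̄_p is a metric on 𝒫_p(𝒳_1 × 𝒫_p(𝒳_2)) (it is symmetric, satisfies the triangle inequality, and vanishes exactly on the diagonal) and satisfies SCW̄_p(μ, ν) ≤ AW̄_p(μ, ν) for all μ, ν ∈ 𝒫_p(𝒳_1 × 𝒫_p(𝒳_2)). -/
open MeasureTheory ProbabilityTheory ENNReal Filter Topology

noncomputable section

namespace AWPaper

/-! ### Generic constructions -/

variable {α β : Type*}

/-- The set of couplings of two measures. -/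
def Cpl [MeasurableSpace α] [MeasurableSpace β] (μ : Measure α) (ν : Measure β) :
    Set (Measure (α × β)) :=
  {π | π.map Prod.fst = μ ∧ π.map Prod.snd = ν}

/-- The `p`-Wasserstein distance (with values in `ℝ≥0∞`) associated to an
`ℝ≥0∞`-valued distance function `d`. -/
def Wp [MeasurableSpace α] (p : ℝ) (d : α → α → ℝ≥0∞) (μ ν : Measure α) : ℝ≥0∞ :=
  ⨅ π ∈ Cpl μ ν, (∫⁻ z, d z.1 z.2 ^ p ∂π) ^ (1 / p)

/-- The topology generated by the open balls of an `ℝ≥0∞`-valued distance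
function.  For a genuine metric this is the metric topology. -/
def ballTop (d : α → α → ℝ≥0∞) : TopologicalSpace α :=
  TopologicalSpace.generateFrom {s | ∃ x ε, 0 < ε ∧ s = {y | d x y < ε}}

/-- The product distance of two `ℝ≥0∞`-valued distances, `ℓ^p`-style. -/
def prodDist (p : ℝ) (d₁ : α → α → ℝ≥0∞) (d₂ : β → β → ℝ≥0∞) :
    α × β → α × β → ℝ≥0∞ :=
  fun u v => (d₁ u.1 v.1 ^ p + d₂ u.2 v.2 ^ p) ^ (1 / p)

/-- Membership in the `p`-Wasserstein space: a probability measure with finite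
`p`-th moment (w.r.t. the distance function `d`). -/
def MemPp [MeasurableSpace α] (p : ℝ) (d : α → α → ℝ≥0∞) (μ : Measure α) : Prop :=
  IsProbabilityMeasure μ ∧ ∃ x₀, ∫⁻ x, d x₀ x ^ p ∂μ ≠ ∞

/-- The weak topology on measures induced by integration of bounded continuous
functions, for a given topology `τ` on the base space. -/
def weakTop [MeasurableSpace α] (τ : TopologicalSpace α) : TopologicalSpace (Measure α) :=
  TopologicalSpace.induced
    (fun μ => fun f : @BoundedContinuousFunction α ℝ τ _ => ∫ x, f x ∂μ)
    Pi.topologicalSpace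

/-- The product topology built from two explicitly given topologies. -/
def prodTop (τ₁ : TopologicalSpace α) (τ₂ : TopologicalSpace β) : TopologicalSpace (α × β) :=
  TopologicalSpace.induced Prod.fst τ₁ ⊓ TopologicalSpace.induced Prod.snd τ₂

/-- An everywhere-defined version of the disintegration kernel: it agrees with
`Measure.condKernel` on finite measures. -/
def condK [MeasurableSpace α] [MeasurableSpace β] [StandardBorelSpace β] [Nonempty β]
    (ρ : Measure (α × β)) : Kernel α β :=
  letI := Classical.dec (IsFiniteMeasure ρ)
  if h : IsFiniteMeasure ρ then @Measure.condKernel α β _ _ _ _ ρ h else 0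

/-- The disintegration map `𝒫(A × B) → 𝒫(A × 𝒫(B))`. -/
def disint [MeasurableSpace α] [MeasurableSpace β] [StandardBorelSpace β] [Nonempty β]
    (μ : Measure (α × β)) : Measure (α × Measure β) :=
  μ.map (fun z => (z.1, condK μ z.1))

/-- The intensity ("und") map `𝒫(A × 𝒫(B)) → 𝒫(A × B)`. -/
def und [MeasurableSpace α] [MeasurableSpace β] (μ : Measure (α × Measure β)) :
    Measure (α × β) :=
  μ.bind (fun z => (Measure.dirac z.1).prod z.2)

/-! ### Path spaces -/

variable {X : Type*} [MeasurableSpace X]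

/-- The path-space distance `ρ̄((x_t),(y_t)) = (∑ ρ(x_t,y_t)^p)^{1/p}`. -/
def pathDist (p : ℝ) (d : X → X → ℝ≥0∞) {N : ℕ} :
    (Fin N → X) → (Fin N → X) → ℝ≥0∞ :=
  fun x y => (∑ t, d (x t) (y t) ^ p) ^ (1 / p)

/-- The first `t` coordinates of a path. -/
def restr {N : ℕ} (t : ℕ) (h : t ≤ N) (x : Fin N → X) : Fin t → X :=
  fun s => x (Fin.castLE h s)

/-- The last `N - t` coordinates of a path. -/
def tailr {N : ℕ} (t : ℕ) (h : t ≤ N) (x : Fin N → X) : Fin (N - t) → X :=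
  fun s => x ⟨t + s.1, by have := s.2; omega⟩

/-- A coupling `π` of two path measures is causal: for every `t` and Borel
`A ⊆ 𝒳^t`, `π((Y_1,…,Y_t) ∈ A | X) = π((Y_1,…,Y_t) ∈ A | X_1,…,X_t)` a.s. -/
def Causal {N : ℕ} (π : Measure ((Fin N → X) × (Fin N → X))) : Prop :=
  ∀ (t : ℕ) (h : t ≤ N) (A : Set (Fin t → X)), MeasurableSet A →
    (π[fun z => A.indicator (fun _ => (1 : ℝ)) (restr t h z.2) |
        MeasurableSpace.comap Prod.fst inferInstance])
      =ᵐ[π]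
    (π[fun z => A.indicator (fun _ => (1 : ℝ)) (restr t h z.2) |
        MeasurableSpace.comap (fun z => restr t h z.1) inferInstance])

/-- Bicausal couplings. -/
def Bicausal {N : ℕ} (π : Measure ((Fin N → X) × (Fin N → X))) : Prop :=
  Causal π ∧ Causal (π.map Prod.swap)

/-- The causal Wasserstein "distance" `CW_p`. -/
def CW (p : ℝ) (d : X → X → ℝ≥0∞) {N : ℕ} (μ ν : Measure (Fin N → X)) : ℝ≥0∞ :=
  ⨅ π ∈ {π ∈ Cpl μ ν | Causal π}, (∫⁻ z, pathDist p d z.1 z.2 ^ p ∂π) ^ (1 / p)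

/-- The symmetrized causal Wasserstein distance `SCW_p`. -/
def SCW (p : ℝ) (d : X → X → ℝ≥0∞) {N : ℕ} (μ ν : Measure (Fin N → X)) : ℝ≥0∞ :=
  max (CW p d μ ν) (CW p d ν μ)

/-- The adapted (nested, bicausal) Wasserstein distance `AW_p`. -/
def AW (p : ℝ) (d : X → X → ℝ≥0∞) {N : ℕ} (μ ν : Measure (Fin N → X)) : ℝ≥0∞ :=
  ⨅ π ∈ {π ∈ Cpl μ ν | Bicausal π}, (∫⁻ z, pathDist p d z.1 z.2 ^ p ∂π) ^ (1 / p)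

/-! ### Nested spaces (Pflug's nested distributions / Vershik's iterated spaces) -/

/-- A measurable space together with an `ℝ≥0∞`-valued distance. -/
structure QMS : Type 1 where
  carrier : Type
  inst : MeasurableSpace carrier
  dist : carrier → carrier → ℝ≥0∞

/-- The nested sequence of spaces: `nest X _ d p 0 = 𝒳` (this is `𝒳_N`), and
`nest X _ d p (k+1) = 𝒳 × 𝒫(nest X _ d p k)` with the nested distance
`D = (ρ^p + 𝒲_p^p)^{1/p}`.  Thus `𝒳_1` (for `N = k+1` time points) is
`nest X _ d p k`. -/
def nest (X : Type) (mX : MeasurableSpace X) (d : X → X → ℝ≥0∞) (p : ℝ) : ℕ → QMS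
  | 0 => ⟨X, mX, d⟩
  | (k + 1) =>
    let Q := nest X mX d p k
    ⟨X × @Measure Q.carrier Q.inst,
      @Prod.instMeasurableSpace _ _ mX (@Measure.instMeasurableSpace _ Q.inst),
      fun a b => (d a.1 b.1 ^ p + (@Wp _ Q.inst p Q.dist a.2 b.2) ^ p) ^ (1 / p)⟩

section NMapSec

variable (Y : Type) [mY : MeasurableSpace Y] [TopologicalSpace Y] [PolishSpace Y]
  [BorelSpace Y] [Nonempty Y]

/-- The map `𝒩` sending the law of a process with `k+1` time steps to the
corresponding nested distribution, via iterated regular conditional laws. -/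
def NMap (d : Y → Y → ℝ≥0∞) (p : ℝ) :
    ∀ k : ℕ, Measure (Fin (k + 1) → Y) →
      @Measure (nest Y mY d p k).carrier (nest Y mY d p k).inst
  | 0, μ =>
    letI : MeasurableSpace (nest Y mY d p 0).carrier := (nest Y mY d p 0).inst
    μ.map (fun x => x 0)
  | (k + 1), μ =>
    letI : MeasurableSpace (nest Y mY d p k).carrier := (nest Y mY d p k).inst
    letI : MeasurableSpace (nest Y mY d p (k + 1)).carrier := (nest Y mY d p (k + 1)).inst
    (μ.map (fun x => x 0)).map
      (fun x₀ => (x₀, NMap d p k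
        ((condK (μ.map (fun x => (x 0, fun s : Fin (k + 1) => x s.succ)))) x₀)))

end NMapSec

section PathStructures

variable {Y : Type*} [mY : MeasurableSpace Y]

/-- A process `L` is adapted: `L t` depends only on the first `t+1` coordinates. -/
def AdaptedProc {N : ℕ} (L : Fin N → (Fin N → Y) → ℝ) : Prop :=
  ∀ (t : Fin N) (x y : Fin N → Y), (∀ s : Fin N, s ≤ t → x s = y s) → L t x = L t y

/-- `τ` is a stopping time of the canonical filtration on the path space. -/
def IsStopTime {N : ℕ} (τ : (Fin N → Y) → Fin N) : Prop :=
  ∀ t : Fin N,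
    MeasurableSet[MeasurableSpace.comap (restr (X := Y) (t.1 + 1) t.2) inferInstance]
      {x | τ x = t}

/-- The optimal stopping value `v^L(μ)`. -/
def stopVal {N : ℕ} (L : Fin N → (Fin N → Y) → ℝ) (μ : Measure (Fin N → Y)) : ℝ :=
  ⨅ τ : {τ : (Fin N → Y) → Fin N // IsStopTime τ}, ∫ x, L (τ.1 x) x ∂μ

variable [TopologicalSpace Y]

/-- `AC(X̄)`: adapted processes which are continuous and bounded. -/
def ACbdd {N : ℕ} (L : Fin N → (Fin N → Y) → ℝ) : Prop :=
  (∀ t, Continuous (L t)) ∧ AdaptedProc L ∧ ∃ C : ℝ, ∀ t x, |L t x| ≤ C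

/-- `AC_p(X̄)`: adapted continuous processes of growth of order `p`. -/
def ACp (p : ℝ) (d : Y → Y → ℝ≥0∞) {N : ℕ} (L : Fin N → (Fin N → Y) → ℝ) : Prop :=
  (∀ t, Continuous (L t)) ∧ AdaptedProc L ∧
    ∃ (C : ℝ) (x₀ : Fin N → Y), ∀ t x, |L t x| ≤ C * (1 + ((pathDist p d x₀ x) ^ p).toReal)

/-- The optimal stopping topology (weak version, bounded continuous rewards). -/
def stopTopW (N : ℕ) : TopologicalSpace (Measure (Fin N → Y)) :=
  ⨅ L : {L : Fin N → (Fin N → Y) → ℝ // ACbdd L},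
    TopologicalSpace.induced (stopVal L.1) inferInstance

/-- The `𝒲_p`-optimal stopping topology. -/
def stopTopWp (p : ℝ) (d : Y → Y → ℝ≥0∞) (N : ℕ) :
    TopologicalSpace (Measure (Fin N → Y)) :=
  ⨅ L : {L : Fin N → (Fin N → Y) → ℝ // ACp p d L},
    TopologicalSpace.induced (stopVal L.1) inferInstance

variable [PolishSpace Y] [BorelSpace Y] [Nonempty Y]

/-- Hellwig's map `I_t`, sending `μ` to the joint law of the first `t`
coordinates together with the conditional law of the remaining coordinates. -/
def infoMap (N t : ℕ) (h : t ≤ N) (μ : Measure (Fin N → Y)) :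
    Measure ((Fin t → Y) × Measure (Fin (N - t) → Y)) :=
  μ.map (fun x => (restr t h x,
    condK (μ.map (fun y => (restr t h y, tailr t h y))) (restr t h x)))

/-- Hellwig's information topology (weak version). -/
def infoTopW (N : ℕ) : TopologicalSpace (Measure (Fin N → Y)) :=
  ⨅ (t : ℕ) (_ : 1 ≤ t) (h : t ≤ N - 1),
    TopologicalSpace.induced (infoMap N t (le_trans h (Nat.sub_le N 1)))
      (weakTop (prodTop Pi.topologicalSpace (weakTop Pi.topologicalSpace)))

/-- The `𝒲_p`-information topology. -/
def infoTopWp (p : ℝ) (d : Y → Y → ℝ≥0∞) (N : ℕ) :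
    TopologicalSpace (Measure (Fin N → Y)) :=
  ⨅ (t : ℕ) (_ : 1 ≤ t) (h : t ≤ N - 1),
    TopologicalSpace.induced (infoMap N t (le_trans h (Nat.sub_le N 1)))
      (ballTop (Wp p (prodDist p (pathDist p d) (Wp p (pathDist p d)))))

/-- Aldous' prediction process `Z_t^μ` (as a function of the path). -/
def predict (N : ℕ) (μ : Measure (Fin N → Y)) (t : ℕ) (h : t ≤ N) :
    (Fin N → Y) → Measure (Fin N → Y) :=
  fun x => condK (μ.map (fun y => (restr t h y, y))) (restr t h x)

/-- Aldous' map `E`, sending `μ` to the joint law of the path together with its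
prediction process. -/
def aldousMap (N : ℕ) (μ : Measure (Fin N → Y)) :
    Measure ((Fin N → Y) × (Fin (N + 1) → Measure (Fin N → Y))) :=
  μ.map (fun x =>
    (x, fun t : Fin (N + 1) => predict N μ t.1 (Nat.lt_succ_iff.mp t.2) x))

/-- Aldous' extended weak topology. -/
def aldousTopW (N : ℕ) : TopologicalSpace (Measure (Fin N → Y)) :=
  TopologicalSpace.induced (aldousMap N)
    (weakTop (prodTop Pi.topologicalSpace
      (@Pi.topologicalSpace (Fin (N + 1)) (fun _ => Measure (Fin N → Y))
        (fun _ => weakTop Pi.topologicalSpace))))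

/-- The extended `𝒲_p`-topology. -/
def aldousTopWp (p : ℝ) (d : Y → Y → ℝ≥0∞) (N : ℕ) :
    TopologicalSpace (Measure (Fin N → Y)) :=
  TopologicalSpace.induced (aldousMap N)
    (ballTop (Wp p (prodDist p (pathDist p d)
      (fun Z Z' : Fin (N + 1) → Measure (Fin N → Y) =>
        (∑ t, Wp p (pathDist p d) (Z t) (Z' t) ^ p) ^ (1 / p)))))

end PathStructures

/-! ### The lifted two-time-point space `𝒳₁ × 𝒫_p(𝒳₂)` -/

section Lifted

variable {A B : Type*} [MeasurableSpace A] [MeasurableSpace B]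

/-- The nested distance on `𝒳₁ × 𝒫_p(𝒳₂)`. -/
def liftDist (p : ℝ) (dA : A → A → ℝ≥0∞) (dB : B → B → ℝ≥0∞) :
    (A × Measure B) → (A × Measure B) → ℝ≥0∞ :=
  fun u v => (dA u.1 v.1 ^ p + Wp p dB u.2 v.2 ^ p) ^ (1 / p)

/-- `η` is a version of the measure-valued conditional expectation
`E_γ[X̂₂ | Y⃗]` (i.e. the barycenter of a regular conditional law of `X̂₂`
given `Y⃗ = (Y₁, Ŷ₂)`). -/
def IsCondBar (γ : Measure ((A × Measure B) × (A × Measure B)))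
    (η : (A × Measure B) × (A × Measure B) → Measure B) : Prop :=
  (∃ g : (A × Measure B) → Measure B, Measurable g ∧ ∀ z, η z = g z.2) ∧
  (∀ z, IsProbabilityMeasure (η z)) ∧
  ∀ S : Set (A × Measure B), MeasurableSet S → ∀ E : Set B, MeasurableSet E →
    ∫⁻ z in {z | z.2 ∈ S}, η z E ∂γ = ∫⁻ z in {z | z.2 ∈ S}, z.1.2 E ∂γ

/-- `AW̄_p`, the `p`-Wasserstein distance on `𝒫_p(𝒳₁ × 𝒫_p(𝒳₂))`. -/
def AWbar (p : ℝ) (dA : A → A → ℝ≥0∞) (dB : B → B → ℝ≥0∞)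
    (μ ν : Measure (A × Measure B)) : ℝ≥0∞ :=
  Wp p (liftDist p dA dB) μ ν

/-- `CW̄_p`, the lifted causal Wasserstein "distance". -/
def CWbar (p : ℝ) (dA : A → A → ℝ≥0∞) (dB : B → B → ℝ≥0∞)
    (μ ν : Measure (A × Measure B)) : ℝ≥0∞ :=
  ⨅ γ ∈ Cpl μ ν, ⨅ η ∈ {η | IsCondBar γ η},
    (∫⁻ z, (dA z.1.1 z.2.1 ^ p + Wp p dB (η z) z.2.2 ^ p) ∂γ) ^ (1 / p)

/-- `SCW̄_p`, the symmetrization of `CW̄_p`. -/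
def SCWbar (p : ℝ) (dA : A → A → ℝ≥0∞) (dB : B → B → ℝ≥0∞)
    (μ ν : Measure (A × Measure B)) : ℝ≥0∞ :=
  max (CWbar p dA dB μ ν) (CWbar p dA dB ν μ)

/-- Membership in `𝒫_p(𝒳₁ × 𝒫_p(𝒳₂))`: a probability measure, concentrated on
`𝒳₁ × 𝒫_p(𝒳₂)`, with finite `p`-th moment for the nested distance. -/
def MemPpLift (p : ℝ) (dA : A → A → ℝ≥0∞) (dB : B → B → ℝ≥0∞)
    (μ : Measure (A × Measure B)) : Prop :=
  IsProbabilityMeasure μ ∧ (∀ᵐ z ∂μ, MemPp p dB z.2) ∧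
    ∃ z₀ : A × Measure B, MemPp p dB z₀.2 ∧ ∫⁻ z, liftDist p dA dB z₀ z ^ p ∂μ ≠ ∞

/-- Two-time-point causality: given a coupling `π` of measures on products
`A₁ × B₁` and `A₂ × B₂`, the conditional law of `Y₁` given `X = (X₁, X₂)`
coincides with the conditional law of `Y₁` given `X₁`. -/
def Causal2 {A₁ B₁ A₂ B₂ : Type*} [MeasurableSpace A₁] [MeasurableSpace B₁]
    [MeasurableSpace A₂] [MeasurableSpace B₂]
    (π : Measure ((A₁ × B₁) × (A₂ × B₂))) : Prop :=
  ∀ S : Set A₂, MeasurableSet S →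
    (π[fun z => S.indicator (fun _ => (1 : ℝ)) z.2.1 |
        MeasurableSpace.comap Prod.fst inferInstance])
      =ᵐ[π]
    (π[fun z => S.indicator (fun _ => (1 : ℝ)) z.2.1 |
        MeasurableSpace.comap (fun z => z.1.1) inferInstance])

/-- The two-time-point causal Wasserstein "distance" on `𝒫_p(𝒳₁ × 𝒳₂)`. -/
def CW2 (p : ℝ) (dA : A → A → ℝ≥0∞) (dB : B → B → ℝ≥0∞)
    (μ ν : Measure (A × B)) : ℝ≥0∞ :=
  ⨅ π ∈ {π ∈ Cpl μ ν | Causal2 π},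
    (∫⁻ z, (dA z.1.1 z.2.1 ^ p + dB z.1.2 z.2.2 ^ p) ∂π) ^ (1 / p)

end Lifted

set_option linter.unusedSectionVars false


lemma rpow_inv_rpow_self {p : ℝ} (hp : 1 ≤ p) (x : ℝ≥0∞) : (x ^ (1 / p)) ^ p = x := by
  rw [← ENNReal.rpow_mul, one_div, inv_mul_cancel₀ (by linarith), ENNReal.rpow_one]

lemma rpow_rpow_inv_self {p : ℝ} (hp : 1 ≤ p) (x : ℝ≥0∞) : (x ^ p) ^ (1 / p) = x := by
  rw [← ENNReal.rpow_mul, one_div, mul_inv_cancel₀ (by linarith), ENNReal.rpow_one]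

section Glue
variable {A B C : Type*} [MeasurableSpace A] [MeasurableSpace B] [MeasurableSpace C]

lemma map_compProd_comap (ρ : Measure A) [IsProbabilityMeasure ρ] (K : Kernel B C)
    [IsMarkovKernel K] (f : A → B) (hf : Measurable f) :
    (ρ ⊗ₘ K.comap f hf).map (fun w => (f w.1, w.2)) = (ρ.map f) ⊗ₘ K := by
  have : IsProbabilityMeasure (ρ.map f) := Measure.isProbabilityMeasure_map hf.aemeasurable
  have hm : Measurable (fun w : A × C => (f w.1, w.2)) := by fun_prop
  ext s hs
  rw [Measure.map_apply hm hs, Measure.compProd_apply (hm hs), Measure.compProd_apply hs,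
    lintegral_map (Kernel.measurable_kernel_prodMk_left hs) hf]
  rfl

lemma cpl_prob {μ : Measure A} {ν : Measure B} [IsProbabilityMeasure μ] {π : Measure (A × B)}
    (h : π ∈ Cpl μ ν) : IsProbabilityMeasure π := by
  constructor
  have h1 := h.1
  have : (π.map Prod.fst) Set.univ = 1 := by rw [h1]; simp
  rwa [Measure.map_apply measurable_fst MeasurableSet.univ, Set.preimage_univ] at this

lemma cpl_swap {μ : Measure A} {ν : Measure B} {π : Measure (A × B)}
    (h : π ∈ Cpl μ ν) : π.map Prod.swap ∈ Cpl ν μ := by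
  constructor
  · rw [Measure.map_map measurable_fst measurable_swap]; exact h.2
  · rw [Measure.map_map measurable_snd measurable_swap]; exact h.1

end Glue

section W
variable {B : Type*} [MetricSpace B] [CompleteSpace B] [SecondCountableTopology B]
    [MeasurableSpace B] [BorelSpace B]

lemma Wp_le {A : Type*} [MeasurableSpace A] {p : ℝ} {d : A → A → ℝ≥0∞} {m n : Measure A}
    {π : Measure (A × A)} (h : π ∈ Cpl m n) : Wp p d m n ≤ (∫⁻ z, d z.1 z.2 ^ p ∂π) ^ (1 / p) :=
  iInf₂_le π h

lemma Wp_symm_le {A : Type*} [MeasurableSpace A] {p : ℝ} {d : A → A → ℝ≥0∞}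
    (hd : ∀ x y, d x y = d y x) (m n : Measure A) : Wp p d m n ≤ Wp p d n m := by
  refine le_iInf₂ fun π hπ => ?_
  refine (Wp_le (cpl_swap hπ)).trans (le_of_eq ?_)
  have : (π.map Prod.swap) = π.map (MeasurableEquiv.prodComm : A × A ≃ᵐ A × A) := rfl
  rw [this, lintegral_map_equiv]
  congr 1
  refine lintegral_congr fun z => ?_
  rw [hd]; rfl

lemma Wp_symm {A : Type*} [MeasurableSpace A] {p : ℝ} {d : A → A → ℝ≥0∞}
    (hd : ∀ x y, d x y = d y x) (m n : Measure A) : Wp p d m n = Wp p d n m :=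
  le_antisymm (Wp_symm_le hd m n) (Wp_symm_le hd n m)

lemma Wp_self {A : Type*} [MeasurableSpace A] {p : ℝ} (hp : 1 ≤ p) {d : A → A → ℝ≥0∞}
    (hd : ∀ x, d x x = 0) (hd' : Measurable (fun z : A × A => d z.1 z.2)) (m : Measure A) :
    Wp p d m m = 0 := by
  have hm : Measurable (fun x : A => (x, x)) := by fun_prop
  have h : m.map (fun x => (x, x)) ∈ Cpl m m := by
    constructor
    · rw [Measure.map_map measurable_fst hm]; exact Measure.map_id
    · rw [Measure.map_map measurable_snd hm]; exact Measure.map_id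
  have := Wp_le (p := p) (d := d) h
  rw [lintegral_map (by fun_prop) hm] at this
  simp only [hd, ENNReal.zero_rpow_of_pos (show 0 < p by linarith), lintegral_zero,
    ENNReal.zero_rpow_of_pos (show 0 < 1 / p by positivity)] at this
  exact le_antisymm this zero_le'

lemma Wp_triangle [Nonempty B] {p : ℝ} (hp : 1 ≤ p) (m n k : Measure B) [IsProbabilityMeasure m]
    [IsProbabilityMeasure n] :
    Wp p edist m k ≤ Wp p edist m n + Wp p edist n k := by
  conv_rhs => rw [Wp, Wp]
  simp_rw [ENNReal.iInf_add, ENNReal.add_iInf]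
  refine le_iInf₂ fun π₁ h₁ => le_iInf₂ fun π₂ h₂ => ?_
  have := cpl_prob h₁
  have := cpl_prob h₂
  have e2 : π₂ = π₁.map Prod.snd ⊗ₘ π₂.condKernel := by
    rw [h₁.2, ← h₂.1]; exact (π₂.disintegrate π₂.condKernel).symm
  set θ := π₁ ⊗ₘ (π₂.condKernel).comap Prod.snd measurable_snd with hθ
  have t1 : θ.map Prod.fst = π₁ := Measure.fst_compProd _ _
  have t2 : θ.map (fun w => (w.1.2, w.2)) = π₂ := by
    rw [hθ, map_compProd_comap]; exact e2.symm
  have hc : θ.map (fun w => (w.1.1, w.2)) ∈ Cpl m k := by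
    constructor
    · rw [Measure.map_map measurable_fst (by fun_prop), ← h₁.1, ← t1,
        Measure.map_map measurable_fst (by fun_prop)]; rfl
    · rw [Measure.map_map measurable_snd (by fun_prop), ← h₂.2, ← t2,
        Measure.map_map measurable_snd (by fun_prop)]; rfl
  refine (Wp_le hc).trans ?_
  rw [lintegral_map (by fun_prop) (by fun_prop)]
  conv_rhs => rw [← t1, ← t2]
  rw [lintegral_map (by fun_prop) (by fun_prop), lintegral_map (by fun_prop) (by fun_prop)]
  refine le_trans ?_ (ENNReal.lintegral_Lp_add_le (μ := θ) (p := p)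
    (f := fun w => edist w.1.1 w.1.2) (g := fun w => edist w.1.2 w.2)
    (by fun_prop) (by fun_prop) hp)
  gcongr
  exact edist_triangle _ _ _

/-- moment -/
lemma mom_le {p : ℝ} (hp : 1 ≤ p) (x₀ : B) (m n : Measure B) [IsProbabilityMeasure m] :
    (∫⁻ x, edist x₀ x ^ p ∂n) ^ (1 / p) ≤
      (∫⁻ x, edist x₀ x ^ p ∂m) ^ (1 / p) + Wp p edist m n := by
  rw [Wp]
  simp_rw [ENNReal.add_iInf]
  refine le_iInf₂ fun π h => ?_
  have := cpl_prob h
  conv_lhs => rw [← h.2]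
  conv_rhs => rw [← h.1]
  rw [lintegral_map (by fun_prop) (by fun_prop), lintegral_map (by fun_prop) (by fun_prop)]
  refine le_trans ?_ (ENNReal.lintegral_Lp_add_le (μ := π) (p := p)
    (f := fun w => edist x₀ w.1) (g := fun w => edist w.1 w.2)
    (by fun_prop) (by fun_prop) hp)
  gcongr
  exact edist_triangle _ _ _

lemma mom_fin {p : ℝ} (hp : 1 ≤ p) (m : Measure B) [IsProbabilityMeasure m] (x₀ x₁ : B)
    (h : ∫⁻ x, edist x₀ x ^ p ∂m ≠ ∞) : ∫⁻ x, edist x₁ x ^ p ∂m ≠ ∞ := by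
  have hb : ∀ x, edist x₁ x ^ p ≤ 2 ^ (p - 1) * (edist x₁ x₀ ^ p + edist x₀ x ^ p) := fun x =>
    (ENNReal.rpow_le_rpow (edist_triangle x₁ x₀ x) (by linarith)).trans
      (ENNReal.rpow_add_le_mul_rpow_add_rpow _ _ hp)
  refine ne_top_of_le_ne_top ?_ (lintegral_mono hb)
  rw [lintegral_const_mul _ (by fun_prop), lintegral_add_left (by fun_prop), lintegral_const]
  refine ENNReal.mul_ne_top (ENNReal.rpow_ne_top_of_nonneg (by linarith) (by simp)) ?_
  refine ENNReal.add_ne_top.2 ⟨?_, h⟩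
  simp only [measure_univ, mul_one]
  exact ENNReal.rpow_ne_top_of_nonneg (by linarith) (edist_ne_top _ _)

lemma MemPp.mom {p : ℝ} (hp : 1 ≤ p) {m : Measure B} (h : MemPp p edist m) (x₀ : B) :
    ∫⁻ x, edist x₀ x ^ p ∂m ≠ ∞ := by
  obtain ⟨h1, x₁, h2⟩ := h
  exact mom_fin hp m x₁ x₀ h2

end W


section OT
variable {I : Type} [Fintype I]

/-- marginals and cost of a (finite) transport plan -/
def otMap (c : I × I → ℝ) : (I × I → ℝ) →ₗ[ℝ] (I → ℝ) × (I → ℝ) × ℝ where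
  toFun q := (fun i => ∑ j, q (i, j), fun j => ∑ i, q (i, j), ∑ z, c z * q z)
  map_add' q q' := by
    simp only [Pi.add_apply, Finset.sum_add_distrib, mul_add, Prod.mk_add_mk]
    rfl
  map_smul' t q := by
    simp only [Pi.smul_apply, smul_eq_mul, Finset.mul_sum, RingHom.id_apply, Prod.smul_mk]
    refine Prod.ext ?_ (Prod.ext ?_ ?_)
    · funext i; simp [Finset.mul_sum]
    · funext i; simp [Finset.mul_sum]
    · simp only; refine Finset.sum_congr rfl fun z _ => by ring

def otK (c : I × I → ℝ) : Set ((I → ℝ) × (I → ℝ) × ℝ) := otMap c '' stdSimplex ℝ (I × I)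

lemma otK_compact (c : I × I → ℝ) : IsCompact (otK c) :=
  (isCompact_stdSimplex ℝ _).image (otMap c).continuous_of_finiteDimensional

lemma otK_convex (c : I × I → ℝ) : Convex ℝ (otK c) :=
  (convex_stdSimplex ℝ _).linear_image (otMap c)

lemma otK_nonneg {c : I × I → ℝ} (hc : ∀ z, 0 ≤ c z) {a b r} (h : (a, b, r) ∈ otK c) : 0 ≤ r := by
  obtain ⟨q, hq, he⟩ := h
  have : r = ∑ z, c z * q z := by
    have := congrArg (fun t => t.2.2) he
    exact this.symm
  rw [this]
  exact Finset.sum_nonneg fun z _ => mul_nonneg (hc z) (hq.1 z)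

def ot (c : I × I → ℝ) (a b : I → ℝ) : ℝ≥0∞ := ⨅ r ∈ {r : ℝ | (a, b, r) ∈ otK c}, ENNReal.ofReal r

lemma ot_le {c : I × I → ℝ} {a b r} (h : (a, b, r) ∈ otK c) : ot c a b ≤ ENNReal.ofReal r :=
  iInf₂_le r h

lemma ot_attained {c : I × I → ℝ} {a b : I → ℝ} (h : ∃ r, (a, b, r) ∈ otK c) :
    ∃ r, (a, b, r) ∈ otK c ∧ ot c a b = ENNReal.ofReal r := by
  have hK : IsCompact {r : ℝ | (a, b, r) ∈ otK c} := by
    have : {r : ℝ | (a, b, r) ∈ otK c} =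
      (fun t : (I → ℝ) × (I → ℝ) × ℝ => t.2.2) '' (otK c ∩ {t | t.1 = a ∧ t.2.1 = b}) := by
      ext r; constructor
      · intro hr; exact ⟨_, ⟨hr, rfl, rfl⟩, rfl⟩
      · rintro ⟨⟨a', b', r'⟩, ⟨h1, h2, h3⟩, rfl⟩
        simp only at h2 h3; subst h2 h3; exact h1
    rw [this]
    refine ((otK_compact c).inter_right ?_).image (by fun_prop)
    exact (isClosed_eq (by fun_prop) (by fun_prop)).inter (isClosed_eq (by fun_prop) (by fun_prop))
  obtain ⟨r, hr, hm⟩ := hK.exists_isLeast h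
  refine ⟨r, hr, le_antisymm (ot_le hr) (le_iInf₂ fun r' hr' => ENNReal.ofReal_le_ofReal (hm hr'))⟩

lemma ot_measurable (c : I × I → ℝ) :
    Measurable (fun x : (I → ℝ) × (I → ℝ) => ot c x.1 x.2) := by
  refine measurable_of_Iic fun s => ?_
  rcases eq_or_ne s ∞ with rfl | hs
  · simp
  have : (fun x : (I → ℝ) × (I → ℝ) => ot c x.1 x.2) ⁻¹' Set.Iic s =
    (fun t : (I → ℝ) × (I → ℝ) × ℝ => (t.1, t.2.1)) ''
      (otK c ∩ {t | ENNReal.ofReal t.2.2 ≤ s}) := by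
    ext ⟨a, b⟩
    constructor
    · intro h
      have hne : ∃ r, (a, b, r) ∈ otK c := by
        by_contra! hcon
        have : ot c a b = ∞ := by
          simp only [ot, iInf_eq_top]; intro r hr; exact absurd hr (hcon r)
        simp only [Set.mem_preimage, Set.mem_Iic, this, top_le_iff] at h
        exact hs h
      obtain ⟨r, hr, he⟩ := ot_attained hne
      exact ⟨(a, b, r), ⟨hr, by simpa [← he] using h⟩, rfl⟩
    · rintro ⟨⟨a', b', r⟩, ⟨h1, h2⟩, h3⟩
      simp only [Prod.mk.injEq] at h3
      obtain ⟨rfl, rfl⟩ := h3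
      exact (ot_le h1).trans h2
  rw [this]
  refine (IsCompact.image ((otK_compact c).inter_right ?_) (by fun_prop)).isClosed.measurableSet
  exact isClosed_le (ENNReal.continuous_ofReal.comp (by fun_prop)) continuous_const

attribute [irreducible] ot

lemma integral_triple {Ω : Type*} [MeasurableSpace Ω] (κ : Measure Ω)
    (a b : Ω → I → ℝ) (t : Ω → ℝ) (ha : Integrable a κ) (hb : Integrable b κ)
    (ht : Integrable t κ) :
    ∫ ω, (a ω, b ω, t ω) ∂κ =
      ((fun i => ∫ ω, a ω i ∂κ), (fun i => ∫ ω, b ω i ∂κ), ∫ ω, t ω ∂κ) := by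
  have hA : ∫ ω, a ω ∂κ = fun i => ∫ ω, a ω i ∂κ :=
    funext fun i => eval_integral (fun i => ha.eval i) i
  have hB : ∫ ω, b ω ∂κ = fun i => ∫ ω, b ω i ∂κ :=
    funext fun i => eval_integral (fun i => hb.eval i) i
  rw [integral_pair ha (hb.prodMk ht), integral_pair hb ht, hA, hB]

lemma ot_jensen_aux (K : Set ((I → ℝ) × (I → ℝ) × ℝ)) (hK : IsCompact K) (hc : Convex ℝ K)
    {Ω : Type*} [MeasurableSpace Ω]
    (κ : Measure Ω) [IsProbabilityMeasure κ] (a b : Ω → I → ℝ) (ha : Measurable a)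
    (hb : Measurable b) (t : Ω → ℝ) (ht : Measurable t) (h : ∀ ω, (a ω, b ω, t ω) ∈ K) :
    Integrable t κ ∧
      ((fun i => ∫ ω, a ω i ∂κ), (fun i => ∫ ω, b ω i ∂κ), ∫ ω, t ω ∂κ) ∈ K := by
  obtain ⟨C, hC⟩ := hK.isBounded.exists_norm_le
  have iA : Integrable a κ := Integrable.of_bound ha.aestronglyMeasurable C
    (Eventually.of_forall fun ω => (norm_fst_le (a ω, b ω, t ω)).trans (hC _ (h ω)))
  have iB : Integrable b κ := Integrable.of_bound hb.aestronglyMeasurable C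
    (Eventually.of_forall fun ω => (norm_fst_le (b ω, t ω)).trans
      ((norm_snd_le (a ω, b ω, t ω)).trans (hC _ (h ω))))
  have iT : Integrable t κ := Integrable.of_bound ht.aestronglyMeasurable C
    (Eventually.of_forall fun ω => (norm_snd_le (b ω, t ω)).trans
      ((norm_snd_le (a ω, b ω, t ω)).trans (hC _ (h ω))))
  refine ⟨iT, ?_⟩
  rw [← integral_triple κ a b t iA iB iT]
  exact hc.integral_mem hK.isClosed (Eventually.of_forall h) (iA.prodMk (iB.prodMk iT))

lemma ot_jensen {c : I × I → ℝ} (hc : ∀ z, 0 ≤ c z) {Ω : Type*} [MeasurableSpace Ω]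
    (κ : Measure Ω) [IsProbabilityMeasure κ] (a b : Ω → I → ℝ) (ha : Measurable a)
    (hb : Measurable b) (h : ∀ ω, ∃ r, (a ω, b ω, r) ∈ otK c) :
    ot c (fun i => ∫ ω, a ω i ∂κ) (fun i => ∫ ω, b ω i ∂κ) ≤ ∫⁻ ω, ot c (a ω) (b ω) ∂κ := by
  have hmem : ∀ ω, (a ω, b ω, (ot c (a ω) (b ω)).toReal) ∈ otK c := fun ω => by
    obtain ⟨r, hr, he⟩ := ot_attained (h ω)
    rwa [he, ENNReal.toReal_ofReal (otK_nonneg hc hr)]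
  have hot : Measurable (fun ω => ot c (a ω) (b ω)) := (ot_measurable c).comp (ha.prodMk hb)
  obtain ⟨hinteg, key⟩ := ot_jensen_aux (otK c) (otK_compact c) (otK_convex c) κ a b ha hb _
    hot.ennreal_toReal hmem
  refine (ot_le key).trans ?_
  rw [ofReal_integral_eq_lintegral_ofReal hinteg (Eventually.of_forall fun ω => by simp)]
  refine lintegral_mono fun ω => ENNReal.ofReal_toReal_le

end OT

section Disc
variable {B : Type*} [MetricSpace B] [CompleteSpace B] [SecondCountableTopology B]
    [MeasurableSpace B] [BorelSpace B] [Nonempty B]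

open TopologicalSpace in
def ind (B : Type*) [MetricSpace B] [SecondCountableTopology B]
    [MeasurableSpace B] [BorelSpace B] [Nonempty B] (N : ℕ) (x : B) : Fin (N + 1) :=
  ⟨SimpleFunc.nearestPtInd (denseSeq B) N x,
    Nat.lt_succ_of_le (SimpleFunc.nearestPtInd_le _ N x)⟩

lemma ind_meas (N : ℕ) : Measurable (ind B N) := by
  refine measurable_to_countable' fun i => ?_
  have : ind B N ⁻¹' {i} =
      SimpleFunc.nearestPtInd (TopologicalSpace.denseSeq B) N ⁻¹' {(i : ℕ)} := by
    ext x; simp [ind, Fin.ext_iff]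
  rw [this]
  exact SimpleFunc.measurableSet_preimage _ _

def pt (B : Type*) [MetricSpace B] [SecondCountableTopology B] [Nonempty B] (N : ℕ)
    (i : Fin (N + 1)) : B := TopologicalSpace.denseSeq B i

def near (B : Type*) [MetricSpace B] [SecondCountableTopology B]
    [MeasurableSpace B] [BorelSpace B] [Nonempty B] (N : ℕ) (x : B) : B := pt B N (ind B N x)

lemma near_meas (N : ℕ) : Measurable (near B N) := (measurable_of_finite (pt B N)).comp (ind_meas N)

lemma near_le (N : ℕ) (x : B) : edist x (near B N x) ≤ edist (TopologicalSpace.denseSeq B 0) x := by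
  rw [edist_comm]
  exact SimpleFunc.edist_nearestPt_le (TopologicalSpace.denseSeq B) x (Nat.zero_le N)

lemma near_tendsto (x : B) : Tendsto (fun N => edist x (near B N x)) atTop (𝓝 0) := by
  have := SimpleFunc.tendsto_nearestPt (e := TopologicalSpace.denseSeq B) (x := x)
    (by rw [(TopologicalSpace.denseRange_denseSeq B).closure_range]; trivial)
  have h2 := (tendsto_iff_edist_tendsto_0.1 this)
  simp only [edist_comm x]
  exact h2

def Dn (p : ℝ) (N : ℕ) (m : Measure B) : ℝ≥0∞ := ∫⁻ x, edist x (near B N x) ^ p ∂m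

lemma Dn_meas_fun (p : ℝ) (N : ℕ) : Measurable fun x : B => edist x (near B N x) ^ p :=
  (measurable_id.edist (near_meas N)).pow_const p

lemma Dn_meas (p : ℝ) (N : ℕ) : Measurable (fun m : Measure B => Dn p N m) :=
  Measure.measurable_lintegral (Dn_meas_fun p N)

lemma Dn_tendsto {p : ℝ} (hp : 1 ≤ p) {m : Measure B} (h : MemPp p edist m) :
    Tendsto (fun N => Dn p N m) atTop (𝓝 0) := by
  have hp0 : 0 < p := by linarith
  have := tendsto_lintegral_of_dominated_convergence (μ := m) (f := fun _ => 0)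
    (fun x => edist (TopologicalSpace.denseSeq B 0) x ^ p) (Dn_meas_fun p)
    (fun N => Eventually.of_forall fun x => ENNReal.rpow_le_rpow (near_le N x) hp0.le)
    (h.mom hp _) (Eventually.of_forall fun x => by
      have := ((ENNReal.continuous_rpow_const (y := p)).tendsto 0).comp (near_tendsto x)
      simpa [ENNReal.zero_rpow_of_pos hp0, Function.comp_def] using this)
  simpa [Dn] using this

def cst (B : Type*) [MetricSpace B] [SecondCountableTopology B] [Nonempty B] (p : ℝ) (N : ℕ) :
    Fin (N + 1) × Fin (N + 1) → ℝ := fun z => dist (pt B N z.1) (pt B N z.2) ^ p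

lemma cst_nonneg (p : ℝ) (N : ℕ) (z) : 0 ≤ cst B p N z := Real.rpow_nonneg dist_nonneg _

lemma cst_ofReal {p : ℝ} (hp : 1 ≤ p) (N : ℕ) (z) :
    ENNReal.ofReal (cst B p N z) = edist (pt B N z.1) (pt B N z.2) ^ p := by
  rw [cst, edist_dist, ENNReal.ofReal_rpow_of_nonneg dist_nonneg (by linarith)]

def avec (N : ℕ) (m : Measure B) : Fin (N + 1) → ℝ := fun i => (m (ind B N ⁻¹' {i})).toReal

lemma avec_meas (N : ℕ) : Measurable (avec (B := B) N) :=
  measurable_pi_lambda _ fun i =>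
    (Measure.measurable_coe (ind_meas N (measurableSet_singleton i))).ennreal_toReal

def Vn (p : ℝ) (N : ℕ) (m n : Measure B) : ℝ≥0∞ := ot (cst B p N) (avec N m) (avec N n)

lemma Vn_meas (p : ℝ) (N : ℕ) : Measurable (fun z : Measure B × Measure B => Vn p N z.1 z.2) := by
  have h : Measurable (fun z : Measure B × Measure B => (avec N z.1, avec N z.2)) :=
    Measurable.prodMk ((avec_meas N).comp measurable_fst) ((avec_meas N).comp measurable_snd)
  exact Measurable.comp (ot_measurable (cst B p N)) h

/-- a coupling gives a finite plan -/
lemma plan_of_cpl {p : ℝ} (hp : 1 ≤ p) (N : ℕ) {m n : Measure B} [IsProbabilityMeasure m]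
    {π : Measure (B × B)} (h : π ∈ Cpl m n) : ∃ r, (avec N m, avec N n, r) ∈ otK (cst B p N) ∧
      ENNReal.ofReal r = ∫⁻ z, edist (near B N z.1) (near B N z.2) ^ p ∂π := by
  have := cpl_prob h
  have hm : Measurable (fun z : B × B => (ind B N z.1, ind B N z.2)) :=
    ((ind_meas N).comp measurable_fst).prodMk ((ind_meas N).comp measurable_snd)
  set ρ := π.map (fun z : B × B => (ind B N z.1, ind B N z.2)) with hρ
  have : IsProbabilityMeasure ρ := Measure.isProbabilityMeasure_map hm.aemeasurable
  refine ⟨∑ z, cst B p N z * ρ.real {z}, ⟨fun z => ρ.real {z}, ⟨fun z => measureReal_nonneg, ?_⟩,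
    ?_⟩, ?_⟩
  · simp
  · refine Prod.ext ?_ (Prod.ext ?_ rfl)
    · funext i
      change ∑ j, ρ.real {(i, j)} = _
      change _ = (m (ind B N ⁻¹' {i})).toReal
      rw [← h.1, Measure.map_apply measurable_fst (ind_meas N (measurableSet_singleton i)),
        ← measureReal_def]
      have : Prod.fst ⁻¹' (ind B N ⁻¹' {i}) =
        (fun z : B × B => (ind B N z.1, ind B N z.2)) ⁻¹' (Prod.fst ⁻¹' {i}) := rfl
      rw [this, ← map_measureReal_apply hm (by measurability), ← hρ]
      rw [← measureReal_biUnion_finset (μ := ρ) (s := Finset.univ) (f := fun j => {(i, j)})]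
      · congr 1; ext ⟨a, b⟩; simp [eq_comm]
      · intro a _ b _ hab; simpa [Function.onFun] using hab
      · intro b _; exact measurableSet_singleton _
    · funext i
      change ∑ j, ρ.real {(j, i)} = _
      change _ = (n (ind B N ⁻¹' {i})).toReal
      rw [← h.2, Measure.map_apply measurable_snd (ind_meas N (measurableSet_singleton i)),
        ← measureReal_def]
      have : Prod.snd ⁻¹' (ind B N ⁻¹' {i}) =
        (fun z : B × B => (ind B N z.1, ind B N z.2)) ⁻¹' (Prod.snd ⁻¹' {i}) := rfl
      rw [this, ← map_measureReal_apply hm (by measurability), ← hρ]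
      rw [← measureReal_biUnion_finset (μ := ρ) (s := Finset.univ) (f := fun j => {(j, i)})]
      · congr 1; ext ⟨a, b⟩; simp [eq_comm]
      · intro a _ b _ hab; simpa [Function.onFun] using hab
      · intro b _; exact measurableSet_singleton _
  · rw [ENNReal.ofReal_sum_of_nonneg fun z _ => mul_nonneg (cst_nonneg p N z) measureReal_nonneg]
    have : ∫⁻ z, edist (near B N z.1) (near B N z.2) ^ p ∂π =
        ∫⁻ z, ENNReal.ofReal (cst B p N z) ∂ρ := by
      rw [hρ, lintegral_map (measurable_of_finite _) hm]
      refine lintegral_congr fun z => ?_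
      rw [cst_ofReal hp]; rfl
    rw [this, lintegral_fintype]
    refine Finset.sum_congr rfl fun z _ => ?_
    rw [ENNReal.ofReal_mul (cst_nonneg p N z), ofReal_measureReal]

lemma plan_exists {p : ℝ} (hp : 1 ≤ p) (N : ℕ) (m n : Measure B) [IsProbabilityMeasure m]
    [IsProbabilityMeasure n] : ∃ r, (avec N m, avec N n, r) ∈ otK (cst B p N) := by
  have : m.prod n ∈ Cpl m n := ⟨by simp, by simp⟩
  obtain ⟨r, h, _⟩ := plan_of_cpl hp N this
  exact ⟨r, h⟩

lemma Vn_le {p : ℝ} (hp : 1 ≤ p) (N : ℕ) (m n : Measure B) [IsProbabilityMeasure m] :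
    Vn p N m n ^ (1 / p) ≤ Dn p N m ^ (1 / p) + (Wp p edist m n + Dn p N n ^ (1 / p)) := by
  rw [Wp]
  simp_rw [ENNReal.iInf_add, ENNReal.add_iInf]
  refine le_iInf₂ fun π h => ?_
  obtain ⟨r, hr, he⟩ := plan_of_cpl hp N h
  have h0 : Vn p N m n ≤ ∫⁻ z, edist (near B N z.1) (near B N z.2) ^ p ∂π := he ▸ ot_le hr
  refine (ENNReal.rpow_le_rpow h0 (by positivity)).trans ?_
  have e1 : Dn p N m = ∫⁻ z, edist z.1 (near B N z.1) ^ p ∂π := by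
    rw [Dn, ← h.1, lintegral_map (Dn_meas_fun p N) measurable_fst]
  have e2 : Dn p N n = ∫⁻ z, edist z.2 (near B N z.2) ^ p ∂π := by
    rw [Dn, ← h.2, lintegral_map (Dn_meas_fun p N) measurable_snd]
  rw [e1, e2]
  have hn := near_meas (B := B) N
  have m1 : Measurable fun z : B × B => edist z.1 (near B N z.1) := by fun_prop
  have m2 : Measurable fun z : B × B => edist z.2 (near B N z.2) := by fun_prop
  have m3 : Measurable fun z : B × B => edist z.1 z.2 := by fun_prop
  refine le_trans ?_ ((ENNReal.lintegral_Lp_add_le (μ := π) (p := p) m1.aemeasurable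
    (m3.add m2).aemeasurable hp).trans
    (add_le_add_right (ENNReal.lintegral_Lp_add_le m3.aemeasurable m2.aemeasurable hp) _))
  gcongr with z
  simp only [Pi.add_apply]
  calc _ ≤ edist (near B N z.1) z.1 + edist z.1 (near B N z.2) := edist_triangle _ _ _
    _ ≤ edist (near B N z.1) z.1 + (edist z.1 z.2 + edist z.2 (near B N z.2)) := by
      gcongr; exact edist_triangle _ _ _
    _ = _ := by rw [edist_comm (near B N z.1)]

lemma Wp_near_le (p : ℝ) (N : ℕ) (m : Measure B) :
    Wp p edist m (m.map (near B N)) ≤ Dn p N m ^ (1 / p) := by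
  have hn := near_meas (B := B) N
  have hm : Measurable (fun x : B => (x, near B N x)) := by fun_prop
  have h : m.map (fun x => (x, near B N x)) ∈ Cpl m (m.map (near B N)) := by
    constructor
    · rw [Measure.map_map measurable_fst hm]; exact Measure.map_id
    · rw [Measure.map_map measurable_snd hm]; rfl
  refine (Wp_le h).trans ?_
  rw [lintegral_map (by fun_prop) hm]; rfl

lemma Wp_le_Vn {p : ℝ} (hp : 1 ≤ p) (N : ℕ) (m n : Measure B) [IsProbabilityMeasure m]
    [IsProbabilityMeasure n] :
    Wp p edist (m.map (near B N)) (n.map (near B N)) ≤ Vn p N m n ^ (1 / p) := by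
  obtain ⟨r, ⟨q, hq, hqe⟩, he⟩ := ot_attained (plan_exists hp N m n)
  have e1 : ∀ i, ∑ j, q (i, j) = avec N m i := fun i =>
    congrFun (congrArg (fun t => t.1) hqe) i
  have e2 : ∀ j, ∑ i, q (i, j) = avec N n j := fun i =>
    congrFun (congrArg (fun t => t.2.1) hqe) i
  have e3 : ∑ z, cst B p N z * q z = r := congrArg (fun t => t.2.2) hqe
  let ρ : Measure (Fin (N + 1) × Fin (N + 1)) := ∑ z, ENNReal.ofReal (q z) • Measure.dirac z
  have hρ : ∀ s : Set (Fin (N + 1) × Fin (N + 1)), ρ s =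
      ∑ z, ENNReal.ofReal (q z) * s.indicator 1 z := fun s => by
    simp [ρ, Measure.finsetSum_apply, Measure.dirac_apply]
  have f1 : ρ.map Prod.fst = m.map (ind B N) := by
    refine Measure.ext_of_singleton fun i => ?_
    rw [Measure.map_apply measurable_fst (measurableSet_singleton i),
      Measure.map_apply (ind_meas N) (measurableSet_singleton i), hρ, Fintype.sum_prod_type]
    have : m (ind B N ⁻¹' {i}) = ENNReal.ofReal (avec N m i) := by
      rw [avec, ENNReal.ofReal_toReal (measure_ne_top _ _)]
    rw [this, ← e1, ENNReal.ofReal_sum_of_nonneg fun z _ => hq.1 _, Finset.sum_comm]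
    refine Finset.sum_congr rfl fun j _ => ?_
    rw [Finset.sum_eq_single i]
    · simp
    · intro k _ hk; simp [hk]
    · simp
  have f2 : ρ.map Prod.snd = n.map (ind B N) := by
    refine Measure.ext_of_singleton fun i => ?_
    rw [Measure.map_apply measurable_snd (measurableSet_singleton i),
      Measure.map_apply (ind_meas N) (measurableSet_singleton i), hρ, Fintype.sum_prod_type]
    have : n (ind B N ⁻¹' {i}) = ENNReal.ofReal (avec N n i) := by
      rw [avec, ENNReal.ofReal_toReal (measure_ne_top _ _)]
    rw [this, ← e2, ENNReal.ofReal_sum_of_nonneg fun z _ => hq.1 _]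
    refine Finset.sum_congr rfl fun j _ => ?_
    rw [Finset.sum_eq_single i]
    · simp
    · intro k _ hk; simp [hk]
    · simp
  have hpt : Measurable (pt B N) := measurable_of_finite _
  have hm : Measurable (fun z : Fin (N + 1) × Fin (N + 1) => (pt B N z.1, pt B N z.2)) :=
    measurable_of_finite _
  have hc : ρ.map (fun z => (pt B N z.1, pt B N z.2)) ∈
      Cpl (m.map (near B N)) (n.map (near B N)) := by
    constructor
    · rw [Measure.map_map measurable_fst hm]
      change _ = m.map (pt B N ∘ ind B N)
      rw [← Measure.map_map hpt (ind_meas N), ← f1, Measure.map_map hpt measurable_fst]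
      rfl
    · rw [Measure.map_map measurable_snd hm]
      change _ = n.map (pt B N ∘ ind B N)
      rw [← Measure.map_map hpt (ind_meas N), ← f2, Measure.map_map hpt measurable_snd]
      rfl
  refine (Wp_le hc).trans ?_
  rw [lintegral_map (by fun_prop) hm]
  refine ENNReal.rpow_le_rpow (le_of_eq ?_) (by positivity)
  rw [Vn, he, ← e3, ENNReal.ofReal_sum_of_nonneg fun z _ => mul_nonneg (cst_nonneg p N z) (hq.1 z)]
  rw [lintegral_finsetSum_measure]
  refine Finset.sum_congr rfl fun z _ => ?_
  rw [lintegral_smul_measure, lintegral_dirac, ENNReal.ofReal_mul (cst_nonneg p N z),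
    cst_ofReal hp, smul_eq_mul, mul_comm]

lemma Wp_le_Vn' {p : ℝ} (hp : 1 ≤ p) (N : ℕ) (m n : Measure B) [IsProbabilityMeasure m]
    [IsProbabilityMeasure n] :
    Wp p edist m n ≤ Dn p N m ^ (1 / p) + (Vn p N m n ^ (1 / p) + Dn p N n ^ (1 / p)) := by
  have : IsProbabilityMeasure (m.map (near B N)) :=
    Measure.isProbabilityMeasure_map (near_meas N).aemeasurable
  have : IsProbabilityMeasure (n.map (near B N)) :=
    Measure.isProbabilityMeasure_map (near_meas N).aemeasurable
  refine (Wp_triangle hp m (m.map (near B N)) n).trans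
    (add_le_add (Wp_near_le p N m) ((Wp_triangle hp _ (n.map (near B N)) n).trans
    (add_le_add (Wp_le_Vn hp N m n) ?_)))
  rw [Wp_symm edist_comm]
  exact Wp_near_le p N n

end Disc


section Jensen
variable {B : Type*} [MetricSpace B] [CompleteSpace B] [SecondCountableTopology B]
    [MeasurableSpace B] [BorelSpace B] [Nonempty B]

lemma Dn_tendsto' {p : ℝ} (hp : 1 ≤ p) {m : Measure B} (h : MemPp p edist m) :
    Tendsto (fun N => Dn p N m ^ (1 / p)) atTop (𝓝 0) := by
  have hp0 : 0 < 1 / p := by positivity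
  have := ((ENNReal.continuous_rpow_const (y := 1 / p)).tendsto 0).comp (Dn_tendsto hp h)
  rw [ENNReal.zero_rpow_of_pos hp0] at this
  exact this

lemma Vn_tendsto {p : ℝ} (hp : 1 ≤ p) {m n : Measure B} (hm : MemPp p edist m)
    (hn : MemPp p edist n) :
    Tendsto (fun N => Vn p N m n ^ (1 / p)) atTop (𝓝 (Wp p edist m n)) := by
  have := hm.1
  have := hn.1
  have h1 := Dn_tendsto' hp hm
  have h2 := Dn_tendsto' hp hn
  have hu : Tendsto (fun N => Dn p N m ^ (1 / p) + (Wp p edist m n + Dn p N n ^ (1 / p))) atTop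
      (𝓝 (Wp p edist m n)) := by
    have := h1.add ((tendsto_const_nhds (x := Wp p edist m n)).add h2)
    simpa using this
  have hl : Tendsto (fun N => Wp p edist m n - (Dn p N m ^ (1 / p) + Dn p N n ^ (1 / p))) atTop
      (𝓝 (Wp p edist m n)) := by
    have := ENNReal.Tendsto.sub (tendsto_const_nhds (x := Wp p edist m n) (f := atTop)) (h1.add h2)
      (Or.inr (by simp))
    simpa using this
  refine tendsto_of_tendsto_of_tendsto_of_le_of_le hl hu (fun N => ?_) (fun N => Vn_le hp N m n)
  refine tsub_le_iff_right.2 ((Wp_le_Vn' hp N m n).trans (le_of_eq ?_))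
  ac_rfl

variable {Ω : Type*} [MeasurableSpace Ω]

lemma Wp_aemeas {p : ℝ} (hp : 1 ≤ p) (ρ : Measure Ω) {k₁ k₂ : Ω → Measure B} (m₁ : Measurable k₁)
    (m₂ : Measurable k₂) (h₁ : ∀ᵐ ω ∂ρ, MemPp p edist (k₁ ω))
    (h₂ : ∀ᵐ ω ∂ρ, MemPp p edist (k₂ ω)) :
    AEMeasurable (fun ω => Wp p edist (k₁ ω) (k₂ ω)) ρ := by
  refine aemeasurable_of_tendsto_metrizable_ae atTop
    (f := fun N ω => Vn p N (k₁ ω) (k₂ ω) ^ (1 / p)) (fun N => ?_) ?_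
  · exact (((Vn_meas p N).comp (m₁.prodMk m₂)).pow_const _).aemeasurable
  · filter_upwards [h₁, h₂] with ω a b using Vn_tendsto hp a b

lemma ae_memPp_of_bind {p : ℝ} (hp : 1 ≤ p) (κ : Measure Ω) {k : Ω → Measure B}
    (mk : Measurable k) (hk : ∀ ω, IsProbabilityMeasure (k ω)) (h : MemPp p edist (κ.bind k)) :
    ∀ᵐ ω ∂κ, MemPp p edist (k ω) := by
  obtain ⟨x₀⟩ := ‹Nonempty B›
  have := h.mom hp x₀
  rw [Measure.lintegral_bind mk.aemeasurable (by fun_prop)] at this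
  have mm : Measurable fun ω => ∫⁻ x, edist x₀ x ^ p ∂(k ω) :=
    (Measure.measurable_lintegral (by fun_prop)).comp mk
  filter_upwards [ae_lt_top mm this] with ω hω
  exact ⟨hk ω, x₀, hω.ne⟩

lemma avec_bind (κ : Measure Ω) [IsProbabilityMeasure κ] {k : Ω → Measure B}
    (mk : Measurable k) (hk : ∀ ω, IsProbabilityMeasure (k ω)) (N : ℕ) :
    avec N (κ.bind k) = fun i => ∫ ω, avec N (k ω) i ∂κ := by
  funext i
  have hs := ind_meas (B := B) N (measurableSet_singleton i)
  change (κ.bind k _).toReal = ∫ ω, ((k ω) (ind B N ⁻¹' {i})).toReal ∂κ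
  rw [Measure.bind_apply hs mk.aemeasurable, integral_toReal]
  · exact ((Measure.measurable_coe hs).comp mk).aemeasurable
  · exact Eventually.of_forall fun ω => measure_lt_top _ _

lemma Dn_bind (p : ℝ) (κ : Measure Ω) {k : Ω → Measure B} (mk : Measurable k) (N : ℕ) :
    Dn p N (κ.bind k) = ∫⁻ ω, Dn p N (k ω) ∂κ := by
  rw [Dn, Measure.lintegral_bind mk.aemeasurable (Dn_meas_fun p N).aemeasurable]
  rfl

lemma Vn_bind {p : ℝ} (hp : 1 ≤ p) (κ : Measure Ω) [IsProbabilityMeasure κ]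
    {k₁ k₂ : Ω → Measure B} (m₁ : Measurable k₁)
    (m₂ : Measurable k₂) (h₁ : ∀ ω, IsProbabilityMeasure (k₁ ω))
    (h₂ : ∀ ω, IsProbabilityMeasure (k₂ ω)) (N : ℕ) :
    Vn p N (κ.bind k₁) (κ.bind k₂) ≤ ∫⁻ ω, Vn p N (k₁ ω) (k₂ ω) ∂κ := by
  rw [Vn, avec_bind κ m₁ h₁, avec_bind κ m₂ h₂]
  exact ot_jensen (cst_nonneg p N) κ (fun ω => avec N (k₁ ω)) (fun ω => avec N (k₂ ω))
    ((avec_meas N).comp m₁) ((avec_meas N).comp m₂) fun ω => plan_exists hp N _ _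

lemma prob_bind (κ : Measure Ω) [IsProbabilityMeasure κ] {k : Ω → Measure B}
    (mk : Measurable k) (hk : ∀ ω, IsProbabilityMeasure (k ω)) :
    IsProbabilityMeasure (κ.bind k) := by
  constructor
  rw [Measure.bind_apply MeasurableSet.univ mk.aemeasurable]
  simp

/-- Jensen's inequality for the Wasserstein distance -/
lemma Wp_jensen {p : ℝ} (hp : 1 ≤ p) (κ : Measure Ω) [IsProbabilityMeasure κ]
    {k₁ k₂ : Ω → Measure B} (m₁ : Measurable k₁)
    (m₂ : Measurable k₂) (h₁ : ∀ ω, IsProbabilityMeasure (k₁ ω))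
    (h₂ : ∀ ω, IsProbabilityMeasure (k₂ ω))
    (b₁ : MemPp p edist (κ.bind k₁)) (b₂ : MemPp p edist (κ.bind k₂)) :
    Wp p edist (κ.bind k₁) (κ.bind k₂) ^ p ≤ ∫⁻ ω, Wp p edist (k₁ ω) (k₂ ω) ^ p ∂κ := by
  have hp0 : 0 < p := by linarith
  have hip : 0 ≤ 1 / p := by positivity
  have := b₁.1
  have := b₂.1
  set J := (∫⁻ ω, Wp p edist (k₁ ω) (k₂ ω) ^ p ∂κ) ^ (1 / p) with hJ
  set M := κ.bind k₁
  set M' := κ.bind k₂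
  have hW := Wp_aemeas hp κ m₁ m₂ (ae_memPp_of_bind hp κ m₁ h₁ b₁) (ae_memPp_of_bind hp κ m₂ h₂ b₂)
  have d₁ : ∀ N, Measurable fun ω => Dn p N (k₁ ω) ^ (1 / p) := fun N =>
    ((Dn_meas p N).comp m₁).pow_const _
  have d₂ : ∀ N, Measurable fun ω => Dn p N (k₂ ω) ^ (1 / p) := fun N =>
    ((Dn_meas p N).comp m₂).pow_const _
  have hV : ∀ N, Vn p N M M' ^ (1 / p) ≤
      Dn p N M ^ (1 / p) + (J + Dn p N M' ^ (1 / p)) := fun N => by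
    have e1 : Dn p N M ^ (1 / p) = (∫⁻ ω, (Dn p N (k₁ ω) ^ (1 / p)) ^ p ∂κ) ^ (1 / p) := by
      simp_rw [rpow_inv_rpow_self hp]; rw [Dn_bind p κ m₁]
    have e2 : Dn p N M' ^ (1 / p) = (∫⁻ ω, (Dn p N (k₂ ω) ^ (1 / p)) ^ p ∂κ) ^ (1 / p) := by
      simp_rw [rpow_inv_rpow_self hp]; rw [Dn_bind p κ m₂]
    rw [e1, e2]
    refine (ENNReal.rpow_le_rpow (Vn_bind hp κ m₁ m₂ h₁ h₂ N) hip).trans ?_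
    refine le_trans ?_ ((ENNReal.lintegral_Lp_add_le (μ := κ) (p := p) (d₁ N).aemeasurable
      (hW.add (d₂ N).aemeasurable) hp).trans
      (add_le_add_right (ENNReal.lintegral_Lp_add_le hW (d₂ N).aemeasurable hp) _))
    refine ENNReal.rpow_le_rpow (lintegral_mono fun ω => ?_) hip
    have := h₁ ω
    have := ENNReal.rpow_le_rpow (Vn_le hp N (k₁ ω) (k₂ ω)) hp0.le
    rw [rpow_inv_rpow_self hp] at this
    exact this
  have t₁ := Dn_tendsto' hp b₁
  have t₂ := Dn_tendsto' hp b₂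
  have lim := t₁.add (t₁.add ((tendsto_const_nhds (x := J)).add (t₂.add t₂)))
  simp only [zero_add, add_zero] at lim
  have hle : Wp p edist M M' ≤ J := by
    refine ge_of_tendsto' (b := Wp p edist M M') (a := J) (x := atTop) lim fun N => ?_
    refine (Wp_le_Vn' hp N M M').trans ?_
    refine (add_le_add_right (add_le_add_left (hV N) _) _).trans (le_of_eq ?_)
    ac_rfl
  have := ENNReal.rpow_le_rpow hle hp0.le
  rwa [hJ, rpow_inv_rpow_self hp] at this

end Jensen


section Retract

lemma ratStieltjes_cdf (n : Measure ℝ) [IsProbabilityMeasure n] :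
    IsRatStieltjesPoint (fun f : ℚ → ℝ => f) (fun q : ℚ => cdf n q) where
  mono := fun a b h => monotone_cdf n (by exact_mod_cast h)
  tendsto_atTop_one := (tendsto_cdf_atTop n).comp (tendsto_ratCast_atTop_iff.2 tendsto_id)
  tendsto_atBot_zero := (tendsto_cdf_atBot n).comp (tendsto_ratCast_atBot_iff.2 tendsto_id)
  iInf_rat_gt_eq := fun t => by
    change ⨅ r : Set.Ioi t, cdf n ((r : ℚ) : ℝ) = cdf n (t : ℝ)
    rw [← StieltjesFunction.iInf_rat_gt_eq (cdf n) (t : ℝ)]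
    refine Equiv.iInf_congr (Equiv.subtypeEquivRight fun x => by simp) fun x => rfl

def retR (f : ℚ → ℝ) : Measure ℝ :=
  (stieltjesOfMeasurableRat (fun f : ℚ → ℝ => f) measurable_id f).measure

lemma retR_meas : Measurable retR := measurable_measure_stieltjesOfMeasurableRat measurable_id

lemma retR_cdf (n : Measure ℝ) [IsProbabilityMeasure n] : retR (fun q : ℚ => cdf n q) = n := by
  rw [retR]
  conv_rhs => rw [← measure_cdf n]
  congr 1
  ext x
  rw [← StieltjesFunction.iInf_rat_gt_eq, ← StieltjesFunction.iInf_rat_gt_eq (cdf n)]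
  refine iInf_congr fun r => ?_
  rw [stieltjesOfMeasurableRat_eq, toRatCDF_of_isRatStieltjesPoint (ratStieltjes_cdf n)]

variable (B : Type*) [MeasurableSpace B] [StandardBorelSpace B] [Nonempty B]

def retI (m : Measure B) : ℚ → ℝ := fun q => (m (embeddingReal B ⁻¹' Set.Iic (q : ℝ))).toReal

lemma retI_meas : Measurable (retI B) :=
  measurable_pi_lambda _ fun _ =>
    (Measure.measurable_coe ((measurableEmbedding_embeddingReal B).measurable
      measurableSet_Iic)).ennreal_toReal

lemma exists_ret : ∃ r : (ℚ → ℝ) → Measure B, Measurable r ∧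
    ∀ m : Measure B, IsProbabilityMeasure m → r (retI B m) = m := by
  have he := measurableEmbedding_embeddingReal B
  have hi : Measurable (he.invFun) := he.measurable_invFun
  refine ⟨fun f => (retR f).map he.invFun, (Measure.measurable_map _ hi).comp retR_meas,
    fun m hm => ?_⟩
  have : IsProbabilityMeasure (m.map (embeddingReal B)) :=
    Measure.isProbabilityMeasure_map he.measurable.aemeasurable
  have e : retI B m = fun q : ℚ => cdf (m.map (embeddingReal B)) q := by
    funext q
    rw [cdf_eq_real, measureReal_def, Measure.map_apply he.measurable measurableSet_Iic]
    rfl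
  simp only
  rw [e, retR_cdf, Measure.map_map hi he.measurable]
  have : he.invFun ∘ embeddingReal B = id := funext fun x => he.leftInverse_invFun x
  rw [this, Measure.map_id]

end Retract

lemma disint_retract {A E S : Type*} [MeasurableSpace A] [MeasurableSpace E] [MeasurableSpace S]
    [StandardBorelSpace S] [Nonempty S] (γ : Measure (A × E)) [IsProbabilityMeasure γ]
    {i : E → S} (hi : Measurable i) {r : S → E} (hr : Measurable r)
    (h : ∀ᵐ z ∂γ, r (i z.2) = z.2) :
    ∃ K : Kernel A E, IsMarkovKernel K ∧ γ = γ.map Prod.fst ⊗ₘ K := by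
  have hm : Measurable (Prod.map (id : A → A) i) := measurable_id.prodMap hi
  have hm' : Measurable (Prod.map (id : A → A) r) := measurable_id.prodMap hr
  set γ' := γ.map (Prod.map id i) with hγ'
  have : IsProbabilityMeasure γ' := Measure.isProbabilityMeasure_map hm.aemeasurable
  refine ⟨γ'.condKernel.map r, Kernel.IsMarkovKernel.map _ hr, ?_⟩
  have e1 : γ'.fst = γ.map Prod.fst := by
    rw [Measure.fst, hγ', Measure.map_map measurable_fst hm]; rfl
  rw [Measure.compProd_map hr, ← e1, γ'.disintegrate γ'.condKernel, hγ',
    Measure.map_map hm' hm]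
  conv_lhs => rw [← Measure.map_id (μ := γ)]
  refine Measure.map_congr ?_
  filter_upwards [h] with z hz
  simp [Prod.map, hz]

/-- disintegration on the lifted space -/
lemma disint_lift {A X B : Type*} [MeasurableSpace A] [MeasurableSpace X] [StandardBorelSpace X]
    [Nonempty X] [MeasurableSpace B] [StandardBorelSpace B] [Nonempty B]
    (γ : Measure (A × (X × Measure B))) [IsProbabilityMeasure γ]
    (h : ∀ᵐ z ∂γ, IsProbabilityMeasure z.2.2) :
    ∃ K : Kernel A (X × Measure B), IsMarkovKernel K ∧ γ = γ.map Prod.fst ⊗ₘ K := by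
  obtain ⟨r, hr, hrm⟩ := exists_ret B
  refine disint_retract γ (S := X × (ℚ → ℝ)) (i := Prod.map id (retI B)) (r := Prod.map id r)
    (measurable_id.prodMap (retI_meas B)) (measurable_id.prodMap hr) ?_
  filter_upwards [h] with z hz
  simp [Prod.map, hrm _ hz]


section Nk
variable {X B : Type*} [MeasurableSpace X] [MeasurableSpace B] [Nonempty B]

open Classical in
/-- normalised evaluation kernel -/
def nmk (X B : Type*) [MeasurableSpace X] [MeasurableSpace B] [Nonempty B] :
    Kernel (X × Measure B) B where
  toFun z := if z.2 Set.univ = 1 then z.2 else Measure.dirac (Classical.arbitrary B)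
  measurable' := Measurable.ite
    ((Measure.measurable_coe MeasurableSet.univ).comp measurable_snd (measurableSet_singleton 1))
    measurable_snd measurable_const

instance : IsMarkovKernel (nmk X B) := ⟨fun z => by
  change IsProbabilityMeasure (ite _ _ _)
  split_ifs with h
  · exact ⟨h⟩
  · infer_instance⟩

lemma nmk_eq {z : X × Measure B} (h : IsProbabilityMeasure z.2) : nmk X B z = z.2 :=
  if_pos h.measure_univ

lemma lintegral_swap_disint {E F : Type*} [MeasurableSpace E] [MeasurableSpace F]
    {γ : Measure (E × F)} {ν : Measure F} [SFinite ν] {K : Kernel F E} [IsMarkovKernel K]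
    (hK : γ.map Prod.swap = ν ⊗ₘ K) {f : E × F → ℝ≥0∞} (hf : Measurable f) :
    ∫⁻ z, f z ∂γ = ∫⁻ y, ∫⁻ x, f (x, y) ∂(K y) ∂ν := by
  have e : γ = (ν ⊗ₘ K).map Prod.swap := by
    rw [← hK, Measure.map_map measurable_swap measurable_swap]; simp
  rw [e, lintegral_map hf measurable_swap,
    Measure.lintegral_compProd (f := fun w : F × E => f w.swap) (hf.comp measurable_swap)]
  rfl

lemma condBar_canon {γ : Measure ((X × Measure B) × (X × Measure B))}
    {ν : Measure (X × Measure B)} [SFinite ν] {K : Kernel (X × Measure B) (X × Measure B)}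
    [IsMarkovKernel K] (hK : γ.map Prod.swap = ν ⊗ₘ K)
    (h : ∀ᵐ z ∂γ, IsProbabilityMeasure z.1.2) :
    IsCondBar γ (fun z => (nmk X B ∘ₖ K) z.2) := by
  refine ⟨⟨_, (nmk X B ∘ₖ K).measurable, fun z => rfl⟩, fun z => inferInstance,
    fun S hS E hE => ?_⟩
  have hS' : MeasurableSet {z : (X × Measure B) × (X × Measure B) | z.2 ∈ S} := measurable_snd hS
  have e1 : ∫⁻ z in {z | z.2 ∈ S}, z.1.2 E ∂γ = ∫⁻ z in {z | z.2 ∈ S}, nmk X B z.1 E ∂γ := by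
    refine lintegral_congr_ae (ae_restrict_of_ae ?_)
    filter_upwards [h] with z hz
    rw [nmk_eq hz]
  rw [e1, ← lintegral_indicator hS', ← lintegral_indicator hS',
    lintegral_swap_disint hK, lintegral_swap_disint hK]
  · refine lintegral_congr fun y => ?_
    by_cases hy : y ∈ S
    · simp only [Set.indicator, Set.mem_ofPred_eq, hy, if_true]
      rw [Kernel.comp_apply' _ _ _ hE]
      simp
    · simp [Set.indicator, hy]
  · exact (((Kernel.measurable_coe _ hE)).comp measurable_fst).indicator hS'
  · exact (((Kernel.measurable_coe _ hE)).comp measurable_snd).indicator hS'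

lemma condBar_unique [StandardBorelSpace B] {γ : Measure ((X × Measure B) × (X × Measure B))}
    [IsFiniteMeasure γ]
    {η η' : (X × Measure B) × (X × Measure B) → Measure B} (h : IsCondBar γ η)
    (h' : IsCondBar γ η') : η =ᵐ[γ] η' := by
  obtain ⟨⟨g, hg, hgη⟩, hp, hi⟩ := h
  obtain ⟨⟨g', hg', hgη'⟩, hp', hi'⟩ := h'
  obtain ⟨b⟩ := ‹Nonempty B›
  -- turn into Markov kernels on the second coordinate
  by_cases hne : Nonempty X
  swap
  · exact Eventually.of_forall fun z => (hne ⟨z.1.1⟩).elim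
  obtain ⟨x⟩ := hne
  have pg : ∀ y, IsProbabilityMeasure (g y) := fun y => by
    have := hp (y, y); rwa [hgη] at this
  have pg' : ∀ y, IsProbabilityMeasure (g' y) := fun y => by
    have := hp' (y, y); rwa [hgη'] at this
  let k : Kernel (X × Measure B) B := ⟨g, hg⟩
  let k' : Kernel (X × Measure B) B := ⟨g', hg'⟩
  have : IsMarkovKernel k := ⟨pg⟩
  have : IsMarkovKernel k' := ⟨pg'⟩
  have e : (γ.map Prod.snd) ⊗ₘ k = (γ.map Prod.snd) ⊗ₘ k' := by
    refine Measure.ext_prod fun {S E} hS hE => ?_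
    rw [Measure.compProd_apply_prod hS hE, Measure.compProd_apply_prod hS hE,
      setLIntegral_map hS (Kernel.measurable_coe _ hE) measurable_snd,
      setLIntegral_map hS (Kernel.measurable_coe _ hE) measurable_snd]
    have h1 := (hi S hS E hE).trans (hi' S hS E hE).symm
    simp only [hgη, hgη'] at h1
    exact h1
  have h2 : k =ᵐ[γ.map Prod.snd] k' := Kernel.ae_eq_of_compProd_eq e
  filter_upwards [ae_of_ae_map measurable_snd.aemeasurable h2] with z hz
  rw [hgη, hgη']
  exact hz

end Nk


lemma lintegral_compProd_ae {E F : Type*} [MeasurableSpace E] [MeasurableSpace F]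
    {ν : Measure E} [SFinite ν] {K : Kernel E F} [IsMarkovKernel K] {f : E × F → ℝ≥0∞}
    (hf : AEMeasurable f (ν ⊗ₘ K)) :
    ∫⁻ z, f z ∂(ν ⊗ₘ K) = ∫⁻ y, ∫⁻ x, f (y, x) ∂(K y) ∂ν := by
  rw [lintegral_congr_ae hf.ae_eq_mk, Measure.lintegral_compProd hf.measurable_mk]
  refine lintegral_congr_ae ?_
  filter_upwards [Measure.ae_ae_of_ae_compProd hf.ae_eq_mk] with y hy
  exact lintegral_congr_ae (hy.mono fun x hx => hx.symm)

section Lift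
variable {X B : Type*} [MetricSpace X] [CompleteSpace X] [SecondCountableTopology X]
    [MeasurableSpace X] [BorelSpace X] [Nonempty X]
    [MetricSpace B] [CompleteSpace B] [SecondCountableTopology B]
    [MeasurableSpace B] [BorelSpace B] [Nonempty B]

lemma lift_ae {p : ℝ} {μ : Measure (X × Measure B)} (h : MemPpLift p edist edist μ) :
    ∀ᵐ z ∂μ, MemPp p edist (nmk X B z) := by
  filter_upwards [h.2.1] with z hz
  rwa [nmk_eq hz.1]

lemma lift_ae_prob {p : ℝ} {μ : Measure (X × Measure B)} (h : MemPpLift p edist edist μ) :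
    ∀ᵐ z ∂μ, IsProbabilityMeasure z.2 := h.2.1.mono fun _ h => h.1

lemma mom_meas (p : ℝ) (x₀ : B) : Measurable fun m : Measure B => ∫⁻ x, edist x₀ x ^ p ∂m :=
  Measure.measurable_lintegral (by fun_prop)

lemma lift_mom {p : ℝ} (hp : 1 ≤ p) {μ : Measure (X × Measure B)}
    (h : MemPpLift p edist edist μ) (x₀ : B) :
    ∫⁻ z, ∫⁻ x, edist x₀ x ^ p ∂(nmk X B z) ∂μ ≠ ∞ := by
  obtain ⟨h1, h2, z₀, h3, h4⟩ := h
  have hp0 : 0 ≤ p := by linarith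
  have := h3.1
  have hb : ∀ᵐ z ∂μ, ∫⁻ x, edist x₀ x ^ p ∂(nmk X B z) ≤
      2 ^ (p - 1) * (∫⁻ x, edist x₀ x ^ p ∂z₀.2 + liftDist p edist edist z₀ z ^ p) := by
    filter_upwards [h2] with z hz
    rw [nmk_eq hz.1]
    have a := ENNReal.rpow_le_rpow (mom_le hp x₀ z₀.2 z.2) hp0
    rw [rpow_inv_rpow_self hp] at a
    refine a.trans ((ENNReal.rpow_add_le_mul_rpow_add_rpow _ _ hp).trans ?_)
    rw [rpow_inv_rpow_self hp, liftDist, rpow_inv_rpow_self hp]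
    gcongr
    exact le_add_self
  refine ne_top_of_le_ne_top ?_ (lintegral_mono_ae hb)
  have h2p : (2 : ℝ≥0∞) ^ (p - 1) ≠ ∞ := ENNReal.rpow_ne_top_of_nonneg (by linarith) (by simp)
  rw [lintegral_const_mul' _ _ h2p, lintegral_add_left measurable_const, lintegral_const]
  refine ENNReal.mul_ne_top h2p (ENNReal.add_ne_top.2 ⟨?_, h4⟩)
  simpa using h3.mom hp x₀

lemma memPp_comp {p : ℝ} (hp : 1 ≤ p) {μ ν : Measure (X × Measure B)}
    (hμ : MemPpLift p edist edist μ)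
    {K : Kernel (X × Measure B) (X × Measure B)} [IsMarkovKernel K] (hK : ν.bind K = μ) :
    ∀ᵐ y ∂ν, MemPp p edist ((nmk X B ∘ₖ K) y) := by
  obtain ⟨x₀⟩ := ‹Nonempty B›
  have h := lift_mom hp hμ x₀
  have mm : Measurable fun z : X × Measure B => ∫⁻ x, edist x₀ x ^ p ∂(nmk X B z) :=
    (mom_meas p x₀).comp (nmk X B).measurable
  rw [← hK, Measure.lintegral_bind K.aemeasurable mm.aemeasurable] at h
  have e : ∀ y, ∫⁻ z, ∫⁻ x, edist x₀ x ^ p ∂(nmk X B z) ∂(K y) =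
      ∫⁻ x, edist x₀ x ^ p ∂((nmk X B ∘ₖ K) y) := fun y => by
    rw [Kernel.lintegral_comp _ _ _ (by fun_prop)]
  simp_rw [e] at h
  filter_upwards [ae_lt_top ((mom_meas p x₀).comp (nmk X B ∘ₖ K).measurable) h] with y hy
  exact ⟨inferInstance, x₀, hy.ne⟩

/-- the two parts of the cost -/
def costA (p : ℝ) (ν : Measure (X × Measure B)) (K : Kernel (X × Measure B) (X × Measure B)) :
    ℝ≥0∞ := ∫⁻ w, edist w.2.1 w.1.1 ^ p ∂(ν ⊗ₘ K)

def costB (p : ℝ) (ν : Measure (X × Measure B)) (K : Kernel (X × Measure B) (X × Measure B)) :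
    ℝ≥0∞ := ∫⁻ y, Wp p edist ((nmk X B ∘ₖ K) y) (nmk X B y) ^ p ∂ν

lemma bar_aemeas {p : ℝ} (hp : 1 ≤ p) {μ ν : Measure (X × Measure B)}
    (hμ : MemPpLift p edist edist μ) (hν : MemPpLift p edist edist ν)
    {K : Kernel (X × Measure B) (X × Measure B)} [IsMarkovKernel K] (hK : ν.bind K = μ) :
    AEMeasurable (fun y => Wp p edist ((nmk X B ∘ₖ K) y) (nmk X B y)) ν :=
  Wp_aemeas hp ν (nmk X B ∘ₖ K).measurable (nmk X B).measurable (memPp_comp hp hμ hK) (lift_ae hν)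

lemma cost_eq {p : ℝ} (hp : 1 ≤ p) {μ ν : Measure (X × Measure B)}
    (hμ : MemPpLift p edist edist μ) (hν : MemPpLift p edist edist ν)
    {γ : Measure ((X × Measure B) × (X × Measure B))}
    {K : Kernel (X × Measure B) (X × Measure B)} [IsMarkovKernel K]
    (hK : ν.bind K = μ) (hγ : γ.map Prod.swap = ν ⊗ₘ K)
    {η : (X × Measure B) × (X × Measure B) → Measure B} (hη : IsCondBar γ η) :
    ∫⁻ z, (edist z.1.1 z.2.1 ^ p + Wp p edist (η z) z.2.2 ^ p) ∂γ = costA p ν K + costB p ν K := by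
  have := hν.1
  have e : γ = (ν ⊗ₘ K).map Prod.swap := by
    rw [← hγ, Measure.map_map measurable_swap measurable_swap]; simp
  have hpr : IsProbabilityMeasure γ := by
    rw [e]; exact Measure.isProbabilityMeasure_map measurable_swap.aemeasurable
  have hfst : γ.map Prod.fst = μ := by
    rw [e, Measure.map_map measurable_fst measurable_swap, ← hK, ← Measure.snd_compProd]; rfl
  have hsnd : γ.map Prod.snd = ν := by
    rw [e, Measure.map_map measurable_snd measurable_swap]
    exact Measure.fst_compProd ν K
  have a1 : ∀ᵐ z ∂γ, IsProbabilityMeasure z.1.2 :=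
    ae_of_ae_map measurable_fst.aemeasurable (hfst.symm ▸ lift_ae_prob hμ)
  have a2 : ∀ᵐ z ∂γ, IsProbabilityMeasure z.2.2 :=
    ae_of_ae_map measurable_snd.aemeasurable (hsnd.symm ▸ lift_ae_prob hν)
  have a3 := condBar_unique hη (condBar_canon hγ a1)
  have e1 : ∫⁻ z, (edist z.1.1 z.2.1 ^ p + Wp p edist (η z) z.2.2 ^ p) ∂γ =
      ∫⁻ z, (edist z.1.1 z.2.1 ^ p +
        Wp p edist ((nmk X B ∘ₖ K) z.2) (nmk X B z.2) ^ p) ∂γ := by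
    refine lintegral_congr_ae ?_
    filter_upwards [a2, a3] with z h2 h3
    rw [nmk_eq h2, h3]
  rw [e1, lintegral_add_left (by fun_prop)]
  congr 1
  · rw [e, lintegral_map (by fun_prop) measurable_swap]; rfl
  · have := bar_aemeas hp hμ hν hK
    rw [costB]
    conv_rhs => rw [← hsnd]
    rw [lintegral_map' ((by rw [hsnd]; exact this.pow_const p)) measurable_snd.aemeasurable]

lemma CW_le {p : ℝ} (hp : 1 ≤ p) {μ ν : Measure (X × Measure B)}
    (hμ : MemPpLift p edist edist μ) (hν : MemPpLift p edist edist ν)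
    {K : Kernel (X × Measure B) (X × Measure B)} [IsMarkovKernel K]
    (hK : ν.bind K = μ) : CWbar p edist edist μ ν ≤ (costA p ν K + costB p ν K) ^ (1 / p) := by
  have := hν.1
  set γ := (ν ⊗ₘ K).map Prod.swap with e
  have hγ : γ.map Prod.swap = ν ⊗ₘ K := by
    rw [e, Measure.map_map measurable_swap measurable_swap]; simp
  have hfst : γ.map Prod.fst = μ := by
    rw [e, Measure.map_map measurable_fst measurable_swap, ← hK, ← Measure.snd_compProd]; rfl
  have hsnd : γ.map Prod.snd = ν := by
    rw [e, Measure.map_map measurable_snd measurable_swap]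
    exact Measure.fst_compProd ν K
  have a1 : ∀ᵐ z ∂γ, IsProbabilityMeasure z.1.2 :=
    ae_of_ae_map measurable_fst.aemeasurable (hfst.symm ▸ lift_ae_prob hμ)
  have hη := condBar_canon hγ a1
  rw [← cost_eq hp hμ hν hK hγ hη]
  exact (iInf₂_le γ ⟨hfst, hsnd⟩).trans (iInf₂_le _ hη)

lemma cpl_kernel {p : ℝ} {μ ν : Measure (X × Measure B)}
    (hμ : MemPpLift p edist edist μ) (hν : MemPpLift p edist edist ν)
    {γ : Measure ((X × Measure B) × (X × Measure B))} (h : γ ∈ Cpl μ ν) :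
    ∃ K : Kernel (X × Measure B) (X × Measure B), IsMarkovKernel K ∧ ν.bind K = μ ∧
      γ.map Prod.swap = ν ⊗ₘ K := by
  have := hμ.1
  have := hν.1
  have h' := cpl_swap h
  have := cpl_prob h'
  have a1 : ∀ᵐ z ∂(γ.map Prod.swap), IsProbabilityMeasure z.2.2 :=
    ae_of_ae_map measurable_snd.aemeasurable (h'.2.symm ▸ lift_ae_prob hμ)
  obtain ⟨K, hK, e⟩ := disint_lift (γ.map Prod.swap) a1
  rw [h'.1] at e
  refine ⟨K, hK, ?_, e⟩
  rw [← Measure.snd_compProd, ← e]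
  exact h'.2

lemma CW_eq {p : ℝ} (hp : 1 ≤ p) {μ ν : Measure (X × Measure B)}
    (hμ : MemPpLift p edist edist μ) (hν : MemPpLift p edist edist ν) :
    CWbar p edist edist μ ν = ⨅ K ∈ {K : Kernel (X × Measure B) (X × Measure B) |
      IsMarkovKernel K ∧ ν.bind K = μ}, (costA p ν K + costB p ν K) ^ (1 / p) := by
  refine le_antisymm (le_iInf₂ fun K hK => ?_) ?_
  · have := hK.1
    exact CW_le hp hμ hν hK.2
  · refine le_iInf₂ fun γ hγ => le_iInf₂ fun η hη => ?_
    obtain ⟨K, hK, hb, e⟩ := cpl_kernel hμ hν hγ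
    rw [cost_eq hp hμ hν hb e hη]
    exact iInf₂_le K ⟨hK, hb⟩

lemma two_Lp {p : ℝ} (hp : 1 ≤ p) (a b c d : ℝ≥0∞) :
    ((a + b) ^ p + (c + d) ^ p) ^ (1 / p) ≤ (a ^ p + c ^ p) ^ (1 / p) + (b ^ p + d ^ p) ^ (1 / p) := by
  have := ENNReal.Lp_add_le Finset.univ ![a, c] ![b, d] hp
  simpa [Fin.sum_univ_two] using this

lemma costA_triangle {p : ℝ} (hp : 1 ≤ p) {ν lam : Measure (X × Measure B)}
    [IsProbabilityMeasure lam]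
    {K₁ K₂ : Kernel (X × Measure B) (X × Measure B)} [IsMarkovKernel K₁] [IsMarkovKernel K₂]
    (h2 : lam.bind K₂ = ν) :
    costA p lam (K₁ ∘ₖ K₂) ^ (1 / p) ≤ costA p ν K₁ ^ (1 / p) + costA p lam K₂ ^ (1 / p) := by
  have hip : 0 ≤ 1 / p := by positivity
  set θ := (lam ⊗ₘ K₂) ⊗ₘ (K₁.comap Prod.snd measurable_snd) with hθ
  have e3 : costA p lam (K₁ ∘ₖ K₂) = ∫⁻ w, edist w.2.1 w.1.1.1 ^ p ∂θ := by
    rw [costA, Measure.lintegral_compProd (by fun_prop), hθ,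
      Measure.lintegral_compProd (by fun_prop), Measure.lintegral_compProd]
    · refine lintegral_congr fun z => ?_
      rw [Kernel.lintegral_comp _ _ _ (by fun_prop)]
      rfl
    · exact Measurable.lintegral_kernel_prod_right'
        (f := fun w : ((X × Measure B) × (X × Measure B)) × (X × Measure B) =>
          edist w.2.1 w.1.1.1 ^ p) (by fun_prop)
  have e2 : costA p lam K₂ = ∫⁻ w, edist w.1.2.1 w.1.1.1 ^ p ∂θ := by
    have : θ.map Prod.fst = lam ⊗ₘ K₂ := Measure.fst_compProd _ _
    rw [costA, ← this, lintegral_map (by fun_prop) measurable_fst]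
  have e1 : costA p ν K₁ = ∫⁻ w, edist w.2.1 w.1.2.1 ^ p ∂θ := by
    have h : (lam ⊗ₘ K₂).map Prod.snd = ν := by rw [← h2, ← Measure.snd_compProd]; rfl
    have := map_compProd_comap (lam ⊗ₘ K₂) K₁ Prod.snd measurable_snd
    rw [h] at this
    rw [costA, ← this, lintegral_map (by fun_prop) (by fun_prop)]
  rw [e1, e2, e3]
  refine le_trans ?_ (ENNReal.lintegral_Lp_add_le (by fun_prop) (by fun_prop) hp)
  refine ENNReal.rpow_le_rpow (lintegral_mono fun w => ?_) hip
  exact ENNReal.rpow_le_rpow (edist_triangle _ _ _) (by linarith)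

lemma costB_triangle {p : ℝ} (hp : 1 ≤ p) {μ ν lam : Measure (X × Measure B)}
    (hμ : MemPpLift p edist edist μ) (hν : MemPpLift p edist edist ν)
    (hl : MemPpLift p edist edist lam)
    {K₁ K₂ : Kernel (X × Measure B) (X × Measure B)} [IsMarkovKernel K₁] [IsMarkovKernel K₂]
    (h1 : ν.bind K₁ = μ) (h2 : lam.bind K₂ = ν) :
    costB p lam (K₁ ∘ₖ K₂) ^ (1 / p) ≤ costB p ν K₁ ^ (1 / p) + costB p lam K₂ ^ (1 / p) := by
  have hip : 0 ≤ 1 / p := by positivity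
  have h3 : lam.bind (K₁ ∘ₖ K₂) = μ := by rw [← Measure.comp_assoc, h2, h1]
  have a3 := memPp_comp hp hμ h3
  have a2 := memPp_comp hp hν h2
  have m1 := bar_aemeas hp hμ hν h1
  have m2 := bar_aemeas hp hν hl h2
  have m3 := Wp_aemeas hp lam (nmk X B ∘ₖ (K₁ ∘ₖ K₂)).measurable (nmk X B ∘ₖ K₂).measurable a3 a2
  have key : ∫⁻ z, Wp p edist ((nmk X B ∘ₖ (K₁ ∘ₖ K₂)) z) ((nmk X B ∘ₖ K₂) z) ^ p ∂lam ≤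
      costB p ν K₁ := by
    rw [costB]
    conv_rhs => rw [← h2]
    rw [Measure.lintegral_bind K₂.aemeasurable (by rw [h2]; exact m1.pow_const p)]
    refine lintegral_mono_ae ?_
    filter_upwards [a3, a2] with z b3 b2
    rw [← Kernel.comp_assoc, Kernel.comp_apply] at b3 ⊢
    rw [Kernel.comp_apply] at b2 ⊢
    exact Wp_jensen hp (K₂ z) (nmk X B ∘ₖ K₁).measurable (nmk X B).measurable
      (fun _ => inferInstance) (fun _ => inferInstance) b3 b2
  refine le_trans ?_ (add_le_add_left (ENNReal.rpow_le_rpow key hip) _)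
  refine le_trans ?_ (ENNReal.lintegral_Lp_add_le m3 m2 hp)
  refine ENNReal.rpow_le_rpow (lintegral_mono fun w => ?_) hip
  exact ENNReal.rpow_le_rpow (Wp_triangle hp _ _ _) (by linarith)

lemma CW_triangle {p : ℝ} (hp : 1 ≤ p) {μ ν lam : Measure (X × Measure B)}
    (hμ : MemPpLift p edist edist μ) (hν : MemPpLift p edist edist ν)
    (hl : MemPpLift p edist edist lam) :
    CWbar p edist edist μ lam ≤ CWbar p edist edist μ ν + CWbar p edist edist ν lam := by
  have hip : 0 ≤ 1 / p := by positivity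
  have := hl.1
  rw [CW_eq hp hμ hν, CW_eq hp hν hl]
  simp_rw [ENNReal.iInf_add, ENNReal.add_iInf]
  refine le_iInf₂ fun K₁ h1 => le_iInf₂ fun K₂ h2 => ?_
  obtain ⟨k1, h1⟩ := h1
  obtain ⟨k2, h2⟩ := h2
  have h3 : lam.bind (K₁ ∘ₖ K₂) = μ := by rw [← Measure.comp_assoc, h2, h1]
  refine (CW_le hp hμ hl h3).trans ?_
  have tA := costA_triangle hp (K₁ := K₁) h2
  have tB := costB_triangle hp hμ hν hl h1 h2
  have := two_Lp hp (costA p ν K₁ ^ (1 / p)) (costA p lam K₂ ^ (1 / p)) (costB p ν K₁ ^ (1 / p))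
    (costB p lam K₂ ^ (1 / p))
  simp only [rpow_inv_rpow_self hp] at this
  refine le_trans (ENNReal.rpow_le_rpow (add_le_add ?_ ?_) hip) this
  · have := ENNReal.rpow_le_rpow tA (show 0 ≤ p by linarith)
    rwa [rpow_inv_rpow_self hp] at this
  · have := ENNReal.rpow_le_rpow tB (show 0 ≤ p by linarith)
    rwa [rpow_inv_rpow_self hp] at this

lemma CW_le_AW {p : ℝ} (hp : 1 ≤ p) {μ ν : Measure (X × Measure B)}
    (hμ : MemPpLift p edist edist μ) (hν : MemPpLift p edist edist ν) :
    CWbar p edist edist μ ν ≤ AWbar p edist edist μ ν := by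
  have hip : 0 ≤ 1 / p := by positivity
  have := hν.1
  refine le_iInf₂ fun γ hγ => ?_
  obtain ⟨K, hK, hb, e⟩ := cpl_kernel hμ hν hγ
  refine (CW_le hp hμ hν hb).trans (ENNReal.rpow_le_rpow ?_ hip)
  simp only [liftDist, rpow_inv_rpow_self hp]
  rw [lintegral_add_left (by fun_prop)]
  have e' : γ = (ν ⊗ₘ K).map Prod.swap := by
    rw [← e, Measure.map_map measurable_swap measurable_swap]; simp
  refine add_le_add (le_of_eq ?_) ?_
  · rw [e', lintegral_map (by fun_prop) measurable_swap]; rfl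
  · have a1 : ∀ᵐ z ∂(ν ⊗ₘ K), MemPp p edist z.2.2 := by
      refine ae_of_ae_map (μ := ν ⊗ₘ K) measurable_snd.aemeasurable
        (p := fun z : X × Measure B => MemPp p edist z.2) ?_
      have : (ν ⊗ₘ K).map Prod.snd = μ := by rw [← hb, ← Measure.snd_compProd]; rfl
      rw [this]; exact hμ.2.1
    have a2 : ∀ᵐ z ∂(ν ⊗ₘ K), MemPp p edist z.1.2 := by
      refine ae_of_ae_map (μ := ν ⊗ₘ K) measurable_fst.aemeasurable
        (p := fun z : X × Measure B => MemPp p edist z.2) ?_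
      have : (ν ⊗ₘ K).map Prod.fst = ν := Measure.fst_compProd _ _
      rw [this]; exact hν.2.1
    have a3 : ∫⁻ z, Wp p edist z.1.2 z.2.2 ^ p ∂γ =
        ∫⁻ w, Wp p edist w.2.2 w.1.2 ^ p ∂(ν ⊗ₘ K) := by
      have : γ = (ν ⊗ₘ K).map (MeasurableEquiv.prodComm :
        (X × Measure B) × (X × Measure B) ≃ᵐ _) := e'
      rw [this, lintegral_map_equiv]; rfl
    have a4 : ∫⁻ w, Wp p edist w.2.2 w.1.2 ^ p ∂(ν ⊗ₘ K) =
        ∫⁻ w, Wp p edist (nmk X B w.2) (nmk X B w.1) ^ p ∂(ν ⊗ₘ K) := by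
      refine lintegral_congr_ae ?_
      filter_upwards [a1, a2] with w h1 h2
      rw [nmk_eq h1.1, nmk_eq h2.1]
    rw [a3, a4, lintegral_compProd_ae]
    · refine lintegral_mono_ae ?_
      filter_upwards [memPp_comp hp hμ hb, lift_ae hν] with y b1 b2
      have ec : (K y).bind (fun _ => nmk X B y) = nmk X B y := by
        rw [Measure.bind_const]; simp
      have := Wp_jensen hp (K y) (k₁ := nmk X B) (k₂ := fun _ => nmk X B y) (nmk X B).measurable
        measurable_const (fun _ => inferInstance) (fun _ => inferInstance)
        (by rw [Kernel.comp_apply] at b1; exact b1) (by rw [ec]; exact b2)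
      rw [ec] at this
      rw [Kernel.comp_apply]
      exact this
    · refine (Wp_aemeas hp _ ((nmk X B).measurable.comp measurable_snd)
        ((nmk X B).measurable.comp measurable_fst) ?_ ?_).pow_const p
      · filter_upwards [a1] with w h1
        simpa only [Function.comp, nmk_eq h1.1] using h1
      · filter_upwards [a2] with w h1
        simpa only [Function.comp, nmk_eq h1.1] using h1

lemma AW_symm (p : ℝ) (μ ν : Measure (X × Measure B)) :
    AWbar p edist edist μ ν = AWbar p edist edist ν μ := by
  refine Wp_symm (fun x y => ?_) _ _
  simp only [liftDist]
  rw [edist_comm, Wp_symm edist_comm]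

lemma CW_self {p : ℝ} (hp : 1 ≤ p) {μ : Measure (X × Measure B)}
    (hμ : MemPpLift p edist edist μ) : CWbar p edist edist μ μ = 0 := by
  have := hμ.1
  have hp0 : 0 < p := by linarith
  have hK : μ.bind (Kernel.id : Kernel (X × Measure B) (X × Measure B)) = μ := Measure.id_comp
  refine le_antisymm ((CW_le hp hμ hμ hK).trans (le_of_eq ?_)) bot_le
  have e1 : costA p μ Kernel.id = 0 := by
    rw [costA, Measure.lintegral_compProd (by fun_prop)]
    have h0 : ∀ a : X × Measure B, ∫⁻ b : X × Measure B, edist b.1 a.1 ^ p ∂(Kernel.id a) = 0 :=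
      fun a => by
        rw [Kernel.id_apply, lintegral_dirac' _ (by fun_prop)]
        simp [hp0]
    simp only [h0]
    simp
  have e2 : costB p μ Kernel.id = 0 := by
    rw [costB]
    simp only [Kernel.comp_id, Wp_self hp (edist_self) (measurable_edist) , ENNReal.zero_rpow_of_pos hp0]
    simp
  rw [e1, e2]
  simp [hp0]

end Lift


lemma lintegral_le_Lp {E : Type*} [MeasurableSpace E] {p : ℝ} (hp : 1 ≤ p) (ρ : Measure E)
    [IsProbabilityMeasure ρ] {f : E → ℝ≥0∞} (hf : AEMeasurable f ρ) :
    ∫⁻ x, f x ∂ρ ≤ (∫⁻ x, f x ^ p ∂ρ) ^ (1 / p) := by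
  have := eLpNorm'_le_eLpNorm'_of_exponent_le (f := f) one_pos hp ρ hf.aestronglyMeasurable
  simpa [eLpNorm'] using this

lemma bdd_integrable {E : Type*} [MeasurableSpace E] (ρ : Measure E)
    [IsProbabilityMeasure ρ] {f : E → ℝ} (hf : Measurable f) {C : ℝ} (h0 : ∀ x, |f x| ≤ C) :
    Integrable f ρ :=
  Integrable.of_bound hf.aestronglyMeasurable C (Eventually.of_forall h0)

section Sep
variable {X B : Type*} [MetricSpace X] [CompleteSpace X] [SecondCountableTopology X]
    [MeasurableSpace X] [BorelSpace X] [Nonempty X]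
    [MetricSpace B] [CompleteSpace B] [SecondCountableTopology B]
    [MeasurableSpace B] [BorelSpace B] [Nonempty B]

lemma Wp_lip {p : ℝ} (hp : 1 ≤ p) {G : B → ℝ} {C : ℝ} (hC : ∀ b, |G b| ≤ C) {L : NNReal}
    (hL : 0 < L) (hG : LipschitzWith L G) (m n : Measure B) [IsProbabilityMeasure m]
    [IsProbabilityMeasure n] :
    ENNReal.ofReal |∫ b, G b ∂m - ∫ b, G b ∂n| ≤ L * Wp p edist m n := by
  have hGm : Measurable G := hG.continuous.measurable
  rw [← ENNReal.div_le_iff' (by simpa using hL.ne') (by simp)]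
  refine le_iInf₂ fun π hπ => ?_
  have := cpl_prob hπ
  rw [ENNReal.div_le_iff' (by simpa using hL.ne') (by simp)]
  have i1 : Integrable (fun z : B × B => G z.1) π :=
    bdd_integrable π (hGm.comp measurable_fst) fun z => hC _
  have i2 : Integrable (fun z : B × B => G z.2) π :=
    bdd_integrable π (hGm.comp measurable_snd) fun z => hC _
  have e1 : ∫ b, G b ∂m = ∫ z, G z.1 ∂π := by
    rw [← hπ.1, integral_map (by fun_prop) hGm.aestronglyMeasurable]
  have e2 : ∫ b, G b ∂n = ∫ z, G z.2 ∂π := by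
    rw [← hπ.2, integral_map (by fun_prop) hGm.aestronglyMeasurable]
  rw [e1, e2, ← integral_sub i1 i2, ← Real.norm_eq_abs, ofReal_norm]
  refine (enorm_integral_le_lintegral_enorm _).trans ?_
  calc ∫⁻ z, ‖G z.1 - G z.2‖ₑ ∂π ≤ ∫⁻ z, L * edist z.1 z.2 ∂π := by
        refine lintegral_mono fun z => ?_
        rw [← edist_eq_enorm_sub]
        exact hG _ _
    _ = L * ∫⁻ z, edist z.1 z.2 ∂π := lintegral_const_mul _ (by fun_prop)
    _ ≤ _ := by
        gcongr
        exact lintegral_le_Lp hp π (by fun_prop)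

/-- integral of `G` against the measure component -/
def tint (X : Type*) {B : Type*} [MeasurableSpace X] [MeasurableSpace B] [Nonempty B] (G : B → ℝ)
    (z : X × Measure B) : ℝ := ∫ b, G b ∂(nmk X B z)

lemma tint_meas {G : B → ℝ} (hG : Measurable G) : Measurable (tint X G) :=
  (StronglyMeasurable.integral_kernel (κ := nmk X B) hG.stronglyMeasurable).measurable

lemma tint_nonneg {G : B → ℝ} (h : ∀ b, 0 ≤ G b) (z : X × Measure B) : 0 ≤ tint X G z :=
  integral_nonneg h

lemma tint_abs {G : B → ℝ} {C : ℝ} (h : ∀ b, |G b| ≤ C) (z : X × Measure B) :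
    |tint X G z| ≤ C := by
  have := norm_integral_le_of_norm_le_const (μ := nmk X B z) (f := G) (C := C)
    (Eventually.of_forall h)
  simpa [tint] using this

lemma exp_ineq {a b s t : ℝ} (ha : 0 ≤ a) (hs : 0 ≤ s) :
    b * Real.exp (-t) - a * Real.exp (-s) ≤
      |b - a| + b * Real.exp (-t) * (s - t) + 0 ∨ b < 0 := by
  by_cases hb : b < 0
  · exact Or.inr hb
  left
  push Not at hb
  have h1 : Real.exp (-s) ≤ 1 := Real.exp_le_one_iff.2 (by linarith)
  have h0 := Real.exp_pos (-s)
  have h2 : Real.exp (-t) * (1 - (s - t)) ≤ Real.exp (-s) := by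
    have : Real.exp (-s) = Real.exp (-t) * Real.exp (-(s - t)) := by
      rw [← Real.exp_add]; ring_nf
    rw [this]
    gcongr
    have := Real.add_one_le_exp (-(s - t))
    linarith
  have h3 : (b - a) * Real.exp (-s) ≤ |b - a| := by
    have := le_abs_self (b - a)
    nlinarith [abs_nonneg (b - a)]
  nlinarith [mul_le_mul_of_nonneg_left h2 hb]

lemma key {p : ℝ} (hp : 1 ≤ p) {μ ν : Measure (X × Measure B)}
    (hμ : MemPpLift p edist edist μ) (hν : MemPpLift p edist edist ν)
    {K : Kernel (X × Measure B) (X × Measure B)} [IsMarkovKernel K] (hK : ν.bind K = μ)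
    {f : X → ℝ} (f0 : ∀ x, 0 ≤ f x) (f1 : ∀ x, f x ≤ 1) {Lf : NNReal} (hf : LipschitzWith Lf f)
    {G : B → ℝ} {C : ℝ} (G0 : ∀ b, 0 ≤ G b) (hC : ∀ b, G b ≤ C) {L : NNReal}
    (hL : 0 < L) (hG : LipschitzWith L G) :
    ENNReal.ofReal (∫ z, f z.1 * Real.exp (-tint X G z) ∂ν -
      ∫ z, f z.1 * Real.exp (-tint X G z) ∂μ) ≤
      Lf * costA p ν K ^ (1 / p) + L * costB p ν K ^ (1 / p) := by
  have := hμ.1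
  have := hν.1
  have hfm : Measurable f := hf.continuous.measurable
  have hGm : Measurable G := hG.continuous.measurable
  have hGa : ∀ b, |G b| ≤ C := fun b => by rw [abs_of_nonneg (G0 b)]; exact hC b
  have hIm : Measurable (tint X G) := tint_meas hGm
  have hI0 : ∀ z, 0 ≤ tint X G z := tint_nonneg G0
  have hIC : ∀ z, |tint X G z| ≤ C := tint_abs hGa
  have hC0 : 0 ≤ C := (abs_nonneg _).trans (hIC (Classical.arbitrary _))
  have hfe : ∀ z, |f z.1 * Real.exp (-tint X G z)| ≤ 1 := fun z => by
    rw [abs_of_nonneg (mul_nonneg (f0 _) (Real.exp_pos _).le)]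
    exact mul_le_one₀ (f1 _) (Real.exp_pos _).le (Real.exp_le_one_iff.2 (by linarith [hI0 z]))
  have hfeb : ∀ z, ∀ c : ℝ, |f z.1 * Real.exp (-tint X G z) * c| ≤ |c| := fun z c => by
    rw [abs_mul]
    exact mul_le_of_le_one_left (abs_nonneg _) (hfe z)
  have hφm : Measurable fun z : X × Measure B => f z.1 * Real.exp (-tint X G z) := by fun_prop
  set φ : X × Measure B → ℝ := fun z => f z.1 * Real.exp (-tint X G z) with hφ
  set γ := ν ⊗ₘ K with hγ
  have m2 : γ.map Prod.snd = μ := by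
    rw [← hK]; exact Measure.snd_compProd ν K
  have m1 : γ.map Prod.fst = ν := Measure.fst_compProd ν K
  have e1 : ∫ z, φ z ∂μ = ∫ w, φ w.2 ∂γ := by
    rw [← m2, integral_map (by fun_prop) hφm.aestronglyMeasurable]
  have e2 : ∫ z, φ z ∂ν = ∫ w, φ w.1 ∂γ := by
    rw [← m1, integral_map (by fun_prop) hφm.aestronglyMeasurable]
  have i1 : Integrable (fun w : (X × Measure B) × (X × Measure B) => φ w.1) γ :=
    bdd_integrable γ (by fun_prop) fun w => hfe w.1
  have i2 : Integrable (fun w : (X × Measure B) × (X × Measure B) => φ w.2) γ :=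
    bdd_integrable γ (by fun_prop) fun w => hfe w.2
  have i3 : Integrable (fun w : (X × Measure B) × (X × Measure B) => |f w.1.1 - f w.2.1|) γ :=
    bdd_integrable γ (C := 1) (by fun_prop) fun w => by
      rw [abs_abs, abs_le]
      constructor <;> linarith [f0 w.1.1, f0 w.2.1, f1 w.1.1, f1 w.2.1]
  have i4 : Integrable (fun w : (X × Measure B) × (X × Measure B) =>
      φ w.1 * (tint X G w.2 - tint X G w.1)) γ :=
    bdd_integrable γ (C := 2 * C) (by fun_prop) fun w => by
      refine (hfeb _ _).trans ((abs_sub _ _).trans ?_)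
      linarith [hIC w.1, hIC w.2]
  have hJ : ∀ y, ∫ x, tint X G x ∂(K y) = ∫ b, G b ∂((nmk X B ∘ₖ K) y) := fun y =>
    (Kernel.integral_comp (bdd_integrable _ hGm hGa)).symm
  have e4 : ∫ w, φ w.1 * (tint X G w.2 - tint X G w.1) ∂γ =
      ∫ y, φ y * (∫ b, G b ∂((nmk X B ∘ₖ K) y) - ∫ b, G b ∂(nmk X B y)) ∂ν := by
    rw [hγ, Measure.integral_compProd i4]
    refine integral_congr_ae (Eventually.of_forall fun y => ?_)
    simp only
    rw [integral_const_mul, integral_sub (bdd_integrable _ hIm hIC) (integrable_const _), hJ]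
    simp [tint]
  have hle : ∫ z, φ z ∂ν - ∫ z, φ z ∂μ ≤ ∫ w, |f w.1.1 - f w.2.1| ∂γ +
      ∫ y, φ y * (∫ b, G b ∂((nmk X B ∘ₖ K) y) - ∫ b, G b ∂(nmk X B y)) ∂ν := by
    rw [e1, e2, ← e4, ← integral_sub i1 i2, ← integral_add i3 i4]
    refine integral_mono (i1.sub i2) (i3.add i4) fun w => ?_
    have := (exp_ineq (b := f w.1.1) (t := tint X G w.1) (f0 w.2.1) (hI0 w.2)).resolve_right
      (not_lt.2 (f0 _))
    simp only [hφ]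
    linarith
  refine (ENNReal.ofReal_le_ofReal hle).trans (ofReal_add_le.trans (add_le_add ?_ ?_))
  · rw [ofReal_integral_eq_lintegral_ofReal i3 (Eventually.of_forall fun _ => abs_nonneg _)]
    calc ∫⁻ w, ENNReal.ofReal |f w.1.1 - f w.2.1| ∂γ ≤ ∫⁻ w, Lf * edist w.2.1 w.1.1 ∂γ := by
          refine lintegral_mono fun w => ?_
          rw [← Real.dist_eq, ← edist_dist, edist_comm]
          exact hf _ _
      _ = Lf * ∫⁻ w, edist w.2.1 w.1.1 ∂γ := lintegral_const_mul _ (by fun_prop)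
      _ ≤ _ := by
          gcongr
          exact lintegral_le_Lp hp γ (by fun_prop)
  · refine (ENNReal.ofReal_le_ofReal (le_abs_self _)).trans ?_
    rw [← Real.norm_eq_abs, ofReal_norm]
    refine (enorm_integral_le_lintegral_enorm _).trans ?_
    have am := bar_aemeas hp hμ hν hK
    calc _ ≤ ∫⁻ y, L * Wp p edist ((nmk X B ∘ₖ K) y) (nmk X B y) ∂ν := by
          refine lintegral_mono fun y => ?_
          rw [← ofReal_norm, Real.norm_eq_abs]
          exact (ENNReal.ofReal_le_ofReal (hfeb _ _)).trans (Wp_lip hp hGa hL hG _ _)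
      _ = L * ∫⁻ y, Wp p edist ((nmk X B ∘ₖ K) y) (nmk X B y) ∂ν :=
          lintegral_const_mul'' _ am
      _ ≤ _ := by
          gcongr
          exact lintegral_le_Lp hp ν am

lemma key2 {p : ℝ} (hp : 1 ≤ p) {μ ν : Measure (X × Measure B)}
    (hμ : MemPpLift p edist edist μ) (hν : MemPpLift p edist edist ν)
    (h0 : CWbar p edist edist μ ν = 0)
    {f : X → ℝ} (f0 : ∀ x, 0 ≤ f x) (f1 : ∀ x, f x ≤ 1) {Lf : NNReal} (hf : LipschitzWith Lf f)
    {G : B → ℝ} {C : ℝ} (G0 : ∀ b, 0 ≤ G b) (hC : ∀ b, G b ≤ C) {L : NNReal}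
    (hG : LipschitzWith L G) :
    ∫ z, f z.1 * Real.exp (-tint X G z) ∂ν ≤ ∫ z, f z.1 * Real.exp (-tint X G z) ∂μ := by
  have hL : 0 < L + 1 := by positivity
  have hG' : LipschitzWith (L + 1) G := hG.weaken (by simp)
  have hip : 0 ≤ 1 / p := by positivity
  set D := ENNReal.ofReal (∫ z, f z.1 * Real.exp (-tint X G z) ∂ν -
      ∫ z, f z.1 * Real.exp (-tint X G z) ∂μ) with hD
  have hc : ((Lf : ℝ≥0∞) + ((L + 1 : NNReal) : ℝ≥0∞)) ≠ 0 := by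
    have : ((L + 1 : NNReal) : ℝ≥0∞) ≠ 0 := by exact_mod_cast hL.ne'
    simp [this]
  have hc' : ((Lf : ℝ≥0∞) + ((L + 1 : NNReal) : ℝ≥0∞)) ≠ ∞ :=
    ENNReal.add_ne_top.2 ⟨coe_ne_top, coe_ne_top⟩
  have : D / ((Lf : ℝ≥0∞) + ((L + 1 : NNReal) : ℝ≥0∞)) ≤ CWbar p edist edist μ ν := by
    rw [CW_eq hp hμ hν]
    refine le_iInf₂ fun K hK => ?_
    have := hK.1
    rw [ENNReal.div_le_iff' hc hc', add_mul]
    refine (key hp hμ hν hK.2 f0 f1 hf G0 hC hL hG').trans ?_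
    gcongr
    · exact le_self_add
    · exact le_add_self
  rw [h0, ENNReal.div_le_iff' hc hc', mul_zero] at this
  have := ENNReal.ofReal_eq_zero.1 (le_antisymm this bot_le)
  linarith

end Sep


section Sep2
variable {X B : Type*} [MetricSpace X] [CompleteSpace X] [SecondCountableTopology X]
    [MeasurableSpace X] [BorelSpace X] [Nonempty X]
    [MetricSpace B] [CompleteSpace B] [SecondCountableTopology B]
    [MeasurableSpace B] [BorelSpace B] [Nonempty B]

/-- index set of the countable family of test functions -/
abbrev TI (B : Type*) [TopologicalSpace B] [SecondCountableTopology B] : Type _ :=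
  Finset (TopologicalSpace.countableBasis B) × ℕ

/-- the closed sets of the generating pi-system -/
def Fc (s : Finset (TopologicalSpace.countableBasis B)) : Set B := ⋂ U ∈ s, (U : Set B)ᶜ

lemma Fc_closed (s : Finset (TopologicalSpace.countableBasis B)) : IsClosed (Fc s) := by
  refine isClosed_biInter fun U _ => ?_
  exact (TopologicalSpace.isOpen_of_mem_countableBasis U.2).isClosed_compl

lemma Fc_pi : IsPiSystem (Set.range (Fc (B := B))) := by
  classical
  rintro _ ⟨s, rfl⟩ _ ⟨t, rfl⟩ _
  refine ⟨s ∪ t, ?_⟩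
  ext b
  simp only [Fc, Set.mem_iInter, Set.mem_inter_iff, Finset.mem_union]
  constructor
  · exact fun h => ⟨fun i hi => h i (Or.inl hi), fun i hi => h i (Or.inr hi)⟩
  · rintro ⟨h1, h2⟩ i (hi | hi)
    · exact h1 i hi
    · exact h2 i hi

lemma Fc_gen : ‹MeasurableSpace B› = MeasurableSpace.generateFrom (Set.range (Fc (B := B))) := by
  refine le_antisymm ?_ (MeasurableSpace.generateFrom_le ?_)
  · rw [BorelSpace.measurable_eq (α := B),
      (TopologicalSpace.isBasis_countableBasis B).borel_eq_generateFrom]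
    refine MeasurableSpace.generateFrom_le fun U hU => ?_
    have : MeasurableSet[MeasurableSpace.generateFrom (Set.range (Fc (B := B)))]
        (Fc {(⟨U, hU⟩ : TopologicalSpace.countableBasis B)}) :=
      MeasurableSpace.measurableSet_generateFrom ⟨_, rfl⟩
    have h2 := this.compl
    simpa [Fc] using h2
  · rintro _ ⟨s, rfl⟩
    exact (Fc_closed s).measurableSet

lemma dl_pos (n : ℕ) : (0 : ℝ) < 1 / ((n : ℝ) + 1) := by positivity

/-- countable family of Lipschitz test functions -/
def Gi (i : TI B) (b : B) : ℝ := (thickenedIndicator (dl_pos i.2) (Fc i.1) b : ℝ)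

lemma Gi_nonneg (i : TI B) (b : B) : 0 ≤ Gi i b := NNReal.coe_nonneg _

lemma Gi_le (i : TI B) (b : B) : Gi i b ≤ 1 := by
  have := thickenedIndicator_le_one (dl_pos i.2) (Fc i.1) b
  rw [Gi]
  exact_mod_cast this

lemma Gi_abs (i : TI B) (b : B) : |Gi i b| ≤ 1 := by
  rw [abs_of_nonneg (Gi_nonneg i b)]; exact Gi_le i b

lemma Gi_lip (i : TI B) : ∃ L : NNReal, LipschitzWith L (Gi i) :=
  ⟨_, fun x y => lipschitzWith_thickenedIndicator (dl_pos i.2) (Fc i.1) x y⟩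

lemma Gi_meas (i : TI B) : Measurable (Gi i) :=
  (Gi_lip i).choose_spec.continuous.measurable

/-- finite sums of the test functions -/
def Gs (l : Multiset (TI B)) (b : B) : ℝ := (l.map fun i => Gi i b).sum

lemma Gs_prop (l : Multiset (TI B)) : (∀ b, 0 ≤ Gs l b) ∧ (∃ C, ∀ b, Gs l b ≤ C) ∧
    (∃ L : NNReal, LipschitzWith L (Gs l)) ∧
    ∀ z : X × Measure B, tint X (Gs l) z = (l.map fun i => tint X (Gi i) z).sum := by
  induction l using Multiset.induction_on with
  | empty =>
    refine ⟨fun b => by simp [Gs], ⟨0, fun b => by simp [Gs]⟩, ⟨0, ?_⟩, fun z => by simp [Gs, tint]⟩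
    exact LipschitzWith.const' (0 : ℝ)
  | cons i l ih =>
    obtain ⟨h0, ⟨C, hC⟩, ⟨L, hL⟩, ht⟩ := ih
    obtain ⟨L', hL'⟩ := Gi_lip i
    have e : Gs (i ::ₘ l) = fun b => Gi i b + Gs l b := by
      funext b; simp [Gs]
    rw [e]
    refine ⟨fun b => add_nonneg (Gi_nonneg i b) (h0 b), ⟨1 + C, fun b => add_le_add (Gi_le i b) (hC b)⟩,
      ⟨L' + L, hL'.add hL⟩, fun z => ?_⟩
    rw [Multiset.map_cons, Multiset.sum_cons, ← ht]
    refine integral_add (bdd_integrable _ (Gi_meas i) (Gi_abs i))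
      (bdd_integrable (C := C) _ hL.continuous.measurable fun b => ?_)
    rw [abs_of_nonneg (h0 b)]
    exact hC b

/-- the target Polish space -/
abbrev TE (X B : Type*) [TopologicalSpace B] [SecondCountableTopology B] : Type _ :=
  X × (TI B → unitInterval)

/-- evaluation map -/
def Phi (z : X × Measure B) : TE X B :=
  (z.1, fun i => ⟨tint X (Gi i) z, tint_nonneg (Gi_nonneg i) z,
    (le_abs_self _).trans (tint_abs (Gi_abs i) z)⟩)

lemma Phi_meas : Measurable (Phi (X := X) (B := B)) := by
  refine measurable_fst.prodMk (measurable_pi_iff.2 fun i => ?_)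
  exact (tint_meas (Gi_meas i)).subtype_mk

/-- admissible first-coordinate functions -/
def NiceF (f : X → ℝ) : Prop := (∀ x, 0 ≤ f x) ∧ (∀ x, f x ≤ 1) ∧ ∃ L : NNReal, LipschitzWith L f

lemma NiceF.mul {X : Type*} [MetricSpace X] {f g : X → ℝ} (hf : NiceF f) (hg : NiceF g) : NiceF fun x => f x * g x := by
  obtain ⟨f0, f1, L, hL⟩ := hf
  obtain ⟨g0, g1, L', hL'⟩ := hg
  refine ⟨fun x => mul_nonneg (f0 x) (g0 x), fun x => mul_le_one₀ (f1 x) (g0 x) (g1 x), L + L', ?_⟩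
  refine LipschitzWith.of_dist_le_mul fun x y => ?_
  have h1 := hL.dist_le_mul x y
  have h2 := hL'.dist_le_mul x y
  rw [Real.dist_eq] at *
  push_cast
  calc |f x * g x - f y * g y| = |(f x - f y) * g x + f y * (g x - g y)| := by ring_nf
    _ ≤ |(f x - f y) * g x| + |f y * (g x - g y)| := abs_add_le _ _
    _ = |f x - f y| * g x + f y * |g x - g y| := by
        rw [abs_mul, abs_mul, abs_of_nonneg (g0 x), abs_of_nonneg (f0 y)]
    _ ≤ |f x - f y| * 1 + 1 * |g x - g y| := by
        gcongr
        · exact g1 x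
        · exact f1 y
    _ ≤ _ := by linarith

/-- the multiplicative family of test functions on the Polish space -/
def TM (X B : Type*) [MetricSpace X] [TopologicalSpace B] [SecondCountableTopology B] :
    Submonoid (BoundedContinuousFunction (TE X B) ℝ) where
  carrier := {g | ∃ (f : X → ℝ) (l : Multiset (TI B)), NiceF f ∧
    ∀ e, g e = f e.1 * Real.exp (-(l.map fun i => (e.2 i : ℝ)).sum)}
  mul_mem' := by
    rintro g g' ⟨f, l, hf, hg⟩ ⟨f', l', hf', hg'⟩
    refine ⟨fun x => f x * f' x, l + l', hf.mul hf', fun e => ?_⟩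
    rw [BoundedContinuousFunction.mul_apply, hg, hg', Multiset.map_add, Multiset.sum_add, neg_add,
      Real.exp_add]
    ring
  one_mem' := ⟨fun _ => 1, 0, ⟨fun _ => zero_le_one, fun _ => le_rfl, 0, LipschitzWith.const' 1⟩,
    fun e => by simp⟩

lemma TM_exists {f : X → ℝ} (hf : NiceF f) (l : Multiset (TI B)) : ∃ g ∈ TM X B,
    ∀ e, g e = f e.1 * Real.exp (-(l.map fun i => (e.2 i : ℝ)).sum) := by
  obtain ⟨f0, f1, L, hL⟩ := id hf
  have hc : Continuous fun e : TE X B =>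
      f e.1 * Real.exp (-(l.map fun i => (e.2 i : ℝ)).sum) := by
    have h1 : Continuous fun e : TE X B => (l.map fun i => (e.2 i : ℝ)).sum :=
      continuous_multiset_sum _ fun i _ => by fun_prop
    have h2 := hL.continuous
    fun_prop
  refine ⟨BoundedContinuousFunction.ofNormedAddCommGroup _ hc 1 fun e => ?_,
    ⟨f, l, hf, fun e => rfl⟩, fun e => rfl⟩
  rw [Real.norm_eq_abs, abs_of_nonneg (mul_nonneg (f0 _) (Real.exp_pos _).le)]
  refine mul_le_one₀ (f1 _) (Real.exp_pos _).le (Real.exp_le_one_iff.2 ?_)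
  rw [neg_nonpos]
  refine Multiset.sum_nonneg fun a ha => ?_
  obtain ⟨i, _, rfl⟩ := Multiset.mem_map.1 ha
  exact (e.2 i).2.1

lemma map_Phi_eq {μ ν : Measure (X × Measure B)} [IsProbabilityMeasure μ] [IsProbabilityMeasure ν]
    (h : ∀ (f : X → ℝ) (l : Multiset (TI B)), NiceF f →
      ∫ z, f z.1 * Real.exp (-tint X (Gs l) z) ∂μ = ∫ z, f z.1 * Real.exp (-tint X (Gs l) z) ∂ν) :
    μ.map Phi = ν.map Phi := by
  have := Measure.isProbabilityMeasure_map (μ := μ) (Phi_meas (X := X) (B := B)).aemeasurable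
  have := Measure.isProbabilityMeasure_map (μ := ν) (Phi_meas (X := X) (B := B)).aemeasurable
  let S : Subalgebra ℝ (BoundedContinuousFunction (TE X B) ℝ) := Algebra.adjoin ℝ (TM X B)
  let A : StarSubalgebra ℝ (BoundedContinuousFunction (TE X B) ℝ) :=
    { S with
      star_mem' := fun {a} ha => by
        have hs : star a = a := by
          ext
          simp
        rw [hs]
        exact ha }
  have hsub : ∀ g ∈ TM X B, g ∈ A := fun g hg => Algebra.subset_adjoin hg
  refine ext_of_forall_mem_subalgebra_integral_eq_of_polish (𝕜 := ℝ) (A := A) ?_ ?_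
  · intro e e' hne
    have hex : ∃ g ∈ TM X B, g e ≠ g e' := by
      by_cases h1 : e.1 = e'.1
      · have h2 : ∃ i, e.2 i ≠ e'.2 i := by
          by_contra hcon
          push Not at hcon
          exact hne (Prod.ext h1 (funext hcon))
        obtain ⟨i, hi⟩ := h2
        obtain ⟨g, hg, hge⟩ := TM_exists (X := X) (B := B) (f := fun _ => 1)
          ⟨fun _ => zero_le_one, fun _ => le_rfl, 0, LipschitzWith.const' 1⟩ {i}
        refine ⟨g, hg, ?_⟩
        rw [hge, hge]
        simpa [Subtype.ext_iff] using hi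
      · have nf : NiceF fun x : X => min 1 (dist x e.1) :=
          ⟨fun x => le_min zero_le_one dist_nonneg, fun x => min_le_left _ _, 1,
            (LipschitzWith.dist_left e.1).const_min 1⟩
        obtain ⟨g, hg, hge⟩ := TM_exists (X := X) (B := B) nf 0
        refine ⟨g, hg, ?_⟩
        rw [hge, hge]
        have : 0 < min 1 (dist e'.1 e.1) := lt_min one_pos (dist_pos.2 (Ne.symm h1))
        simpa using this.ne
    obtain ⟨g, hg, hne'⟩ := hex
    exact ⟨g, ⟨_, ⟨g, hsub g hg, rfl⟩, rfl⟩, hne'⟩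
  · intro g hg
    have hg' : g ∈ Submodule.span ℝ (TM X B : Set (BoundedContinuousFunction (TE X B) ℝ)) := by
      have h1 : g ∈ Subalgebra.toSubmodule (Algebra.adjoin ℝ
        (TM X B : Set (BoundedContinuousFunction (TE X B) ℝ))) := hg
      rwa [Algebra.adjoin_eq_span, Submonoid.closure_eq] at h1
    clear hg
    induction hg' using Submodule.span_induction with
    | mem g hg =>
      obtain ⟨f, l, hf, hge⟩ := hg
      rw [integral_map Phi_meas.aemeasurable g.continuous.measurable.aestronglyMeasurable,
        integral_map Phi_meas.aemeasurable g.continuous.measurable.aestronglyMeasurable]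
      have e : ∀ z : X × Measure B, g (Phi z) = f z.1 * Real.exp (-tint X (Gs l) z) := fun z => by
        rw [hge, (Gs_prop l).2.2.2]; rfl
      simp only [e]
      exact h f l hf
    | zero => simp
    | add a b ha hb iha ihb =>
      simp only [BoundedContinuousFunction.add_apply]
      rw [integral_add (a.integrable _) (b.integrable _),
        integral_add (a.integrable _) (b.integrable _), iha, ihb]
    | smul c a ha iha =>
      simp only [BoundedContinuousFunction.smul_apply]
      rw [integral_smul, integral_smul, iha]

lemma meas_of_Gi {Z : Type*} [MeasurableSpace Z] (k : Z → Measure B)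
    [∀ z, IsProbabilityMeasure (k z)] (h : ∀ i : TI B, Measurable fun z => ∫ b, Gi i b ∂(k z)) :
    Measurable k := by
  refine Measurable.measure_of_isPiSystem_of_isProbabilityMeasure Fc_gen Fc_pi ?_
  rintro _ ⟨s, rfl⟩
  refine measurable_of_tendsto_metrizable
    (f := fun (n : ℕ) z => ENNReal.ofReal (∫ b, Gi (s, n) b ∂(k z)))
    (fun n => (h (s, n)).ennreal_ofReal) (tendsto_pi_nhds.2 fun z => ?_)
  refine (tendsto_lintegral_thickenedIndicator_of_isClosed (k z) (Fc_closed s) dl_pos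
    tendsto_one_div_add_atTop_nhds_zero_nat).congr fun n => ?_
  rw [lintegral_coe_eq_integral]
  · rfl
  · exact bdd_integrable _ (Gi_meas (s, n)) (Gi_abs (s, n))

lemma nmk_comap : @Measurable _ _ (MeasurableSpace.comap (Phi (X := X) (B := B)) inferInstance) _
    (fun z : X × Measure B => nmk X B z) := by
  refine @meas_of_Gi B _ _ _ _ _ _ _ (MeasurableSpace.comap (Phi (X := X) (B := B)) inferInstance)
    (fun z => nmk X B z) (fun _ => inferInstance) fun i => ?_
  have h1 : Measurable fun e : TE X B => (e.2 i : ℝ) := by fun_prop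
  have h2 : @Measurable _ _ (MeasurableSpace.comap (Phi (X := X) (B := B)) inferInstance) _
    ((fun e : TE X B => (e.2 i : ℝ)) ∘ Phi) := h1.comp (comap_measurable Phi)
  exact h2

lemma eq_of_map_Phi {μ ν : Measure (X × Measure B)} (hμ : ∀ᵐ z ∂μ, IsProbabilityMeasure z.2)
    (hν : ∀ᵐ z ∂ν, IsProbabilityMeasure z.2) (h : μ.map Phi = ν.map Phi) : μ = ν := by
  ext A hA
  have hT : @Measurable _ _ (MeasurableSpace.comap (Phi (X := X) (B := B)) inferInstance) _
      (fun z : X × Measure B => (z.1, nmk X B z)) := by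
    refine Measurable.prodMk ?_ nmk_comap
    have h2 : @Measurable _ _ (MeasurableSpace.comap (Phi (X := X) (B := B)) inferInstance) _
      (Prod.fst ∘ Phi) := measurable_fst.comp (comap_measurable Phi)
    exact h2
  obtain ⟨D, hD, hDe⟩ := hT hA
  have aux : ∀ ρ : Measure (X × Measure B), (∀ᵐ z ∂ρ, IsProbabilityMeasure z.2) →
      ρ A = ρ.map Phi D := fun ρ hρ => by
    rw [Measure.map_apply Phi_meas hD, hDe]
    refine measure_congr ?_
    filter_upwards [hρ] with z hz
    have : (z.1, nmk X B z) = z := by rw [nmk_eq hz]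
    change A z = A (z.1, nmk X B z)
    rw [this]
  rw [aux μ hμ, aux ν hν, h]

lemma eq_of_SCW {p : ℝ} (hp : 1 ≤ p) {μ ν : Measure (X × Measure B)}
    (hμ : MemPpLift p edist edist μ) (hν : MemPpLift p edist edist ν)
    (h : CWbar p edist edist μ ν = 0) (h' : CWbar p edist edist ν μ = 0) : μ = ν := by
  have := hμ.1
  have := hν.1
  refine eq_of_map_Phi (lift_ae_prob hμ) (lift_ae_prob hν) (map_Phi_eq fun f l hf => ?_)
  obtain ⟨f0, f1, L, hL⟩ := hf
  obtain ⟨G0, ⟨C, hC⟩, ⟨L', hL'⟩, -⟩ := Gs_prop (X := X) l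
  exact le_antisymm (key2 hp hν hμ h' f0 f1 hL G0 hC hL') (key2 hp hμ hν h f0 f1 hL G0 hC hL')

end Sep2

/-- **Theorem 4.12.**  `SCW̄_p` is a metric on `𝒫_p(𝒳₁ × 𝒫_p(𝒳₂))` and is
dominated by `AW̄_p`. -/
theorem SCWbar_is_metric_le_AWbar
    {X1 X2 : Type} [MetricSpace X1] [CompleteSpace X1] [SecondCountableTopology X1]
    [MeasurableSpace X1] [BorelSpace X1] [Nonempty X1]
    [MetricSpace X2] [CompleteSpace X2] [SecondCountableTopology X2]
    [MeasurableSpace X2] [BorelSpace X2] [Nonempty X2]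
    (p : ℝ) (hp : 1 ≤ p) :
    let dA : X1 → X1 → ℝ≥0∞ := edist
    let dB : X2 → X2 → ℝ≥0∞ := edist
    -- symmetry
    (∀ μ ν : Measure (X1 × Measure X2), MemPpLift p dA dB μ → MemPpLift p dA dB ν →
        SCWbar p dA dB μ ν = SCWbar p dA dB ν μ) ∧
    -- triangle inequality
    (∀ μ ν lam : Measure (X1 × Measure X2),
        MemPpLift p dA dB μ → MemPpLift p dA dB ν → MemPpLift p dA dB lam →
        SCWbar p dA dB μ lam ≤ SCWbar p dA dB μ ν + SCWbar p dA dB ν lam) ∧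
    -- vanishes exactly on the diagonal
    (∀ μ ν : Measure (X1 × Measure X2), MemPpLift p dA dB μ → MemPpLift p dA dB ν →
        (SCWbar p dA dB μ ν = 0 ↔ μ = ν)) ∧
    -- dominated by `AW̄_p`
    (∀ μ ν : Measure (X1 × Measure X2), MemPpLift p dA dB μ → MemPpLift p dA dB ν →
        SCWbar p dA dB μ ν ≤ AWbar p dA dB μ ν) := by
  intro dA dB
  refine ⟨fun μ ν _ _ => max_comm _ _, fun μ ν lam hμ hν hl => ?_, fun μ ν hμ hν => ⟨fun h => ?_, ?_⟩,
    fun μ ν hμ hν => ?_⟩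
  · refine max_le ?_ ?_
    · exact (CW_triangle hp hμ hν hl).trans (add_le_add (le_max_left _ _) (le_max_left _ _))
    · refine (CW_triangle hp hl hν hμ).trans ?_
      rw [add_comm]
      exact add_le_add (le_max_right _ _) (le_max_right _ _)
  · have h1 : CWbar p edist edist μ ν ≤ 0 := (le_max_left _ _).trans h.le
    have h2 : CWbar p edist edist ν μ ≤ 0 := (le_max_right _ _).trans h.le
    exact eq_of_SCW hp hμ hν (le_antisymm h1 bot_le) (le_antisymm h2 bot_le)
  · rintro rfl
    have h1 : CWbar p edist edist μ μ = 0 := CW_self hp hμ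
    exact (max_self _).trans h1
  · refine max_le (CW_le_AW hp hμ hν) ?_
    exact (CW_le_AW hp hν hμ).trans (AW_symm p ν μ).le

end AWPaper
end
end

section
/- The intensity map und_{𝒳_1} : 𝒫_p(𝒳_1 × 𝒫_p(𝒳_2)) → 𝒫_p(𝒳_1 × 𝒳_2) satisfies W_p(und_{𝒳_1}(μ), und_{𝒳_1}(ν)) ≤ CW̄_p(μ, ν) for all μ, ν ∈ 𝒫_p(𝒳_1 × 𝒫_p(𝒳_2)); in particular und_{𝒳_1} is a contraction from (𝒫_p(𝒳_1 × 𝒫_p(𝒳_2)), SCW̄_p) to (𝒫_p(𝒳_1 × 𝒳_2), W_p). -/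
open MeasureTheory ProbabilityTheory ENNReal Filter Topology

noncomputable section

namespace AWPaper

/-! ### Generic constructions -/

variable {α β : Type*}

/-! ### Path spaces -/

variable {X : Type*} [MeasurableSpace X]

section Discrete

lemma disc_row (α β : Measure ℕ) (w : Measure (ℕ × ℕ)) [IsProbabilityMeasure α]
    (h1 : w.map Prod.fst = α) (h2 : w.map Prod.snd = β) (i : ℕ) :
    (∫⁻ j, w {(i, j)} / (α {i} * β {j}) ∂β ≤ 1) ∧
    (α {i} ≠ 0 → ∫⁻ j, w {(i, j)} / (α {i} * β {j}) ∂β = 1) := by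
  have hw : IsProbabilityMeasure w := by
    constructor
    have : w.map Prod.fst Set.univ = 1 := by rw [h1]; simp
    rwa [Measure.map_apply measurable_fst MeasurableSet.univ] at this
  have hβ : IsProbabilityMeasure β := by
    rw [← h2]; exact Measure.isProbabilityMeasure_map measurable_snd.aemeasurable
  have hle1 : ∀ j, w {(i, j)} ≤ α {i} := by
    intro j
    rw [← h1, Measure.map_apply measurable_fst (measurableSet_singleton _)]
    exact measure_mono (by simp)
  have hle2 : ∀ j, w {(i, j)} ≤ β {j} := by
    intro j
    rw [← h2, Measure.map_apply measurable_snd (measurableSet_singleton _)]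
    exact measure_mono (by simp)
  have hsum : ∑' j, w {(i, j)} = α {i} := by
    rw [← h1, Measure.map_apply measurable_fst (measurableSet_singleton _), ← measure_iUnion]
    · congr 1; ext ⟨x, y⟩; simp [eq_comm]
    · intro j k hjk; simp [Function.onFun]; exact fun h => hjk h
    · intro j; exact measurableSet_singleton _
  have key : α {i} ≠ 0 → ∫⁻ j, w {(i, j)} / (α {i} * β {j}) ∂β = 1 := by
    intro h0
    rw [lintegral_countable']
    have : ∀ j, w {(i, j)} / (α {i} * β {j}) * β {j} = w {(i, j)} * (α {i})⁻¹ := by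
      intro j
      by_cases hj : β {j} = 0
      · have := hle2 j
        rw [hj] at this
        simp [nonpos_iff_eq_zero.1 this]
      · rw [ENNReal.div_eq_inv_mul, ENNReal.mul_inv (Or.inl h0) (Or.inr hj)]
        calc (α {i})⁻¹ * (β {j})⁻¹ * w {(i, j)} * β {j}
            = ((β {j})⁻¹ * β {j}) * (w {(i, j)} * (α {i})⁻¹) := by ring
          _ = _ := by rw [ENNReal.inv_mul_cancel hj (measure_ne_top _ _), one_mul]
    simp_rw [this]
    rw [ENNReal.tsum_mul_right, hsum, ENNReal.mul_inv_cancel h0 (measure_ne_top _ _)]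
  refine ⟨?_, key⟩
  by_cases h0 : α {i} = 0
  · have : ∀ j, w {(i, j)} = 0 := fun j => nonpos_iff_eq_zero.1 (h0 ▸ hle1 j)
    simp [this]
  · exact (key h0).le

lemma disc_cost (α β : Measure ℕ) (w : Measure (ℕ × ℕ)) [IsProbabilityMeasure α]
    [IsProbabilityMeasure β] (D : ℕ × ℕ → ℝ≥0∞) :
    ∫⁻ z, w {z} / (α {z.1} * β {z.2}) * D z ∂(α.prod β) ≤ ∫⁻ z, D z ∂w := by
  rw [lintegral_countable', lintegral_countable']
  refine ENNReal.tsum_le_tsum fun z => ?_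
  have : (α.prod β) {z} = α {z.1} * β {z.2} := by
    rw [← Measure.prod_prod]; congr 1; ext ⟨x, y⟩; simp [Prod.ext_iff]
  rw [this]
  calc w {z} / (α {z.1} * β {z.2}) * D z * (α {z.1} * β {z.2})
      = D z * ((α {z.1} * β {z.2}) * (w {z} / (α {z.1} * β {z.2}))) := by ring
    _ ≤ _ := by gcongr; exact ENNReal.mul_div_le

lemma floor_approx (F : ℝ≥0∞) (hF : F ≠ ∞) :
    (∀ n : ℕ, ((⌊(n : ℝ) * F.toReal⌋₊ : ℕ) : ℝ≥0∞) / (n : ℝ≥0∞) ≤ F) ∧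
    Tendsto (fun n : ℕ => ((⌊(n : ℝ) * F.toReal⌋₊ : ℕ) : ℝ≥0∞) / (n : ℝ≥0∞)) atTop (𝓝 F) := by
  have e : ∀ n : ℕ, n ≠ 0 → ((⌊(n : ℝ) * F.toReal⌋₊ : ℕ) : ℝ≥0∞) / (n : ℝ≥0∞) =
      ENNReal.ofReal ((⌊F.toReal * (n : ℝ)⌋₊ : ℝ) / (n : ℝ)) := by
    intro n hn
    rw [ENNReal.ofReal_div_of_pos (by positivity)]
    simp [mul_comm]
  constructor
  · intro n
    rcases eq_or_ne n 0 with rfl | hn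
    · simp
    · rw [e n hn]
      refine ENNReal.ofReal_le_of_le_toReal ?_
      rw [div_le_iff₀ (by positivity)]
      exact Nat.floor_le (by positivity)
  · have h1 : Tendsto (fun n : ℕ => ((⌊F.toReal * (n : ℝ)⌋₊ : ℝ) / (n : ℝ))) atTop
        (𝓝 F.toReal) :=
      (tendsto_nat_floor_mul_div_atTop (R := ℝ) (a := F.toReal) ENNReal.toReal_nonneg).comp
        tendsto_natCast_atTop_atTop
    have h2 := (ENNReal.continuous_ofReal.tendsto F.toReal).comp h1
    rw [ENNReal.ofReal_toReal hF] at h2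
    refine h2.congr' ?_
    filter_upwards [eventually_ne_atTop 0] with n hn
    exact (e n hn).symm

end Discrete

section Cpl1

variable {S : Type*} [MeasurableSpace S]

def cplH (a b : Measure S) (h : S × S → ℝ≥0∞) : S × S → ℝ≥0∞ := fun z =>
  h z + (1 - ∫⁻ y, h (z.1, y) ∂b) * (1 - ∫⁻ x, h (x, z.2) ∂a) *
    (∫⁻ x, (1 - ∫⁻ y, h (x, y) ∂b) ∂a)⁻¹

def nrmH (a b : Measure S) (h : S × S → ℝ≥0∞) : S × S → ℝ≥0∞ := fun z =>
  h z / (max 1 (∫⁻ y, h (z.1, y) ∂b) * max 1 (∫⁻ x, h (x, z.2) ∂a))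

lemma nrmH_eq (a b : Measure S) (h : S × S → ℝ≥0∞) (hU : ∀ x, ∫⁻ y, h (x, y) ∂b ≤ 1)
    (hV : ∀ y, ∫⁻ x, h (x, y) ∂a ≤ 1) : nrmH a b h = h := by
  ext z; simp [nrmH, max_eq_left (hU _), max_eq_left (hV _)]

lemma measU (b : Measure S) [SFinite b] {h : S × S → ℝ≥0∞} (hh : Measurable h) :
    Measurable fun x => ∫⁻ y, h (x, y) ∂b := hh.lintegral_prod_right'

lemma measV (a : Measure S) [SFinite a] {h : S × S → ℝ≥0∞} (hh : Measurable h) :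
    Measurable fun y => ∫⁻ x, h (x, y) ∂a := hh.lintegral_prod_left'

lemma meas_nrmH (a b : Measure S) [SFinite a] [SFinite b] {h : S × S → ℝ≥0∞}
    (hh : Measurable h) : Measurable (nrmH a b h) := by
  have := measU b hh
  have := measV a hh
  unfold nrmH
  fun_prop

lemma meas_cplH (a b : Measure S) [SFinite a] [SFinite b] {h : S × S → ℝ≥0∞}
    (hh : Measurable h) : Measurable (cplH a b h) := by
  have := measU b hh
  have := measV a hh
  unfold cplH
  fun_prop

lemma nrmH_U (a b : Measure S) [SFinite a] [SFinite b] {h : S × S → ℝ≥0∞}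
    (hh : Measurable h) (x : S) : ∫⁻ y, nrmH a b h (x, y) ∂b ≤ 1 := by
  calc ∫⁻ y, nrmH a b h (x, y) ∂b ≤ ∫⁻ y, h (x, y) * (max 1 (∫⁻ y, h (x, y) ∂b))⁻¹ ∂b := by
        refine lintegral_mono fun y => ?_
        rw [← div_eq_mul_inv]
        unfold nrmH
        refine ENNReal.div_le_div_left ?_ _
        exact le_mul_of_one_le_right' (le_max_left _ _)
    _ = (∫⁻ y, h (x, y) ∂b) / (max 1 (∫⁻ y, h (x, y) ∂b)) := by
        rw [lintegral_mul_const _ (by fun_prop), div_eq_mul_inv]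
    _ ≤ 1 := ENNReal.div_le_of_le_mul (by rw [one_mul]; exact le_max_right _ _)

lemma nrmH_V (a b : Measure S) [SFinite a] [SFinite b] {h : S × S → ℝ≥0∞}
    (hh : Measurable h) (y : S) : ∫⁻ x, nrmH a b h (x, y) ∂a ≤ 1 := by
  calc ∫⁻ x, nrmH a b h (x, y) ∂a ≤ ∫⁻ x, h (x, y) * (max 1 (∫⁻ x, h (x, y) ∂a))⁻¹ ∂a := by
        refine lintegral_mono fun y => ?_
        rw [← div_eq_mul_inv]
        unfold nrmH
        refine ENNReal.div_le_div_left ?_ _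
        exact le_mul_of_one_le_left' (le_max_left _ _)
    _ = (∫⁻ x, h (x, y) ∂a) / (max 1 (∫⁻ x, h (x, y) ∂a)) := by
        rw [lintegral_mul_const _ (by fun_prop), div_eq_mul_inv]
    _ ≤ 1 := ENNReal.div_le_of_le_mul (by rw [one_mul]; exact le_max_right _ _)

variable (a b : Measure S) [IsProbabilityMeasure a] [IsProbabilityMeasure b]

lemma resid_eq {h : S × S → ℝ≥0∞} (hh : Measurable h)
    (hU : ∀ x, ∫⁻ y, h (x, y) ∂b ≤ 1) (hV : ∀ y, ∫⁻ x, h (x, y) ∂a ≤ 1) :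
    ∫⁻ y, (1 - ∫⁻ x, h (x, y) ∂a) ∂b = ∫⁻ x, (1 - ∫⁻ y, h (x, y) ∂b) ∂a := by
  have f1 : ∫⁻ y, ∫⁻ x, h (x, y) ∂a ∂b ≠ ∞ := by
    refine ne_top_of_le_ne_top one_ne_top ((lintegral_mono hV).trans ?_); simp
  have f2 : ∫⁻ x, ∫⁻ y, h (x, y) ∂b ∂a ≠ ∞ := by
    refine ne_top_of_le_ne_top one_ne_top ((lintegral_mono hU).trans ?_); simp
  rw [lintegral_sub (measV a hh) f1 (ae_of_all _ hV), lintegral_sub (measU b hh) f2 (ae_of_all _ hU),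
    lintegral_lintegral_swap]
  · simp
  · exact (hh.comp measurable_swap).aemeasurable

lemma resid_le {h : S × S → ℝ≥0∞} : ∫⁻ x, (1 - ∫⁻ y, h (x, y) ∂b) ∂a ≤ 1 := by
  calc _ ≤ ∫⁻ x, 1 ∂a := lintegral_mono fun x => tsub_le_self
    _ = 1 := by simp

lemma cplH_fst {h : S × S → ℝ≥0∞} (hh : Measurable h)
    (hU : ∀ x, ∫⁻ y, h (x, y) ∂b ≤ 1) (hV : ∀ y, ∫⁻ x, h (x, y) ∂a ≤ 1) :
    ∀ᵐ x ∂a, ∫⁻ y, cplH a b h (x, y) ∂b = 1 := by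
  have e : ∀ x, ∫⁻ y, cplH a b h (x, y) ∂b = (∫⁻ y, h (x, y) ∂b) + (1 - ∫⁻ y, h (x, y) ∂b) *
      ((∫⁻ x, (1 - ∫⁻ y, h (x, y) ∂b) ∂a) * (∫⁻ x, (1 - ∫⁻ y, h (x, y) ∂b) ∂a)⁻¹) := by
    intro x
    have := measV a hh
    simp only [cplH]
    rw [lintegral_add_left (by fun_prop), lintegral_mul_const _ (by fun_prop),
      lintegral_const_mul _ (by fun_prop), resid_eq a b hh hU hV, mul_assoc]
  by_cases hr : ∫⁻ x, (1 - ∫⁻ y, h (x, y) ∂b) ∂a = 0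
  · have := measU b hh
    have h0 := (lintegral_eq_zero_iff (by fun_prop)).1 hr
    filter_upwards [h0] with x hx
    have hx' : 1 - ∫⁻ y, h (x, y) ∂b = 0 := hx
    rw [e, hx', zero_mul, add_zero]
    exact le_antisymm (hU x) (tsub_eq_zero_iff_le.1 hx')
  · refine ae_of_all _ fun x => ?_
    rw [e, ENNReal.mul_inv_cancel hr (ne_top_of_le_ne_top one_ne_top (resid_le a b)), mul_one]
    exact add_tsub_cancel_of_le (hU x)

lemma cplH_snd {h : S × S → ℝ≥0∞} (hh : Measurable h)
    (hU : ∀ x, ∫⁻ y, h (x, y) ∂b ≤ 1) (hV : ∀ y, ∫⁻ x, h (x, y) ∂a ≤ 1) :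
    ∀ᵐ y ∂b, ∫⁻ x, cplH a b h (x, y) ∂a = 1 := by
  have := cplH_fst b a (h := h ∘ Prod.swap) (hh.comp measurable_swap) hV hU
  filter_upwards [this] with y hy
  rw [← hy]
  refine lintegral_congr fun x => ?_
  simp only [cplH, Function.comp_apply, Prod.swap_prod_mk, resid_eq a b hh hU hV]
  ring

lemma cplH_mem {h : S × S → ℝ≥0∞} (hh : Measurable h)
    (hU : ∀ x, ∫⁻ y, h (x, y) ∂b ≤ 1) (hV : ∀ y, ∫⁻ x, h (x, y) ∂a ≤ 1) :
    (a.prod b).withDensity (cplH a b h) ∈ Cpl a b := by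
  have hm := meas_cplH a b hh
  constructor
  · refine Measure.ext fun s hs => ?_
    rw [Measure.map_apply measurable_fst hs, withDensity_apply _ (measurable_fst hs),
      ← lintegral_indicator (measurable_fst hs), lintegral_prod _ (by
        exact (hm.indicator (measurable_fst hs)).aemeasurable)]
    have : ∀ᵐ x ∂a, ∫⁻ y, (Prod.fst ⁻¹' s).indicator (cplH a b h) (x, y) ∂b
        = s.indicator 1 x := by
      filter_upwards [cplH_fst a b hh hU hV] with x hx
      by_cases hxs : x ∈ s <;> simp [Set.indicator, hxs, hx]
    rw [lintegral_congr_ae this, lintegral_indicator_one hs]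
  · refine Measure.ext fun s hs => ?_
    rw [Measure.map_apply measurable_snd hs, withDensity_apply _ (measurable_snd hs),
      ← lintegral_indicator (measurable_snd hs), lintegral_prod_symm _ (by
        exact (hm.indicator (measurable_snd hs)).aemeasurable)]
    have : ∀ᵐ y ∂b, ∫⁻ x, (Prod.snd ⁻¹' s).indicator (cplH a b h) (x, y) ∂a
        = s.indicator 1 y := by
      filter_upwards [cplH_snd a b hh hU hV] with x hx
      by_cases hxs : x ∈ s <;> simp [Set.indicator, hxs, hx]
    rw [lintegral_congr_ae this, lintegral_indicator_one hs]

end Cpl1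

section Cost1

variable {S : Type*} [MeasurableSpace S]
variable (a b : Measure S) [IsProbabilityMeasure a] [IsProbabilityMeasure b]

lemma cplH_cost {h : S × S → ℝ≥0∞} (hh : Measurable h)
    (hU : ∀ x, ∫⁻ y, h (x, y) ∂b ≤ 1) (hV : ∀ y, ∫⁻ x, h (x, y) ∂a ≤ 1)
    {C : S × S → ℝ≥0∞} (hC : Measurable C) {φ ψ : S → ℝ≥0∞} (hφ : Measurable φ)
    (hψ : Measurable ψ) (hle : ∀ z, C z ≤ φ z.1 + ψ z.2) :
    ∫⁻ z, C z ∂((a.prod b).withDensity (cplH a b h)) ≤ ∫⁻ z, h z * C z ∂(a.prod b) +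
      (∫⁻ x, (1 - ∫⁻ y, h (x, y) ∂b) * φ x ∂a + ∫⁻ y, (1 - ∫⁻ x, h (x, y) ∂a) * ψ y ∂b) := by
  have mU := measU b hh
  have mV := measV a hh
  rw [lintegral_withDensity_eq_lintegral_mul _ (meas_cplH a b hh) hC]
  set r := ∫⁻ x, (1 - ∫⁻ y, h (x, y) ∂b) ∂a with hr
  have hr' : ∫⁻ y, (1 - ∫⁻ x, h (x, y) ∂a) ∂b = r := resid_eq a b hh hU hV
  calc ∫⁻ z, (cplH a b h * C) z ∂(a.prod b)
      ≤ ∫⁻ z, (h z * C z + (((1 - ∫⁻ y, h (z.1, y) ∂b) * φ z.1) * (1 - ∫⁻ x, h (x, z.2) ∂a) * r⁻¹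
        + (1 - ∫⁻ y, h (z.1, y) ∂b) * ((1 - ∫⁻ x, h (x, z.2) ∂a) * ψ z.2) * r⁻¹)) ∂(a.prod b) := by
        refine lintegral_mono fun z => ?_
        simp only [Pi.mul_apply, cplH, ← hr]
        rw [add_mul]
        gcongr
        calc _ ≤ (1 - ∫⁻ y, h (z.1, y) ∂b) * (1 - ∫⁻ x, h (x, z.2) ∂a) * r⁻¹ *
              (φ z.1 + ψ z.2) := by gcongr; exact hle z
          _ = _ := by ring
    _ = ∫⁻ z, h z * C z ∂(a.prod b) +
        ((∫⁻ x, (1 - ∫⁻ y, h (x, y) ∂b) * φ x ∂a) * r * r⁻¹ +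
          r * (∫⁻ y, (1 - ∫⁻ x, h (x, y) ∂a) * ψ y ∂b) * r⁻¹) := by
        rw [lintegral_add_left (by fun_prop), lintegral_add_left (by fun_prop),
          lintegral_mul_const _ (by fun_prop), lintegral_mul_const _ (by fun_prop),
          lintegral_prod_mul (f := fun x => (1 - ∫⁻ y, h (x, y) ∂b) * φ x)
            (g := fun y => (1 - ∫⁻ x, h (x, y) ∂a)) (by fun_prop) (by fun_prop),
          lintegral_prod_mul (f := fun x => (1 - ∫⁻ y, h (x, y) ∂b))
            (g := fun y => (1 - ∫⁻ x, h (x, y) ∂a) * ψ y) (by fun_prop) (by fun_prop), hr']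
    _ ≤ _ := by
        have h1 : r * r⁻¹ ≤ 1 := ENNReal.mul_inv_le_one r
        gcongr
        · rw [mul_assoc]; exact mul_le_of_le_one_right' h1
        · rw [mul_comm r, mul_assoc]; exact mul_le_of_le_one_right' h1

/-- The countable family of step densities. -/
def hfam (c : S → ℕ) (n : ℕ) (q : ℕ × ℕ →₀ ℕ) : S × S → ℝ≥0∞ :=
  fun z => (q (c z.1, c z.2) : ℝ≥0∞) / (n : ℝ≥0∞)

lemma meas_hfam {c : S → ℕ} (hc : Measurable c) (n : ℕ) (q : ℕ × ℕ →₀ ℕ) :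
    Measurable (hfam c n q) := by
  have : Measurable fun w : ℕ × ℕ => (q w : ℝ≥0∞) / (n : ℝ≥0∞) := measurable_of_countable _
  exact this.comp ((hc.comp measurable_fst).prodMk (hc.comp measurable_snd))

lemma resid_tendsto (μ : Measure S) (ν : Measure S) [IsProbabilityMeasure μ]
    [IsProbabilityMeasure ν]
    (f : ℕ → S × S → ℝ≥0∞) (hf : ∀ n, Measurable (f n)) (F : S × S → ℝ≥0∞)
    (hle : ∀ n z, f n z ≤ F z) (hlim : ∀ z, Tendsto (fun n => f n z) atTop (𝓝 (F z)))
    (h1 : ∀ x, ∫⁻ y, F (x, y) ∂ν ≤ 1) (h2 : ∀ᵐ x ∂μ, ∫⁻ y, F (x, y) ∂ν = 1)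
    (φ : S → ℝ≥0∞) (hφ : Measurable φ) (hfin : ∫⁻ x, φ x ∂μ ≠ ∞) :
    Tendsto (fun n => ∫⁻ x, (1 - ∫⁻ y, f n (x, y) ∂ν) * φ x ∂μ) atTop (𝓝 0) := by
  have hz : ∫⁻ x : S, (0 : ℝ≥0∞) ∂μ = 0 := by simp
  rw [← hz]
  refine tendsto_lintegral_of_dominated_convergence φ (fun n => ?_) (fun n => ?_) hfin ?_
  · have := measU ν (hf n)
    fun_prop
  · exact ae_of_all _ fun x => mul_le_of_le_one_left' tsub_le_self
  · filter_upwards [h2, ae_lt_top hφ hfin] with x hx hxfin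
    have t1 : Tendsto (fun n => ∫⁻ y, f n (x, y) ∂ν) atTop (𝓝 1) := by
      rw [← hx]
      refine tendsto_lintegral_of_dominated_convergence (fun y => F (x, y)) (fun n => ?_)
        (fun n => ae_of_all _ fun y => hle n _) (ne_top_of_le_ne_top one_ne_top (h1 x))
        (ae_of_all _ fun y => hlim _)
      have := hf n
      fun_prop
    have t2 : Tendsto (fun n => 1 - ∫⁻ y, f n (x, y) ∂ν) atTop (𝓝 (1 - 1)) :=
      ENNReal.Tendsto.sub tendsto_const_nhds t1 (Or.inl one_ne_top)
    have t3 := ENNReal.Tendsto.mul_const (b := φ x) t2 (Or.inr hxfin.ne)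
    simpa using t3

lemma approx_k (π : Measure (S × S)) (hπ : π ∈ Cpl a b) (c : S → ℕ) (hc : Measurable c)
    {C : S × S → ℝ≥0∞} (hC : Measurable C) {φ ψ : S → ℝ≥0∞} (hφ : Measurable φ)
    (hψ : Measurable ψ) (hle : ∀ z, C z ≤ φ z.1 + ψ z.2)
    (hφi : ∫⁻ x, φ x ∂a ≠ ∞) (hψi : ∫⁻ x, ψ x ∂b ≠ ∞)
    (D : ℕ × ℕ → ℝ≥0∞) (hD : ∀ z : S × S, C z ≤ D (c z.1, c z.2)) (ε : ℝ≥0∞) (hε : ε ≠ 0) :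
    ∃ n q, ∫⁻ z, C z ∂((a.prod b).withDensity (cplH a b (nrmH a b (hfam c n q)))) ≤
      ∫⁻ z, D (c z.1, c z.2) ∂π + ε := by
  obtain ⟨hπ1, hπ2⟩ := hπ
  have hπp : IsProbabilityMeasure π := by
    constructor
    have : π.map Prod.fst Set.univ = 1 := by rw [hπ1]; simp
    rwa [Measure.map_apply measurable_fst MeasurableSet.univ] at this
  set cc : S × S → ℕ × ℕ := Prod.map c c with hcc
  have mcc : Measurable cc := hc.prodMap hc
  set α := a.map c with hα
  set β := b.map c with hβ
  set w := π.map cc with hw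
  have pα : IsProbabilityMeasure α := Measure.isProbabilityMeasure_map hc.aemeasurable
  have pβ : IsProbabilityMeasure β := Measure.isProbabilityMeasure_map hc.aemeasurable
  have pw : IsProbabilityMeasure w := Measure.isProbabilityMeasure_map mcc.aemeasurable
  have w1 : w.map Prod.fst = α := by
    rw [hw, Measure.map_map measurable_fst mcc, hα, ← hπ1, Measure.map_map hc measurable_fst]
    rfl
  have w2 : w.map Prod.snd = β := by
    rw [hw, Measure.map_map measurable_snd mcc, hβ, ← hπ2, Measure.map_map hc measurable_snd]
    rfl
  have w1' : (w.map Prod.swap).map Prod.fst = β := by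
    rw [Measure.map_map measurable_fst measurable_swap, ← w2]; rfl
  have w2' : (w.map Prod.swap).map Prod.snd = α := by
    rw [Measure.map_map measurable_snd measurable_swap, ← w1]; rfl
  have wsw : ∀ i j, w.map Prod.swap {(j, i)} = w {(i, j)} := by
    intro i j
    rw [Measure.map_apply measurable_swap (measurableSet_singleton _)]
    congr 1; ext ⟨x, y⟩; simp [and_comm]
  set F : ℕ × ℕ → ℝ≥0∞ := fun z => w {z} / (α {z.1} * β {z.2}) with hF
  have Fl1 : ∀ z, w {z} ≤ α {z.1} := fun z => by
    rw [← w1, Measure.map_apply measurable_fst (measurableSet_singleton _)]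
    exact measure_mono (by simp)
  have Fl2 : ∀ z, w {z} ≤ β {z.2} := fun z => by
    rw [← w2, Measure.map_apply measurable_snd (measurableSet_singleton _)]
    exact measure_mono (by simp)
  have Ffin : ∀ z, F z ≠ ∞ := by
    intro z
    by_cases h0 : w {z} = 0
    · simp [hF, h0]
    · refine ENNReal.div_ne_top (measure_ne_top _ _) (mul_ne_zero ?_ ?_)
      · exact fun h => h0 (nonpos_iff_eq_zero.1 (h ▸ Fl1 z))
      · exact fun h => h0 (nonpos_iff_eq_zero.1 (h ▸ Fl2 z))
  have mF : Measurable F := measurable_of_countable _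
  -- the approximants
  let q : ℕ → (ℕ × ℕ →₀ ℕ) := fun n =>
    Finsupp.onFinset (Finset.range n ×ˢ Finset.range n)
      (fun z => if z.1 < n ∧ z.2 < n then ⌊(n : ℝ) * (F z).toReal⌋₊ else 0) (by
        intro z hz
        by_contra hcon
        apply hz
        rw [if_neg]
        simpa using hcon)
  have qle : ∀ n z, ((q n z : ℕ) : ℝ≥0∞) / (n : ℝ≥0∞) ≤ F z := by
    intro n z
    simp only [q, Finsupp.onFinset_apply]
    split_ifs
    · exact (floor_approx _ (Ffin z)).1 n
    · simp
  have qlim : ∀ z, Tendsto (fun n => ((q n z : ℕ) : ℝ≥0∞) / (n : ℝ≥0∞)) atTop (𝓝 (F z)) := by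
    intro z
    refine (floor_approx _ (Ffin z)).2.congr' ?_
    filter_upwards [eventually_gt_atTop z.1, eventually_gt_atTop z.2] with n h1 h2
    simp only [q, Finsupp.onFinset_apply]
    rw [if_pos ⟨h1, h2⟩]
  have mf : ∀ n, Measurable (hfam c n (q n)) := fun n => meas_hfam hc n _
  have fle : ∀ n z, hfam c n (q n) z ≤ F (cc z) := fun n z => qle n _
  have flim : ∀ z, Tendsto (fun n => hfam c n (q n) z) atTop (𝓝 (F (cc z))) := fun z => qlim _
  have U1 : ∀ x, ∫⁻ y, F (cc (x, y)) ∂b = ∫⁻ j, w {(c x, j)} / (α {c x} * β {j}) ∂β := by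
    intro x
    rw [hβ, lintegral_map (measurable_of_countable _) hc]
    rfl
  have V1 : ∀ y, ∫⁻ x, F (cc (x, y)) ∂a =
      ∫⁻ i, (w.map Prod.swap) {(c y, i)} / (β {c y} * α {i}) ∂α := by
    intro y
    simp_rw [wsw]
    rw [hα, lintegral_map (measurable_of_countable _) hc]
    refine lintegral_congr fun x => ?_
    rw [mul_comm]; rfl
  have Ule : ∀ x, ∫⁻ y, F (cc (x, y)) ∂b ≤ 1 := fun x => by
    rw [U1]; exact (disc_row α β w w1 w2 _).1
  have Vle : ∀ y, ∫⁻ x, F (cc (x, y)) ∂a ≤ 1 := fun x => by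
    rw [V1]; exact (disc_row β α _ w1' w2' _).1
  have aenz : ∀ (m : Measure S), ∀ᵐ x ∂m, m.map c {c x} ≠ 0 := by
    intro m
    have : ∀ᵐ i ∂(m.map c), m.map c {i} ≠ 0 := by
      rw [ae_iff, measure_null_iff_singleton (Set.to_countable _)]
      intro i hi; simpa using hi
    exact ae_of_ae_map hc.aemeasurable this
  have Ueq : ∀ᵐ x ∂a, ∫⁻ y, F (cc (x, y)) ∂b = 1 := by
    filter_upwards [aenz a] with x hx
    rw [U1]; exact (disc_row α β w w1 w2 _).2 hx
  have Veq : ∀ᵐ y ∂b, ∫⁻ x, F (cc (x, y)) ∂a = 1 := by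
    filter_upwards [aenz b] with x hx
    rw [V1]; exact (disc_row β α _ w1' w2' _).2 hx
  have T1 := resid_tendsto a b (fun n => hfam c n (q n)) mf (fun z => F (cc z)) fle flim Ule Ueq
    φ hφ hφi
  have T2 := resid_tendsto b a (fun n z => hfam c n (q n) z.swap)
    (fun n => (mf n).comp measurable_swap) (fun z => F (cc z.swap))
    (fun n z => fle n _) (fun z => flim _) Vle Veq ψ hψ hψi
  have T3 := T1.add T2
  rw [add_zero] at T3
  obtain ⟨n, hn⟩ := (T3.eventually (ge_mem_nhds (pos_iff_ne_zero.2 hε))).exists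
  refine ⟨n, q n, ?_⟩
  have hU' : ∀ x, ∫⁻ y, hfam c n (q n) (x, y) ∂b ≤ 1 := fun x =>
    (lintegral_mono fun y => fle n _).trans (Ule x)
  have hV' : ∀ y, ∫⁻ x, hfam c n (q n) (x, y) ∂a ≤ 1 := fun y =>
    (lintegral_mono fun x => fle n _).trans (Vle y)
  rw [nrmH_eq a b _ hU' hV']
  refine (cplH_cost a b (mf n) hU' hV' hC hφ hψ hle).trans (add_le_add ?_ hn)
  calc ∫⁻ z, hfam c n (q n) z * C z ∂(a.prod b)
      ≤ ∫⁻ z, F (cc z) * D (cc z) ∂(a.prod b) :=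
        lintegral_mono fun z => mul_le_mul' (fle n z) (hD z)
    _ = ∫⁻ z, F z * D z ∂(α.prod β) := by
        rw [hα, hβ, Measure.map_prod_map a b hc hc, lintegral_map (measurable_of_countable _) mcc]
    _ ≤ ∫⁻ z, D z ∂w := disc_cost α β w D
    _ = _ := by rw [hw, lintegral_map (measurable_of_countable _) mcc]; rfl

end Cost1

section Metric1

variable {S : Type*} [MetricSpace S] [SecondCountableTopology S] [MeasurableSpace S] [BorelSpace S]

lemma exists_cells : ∃ c : ℕ → S → ℕ, (∀ k, Measurable (c k)) ∧
    ∀ k x y, c k x = c k y → edist x y ≤ ENNReal.ofReal (1 / ((k : ℝ) + 1)) := by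
  have : ∀ k : ℕ, ∃ c : S → ℕ, Measurable c ∧
      ∀ x y, c x = c y → edist x y ≤ ENNReal.ofReal (1 / ((k : ℝ) + 1)) := by
    intro k
    obtain ⟨As, hm, hb, hd, hU, hdis⟩ :=
      SeparableSpace.exists_measurable_partition_diam_le S (ε := 1 / ((k : ℝ) + 1)) (by positivity)
    have hx : ∀ x : S, ∃ n, x ∈ As n := fun x => by
      have : x ∈ ⋃ n, As n := by rw [hU]; trivial
      simpa using this
    choose c hc using hx
    have hcu : ∀ x n, x ∈ As n → c x = n := by
      intro x n hn
      by_contra hne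
      exact Set.disjoint_left.1 (hdis hne) (hc x) hn
    refine ⟨c, measurable_to_countable' fun n => ?_, fun x y hxy => ?_⟩
    · convert hm n using 1
      ext x
      simp only [Set.mem_preimage, Set.mem_singleton_iff]
      exact ⟨fun h => h ▸ hc x, hcu x n⟩
    · rw [edist_dist]
      refine ENNReal.ofReal_le_ofReal ?_
      exact (Metric.dist_le_diam_of_mem (hb (c x)) (hc x) (hxy ▸ hc y)).trans (hd _)
  choose c hc using this
  exact ⟨c, fun k => (hc k).1, fun k => (hc k).2⟩

lemma edist_rpow_le (p : ℝ) (hp : 1 ≤ p) (x y z : S) :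
    edist x z ^ p ≤ 2 ^ (p - 1) * (edist x y ^ p + edist y z ^ p) :=
  (ENNReal.rpow_le_rpow (edist_triangle x y z) (by linarith)).trans
    (ENNReal.rpow_add_le_mul_rpow_add_rpow _ _ hp)

lemma approx_metric (a b : Measure S) [IsProbabilityMeasure a] [IsProbabilityMeasure b]
    (p : ℝ) (hp : 1 ≤ p)
    (c : ℕ → S → ℕ) (hcm : ∀ k, Measurable (c k))
    (hc : ∀ k x y, c k x = c k y → edist x y ≤ ENNReal.ofReal (1 / ((k : ℝ) + 1)))
    (x₀ : S) (hb : ∫⁻ x, edist x₀ x ^ p ∂b ≠ ∞)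
    (π : Measure (S × S)) (hπ : π ∈ Cpl a b) (hfin : ∫⁻ z, edist z.1 z.2 ^ p ∂π ≠ ∞)
    (ε : ℝ≥0∞) (hε : ε ≠ 0) :
    ∃ k n q, ∫⁻ z, edist z.1 z.2 ^ p ∂((a.prod b).withDensity
        (cplH a b (nrmH a b (hfam (c k) n q)))) ≤ ∫⁻ z, edist z.1 z.2 ^ p ∂π + ε := by
  have hp0 : 0 < p := by linarith
  have hKtop : (2 : ℝ≥0∞) ^ (p - 1) ≠ ∞ := by
    simp [ENNReal.rpow_eq_top_iff]
  have hπp : IsProbabilityMeasure π := by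
    constructor
    have : π.map Prod.fst Set.univ = 1 := by rw [hπ.1]; simp
    rwa [Measure.map_apply measurable_fst MeasurableSet.univ] at this
  have ha : ∫⁻ x, edist x₀ x ^ p ∂a ≠ ∞ := by
    rw [← hπ.1, lintegral_map (by fun_prop) measurable_fst]
    rw [← hπ.2, lintegral_map (by fun_prop) measurable_snd] at hb
    refine ne_top_of_le_ne_top ?_ (lintegral_mono (g := fun z : S × S =>
      2 ^ (p - 1) * (edist x₀ z.2 ^ p + edist z.1 z.2 ^ p)) fun z => ?_)
    · rw [lintegral_const_mul _ (by fun_prop), lintegral_add_left (by fun_prop)]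
      exact ENNReal.mul_ne_top hKtop (ENNReal.add_ne_top.2 ⟨hb, hfin⟩)
    · have := edist_rpow_le p hp x₀ z.2 z.1
      rwa [edist_comm z.2 z.1] at this
  set L := ∫⁻ z, edist z.1 z.2 ^ p ∂π with hL
  have hε2 : ε / 2 ≠ 0 := by simp [hε]
  -- choose the mesh
  obtain ⟨k, hk⟩ : ∃ k : ℕ,
      (L ^ (1 / p) + 2 * ENNReal.ofReal (1 / ((k : ℝ) + 1))) ^ p ≤ L + ε / 2 := by
    have t0 : Tendsto (fun k : ℕ => ENNReal.ofReal (1 / ((k : ℝ) + 1))) atTop (𝓝 0) := by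
      have := (ENNReal.continuous_ofReal.tendsto 0).comp
        (tendsto_one_div_add_atTop_nhds_zero_nat (𝕜 := ℝ))
      simpa [Function.comp_def] using this
    have t1 : Tendsto (fun k : ℕ => 2 * ENNReal.ofReal (1 / ((k : ℝ) + 1))) atTop (𝓝 (2 * 0)) :=
      ENNReal.Tendsto.const_mul t0 (Or.inr (by simp))
    have t2 := ((tendsto_const_nhds (x := L ^ (1 / p))).add t1)
    have t3 := (ENNReal.continuous_rpow_const (y := p)).tendsto _ |>.comp t2
    have e : (L ^ (1 / p) + 2 * 0) ^ p = L := by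
      rw [mul_zero, add_zero, ← ENNReal.rpow_mul, one_div_mul_cancel hp0.ne', ENNReal.rpow_one]
    rw [e] at t3
    exact (t3.eventually (ge_mem_nhds (ENNReal.lt_add_right hfin hε2))).exists
  set δ := ENNReal.ofReal (1 / ((k : ℝ) + 1)) with hδ
  let D : ℕ × ℕ → ℝ≥0∞ := fun w =>
    ⨆ z : {z : S × S // (c k z.1, c k z.2) = w}, edist z.1.1 z.1.2 ^ p
  obtain ⟨n, q, hnq⟩ := approx_k a b π hπ (c k) (hcm k)
    (C := fun z => edist z.1 z.2 ^ p) (by fun_prop)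
    (φ := fun x => 2 ^ (p - 1) * edist x₀ x ^ p) (ψ := fun x => 2 ^ (p - 1) * edist x₀ x ^ p)
    (by fun_prop) (by fun_prop)
    (fun z => by
      have := edist_rpow_le p hp z.1 x₀ z.2
      rwa [edist_comm z.1 x₀, mul_add] at this)
    (by rw [lintegral_const_mul _ (by fun_prop)]; exact ENNReal.mul_ne_top hKtop ha)
    (by rw [lintegral_const_mul _ (by fun_prop)]; exact ENNReal.mul_ne_top hKtop hb)
    D (fun z => le_iSup (fun z' : {z' : S × S // (c k z'.1, c k z'.2) = (c k z.1, c k z.2)} =>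
      edist z'.1.1 z'.1.2 ^ p) ⟨z, rfl⟩) (ε / 2) hε2
  refine ⟨k, n, q, hnq.trans ?_⟩
  have hDle : ∫⁻ z, D (c k z.1, c k z.2) ∂π ≤ L + ε / 2 := by
    refine le_trans ?_ hk
    have mink := ENNReal.lintegral_Lp_add_le (μ := π) (p := p)
      (f := fun z : S × S => edist z.1 z.2) (g := fun _ => 2 * δ) (by fun_prop) (by fun_prop) hp
    have e2 : (∫⁻ _z : S × S, (2 * δ) ^ p ∂π) ^ (1 / p) = 2 * δ := by
      simp only [lintegral_const, measure_univ, mul_one]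
      rw [← ENNReal.rpow_mul, mul_one_div_cancel hp0.ne', ENNReal.rpow_one]
    rw [e2] at mink
    have mink2 := ENNReal.rpow_le_rpow mink hp0.le
    rw [← ENNReal.rpow_mul, one_div_mul_cancel hp0.ne', ENNReal.rpow_one] at mink2
    refine le_trans (lintegral_mono fun z => ?_) mink2
    refine iSup_le fun ⟨z', hz'⟩ => ?_
    refine ENNReal.rpow_le_rpow ?_ hp0.le
    have h1 : edist z'.1 z.1 ≤ δ := hc k _ _ (congrArg Prod.fst hz')
    have h2 : edist z.2 z'.2 ≤ δ := hc k _ _ (congrArg Prod.snd hz').symm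
    calc edist z'.1 z'.2 ≤ edist z'.1 z.1 + edist z.1 z.2 + edist z.2 z'.2 :=
          edist_triangle4 _ _ _ _
      _ ≤ δ + edist z.1 z.2 + δ := by gcongr
      _ = edist z.1 z.2 + 2 * δ := by ring
  calc _ ≤ (L + ε / 2) + ε / 2 := by gcongr
    _ = L + ε := by rw [add_assoc, ENNReal.add_halves]

variable {Ω : Type*} [MeasurableSpace Ω] (κ₁ κ₂ : Kernel Ω S) [IsMarkovKernel κ₁]
  [IsMarkovKernel κ₂]

lemma kerU {G : Ω → S × S → ℝ≥0∞} (hG : Measurable (Function.uncurry G)) :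
    Measurable fun q : Ω × S => ∫⁻ y, G q.1 (q.2, y) ∂(κ₂ q.1) := by
  have h : Measurable fun w : (Ω × S) × S => G w.1.1 (w.1.2, w.2) :=
    hG.comp (f := fun w : (Ω × S) × S => (w.1.1, (w.1.2, w.2))) (by fun_prop)
  exact Measurable.lintegral_kernel_prod_right' (κ := κ₂.comap Prod.fst measurable_fst) h

lemma kerV {G : Ω → S × S → ℝ≥0∞} (hG : Measurable (Function.uncurry G)) :
    Measurable fun q : Ω × S => ∫⁻ x, G q.1 (x, q.2) ∂(κ₁ q.1) := by
  have h : Measurable fun w : (Ω × S) × S => G w.1.1 (w.2, w.1.2) :=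
    hG.comp (f := fun w : (Ω × S) × S => (w.1.1, (w.2, w.1.2))) (by fun_prop)
  exact Measurable.lintegral_kernel_prod_right' (κ := κ₁.comap Prod.fst measurable_fst) h

lemma ker_nrmH {G : Ω → S × S → ℝ≥0∞} (hG : Measurable (Function.uncurry G)) :
    Measurable (Function.uncurry fun ω => nrmH (κ₁ ω) (κ₂ ω) (G ω)) := by
  have h1 := (kerU κ₂ hG).comp (f := fun w : Ω × (S × S) => (w.1, w.2.1)) (by fun_prop)
  have h2 := (kerV κ₁ hG).comp (f := fun w : Ω × (S × S) => (w.1, w.2.2)) (by fun_prop)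
  exact hG.div ((measurable_const.max h1).mul (measurable_const.max h2))

lemma ker_cplH {G : Ω → S × S → ℝ≥0∞} (hG : Measurable (Function.uncurry G)) :
    Measurable (Function.uncurry fun ω => cplH (κ₁ ω) (κ₂ ω) (G ω)) := by
  have h1 := (kerU κ₂ hG).comp (f := fun w : Ω × (S × S) => (w.1, w.2.1)) (by fun_prop)
  have h2 := (kerV κ₁ hG).comp (f := fun w : Ω × (S × S) => (w.1, w.2.2)) (by fun_prop)
  have h3 : Measurable fun ω => ∫⁻ x, (1 - ∫⁻ y, G ω (x, y) ∂(κ₂ ω)) ∂(κ₁ ω) :=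
    Measurable.lintegral_kernel_prod_right' (κ := κ₁)
      (f := fun q : Ω × S => 1 - ∫⁻ y, G q.1 (q.2, y) ∂(κ₂ q.1))
      (measurable_const.sub (kerU κ₂ hG))
  exact hG.add (((measurable_const.sub h1).mul (measurable_const.sub h2)).mul
    (h3.comp measurable_fst).inv)

lemma meas_T {h : S × S → ℝ≥0∞} (hh : Measurable h) :
    Measurable fun ω => ((κ₁ ω).prod (κ₂ ω)).withDensity
      (cplH (κ₁ ω) (κ₂ ω) (nrmH (κ₁ ω) (κ₂ ω) h)) := by
  have hm := ker_cplH κ₁ κ₂ (ker_nrmH κ₁ κ₂ (G := fun _ => h) (hh.comp measurable_snd))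
  have := (Kernel.withDensity (κ₁ ×ₖ κ₂)
    (fun ω => cplH (κ₁ ω) (κ₂ ω) (nrmH (κ₁ ω) (κ₂ ω) h))).measurable
  convert this using 2 with ω
  rw [Kernel.withDensity_apply _ hm, Kernel.prod_apply]

lemma sel_abs {Y : Type*} [MeasurableSpace Y] (T : ℕ → Ω → Measure Y) (mT : ∀ m, Measurable (T m))
    (cost : Y → ℝ≥0∞) (hcost : Measurable cost) (ε : ℝ≥0∞) (hε : ε ≠ 0) :
    ∃ Q : Kernel Ω Y, ∀ ω, ∃ m, Q ω = T m ω ∧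
      ∫⁻ z, cost z ∂(T m ω) ≤ (⨅ m, ∫⁻ z, cost z ∂(T m ω)) + ε := by
  classical
  have mC : ∀ m, Measurable (fun ω => ∫⁻ z, cost z ∂(T m ω)) := fun m =>
    (Measure.measurable_lintegral hcost).comp (mT m)
  have hex : ∀ ω, ∃ m, ∫⁻ z, cost z ∂(T m ω) ≤ (⨅ m, ∫⁻ z, cost z ∂(T m ω)) + ε := by
    intro ω
    by_cases htop : (⨅ m, ∫⁻ z, cost z ∂(T m ω)) = ∞
    · exact ⟨0, by simp [htop]⟩
    · obtain ⟨m, hm⟩ := iInf_lt_iff.1 (ENNReal.lt_add_right htop hε)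
      exact ⟨m, hm.le⟩
  have mN : Measurable (fun ω => Nat.find (hex ω)) := measurable_find hex fun m =>
    measurableSet_le (mC m) ((Measurable.iInf mC).add_const _)
  have mT' : Measurable fun w : ℕ × Ω => T w.1 w.2 :=
      measurable_from_prod_countable_right fun m => mT m
  exact ⟨⟨fun ω => T (Nat.find (hex ω)) ω, mT'.comp (mN.prodMk measurable_id)⟩,
    fun ω => ⟨Nat.find (hex ω), rfl, Nat.find_spec (hex ω)⟩⟩

theorem exists_sel (p : ℝ) (hp : 1 ≤ p) (ε : ℝ≥0∞) (hε : ε ≠ 0) :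
    ∃ Q : Kernel Ω (S × S), (∀ ω, Q ω ∈ Cpl (κ₁ ω) (κ₂ ω)) ∧
      ∀ ω, (∃ x₀ : S, ∫⁻ x, edist x₀ x ^ p ∂(κ₂ ω) ≠ ∞) →
        ∫⁻ z, edist z.1 z.2 ^ p ∂(Q ω) ≤ Wp p edist (κ₁ ω) (κ₂ ω) ^ p + ε := by
  have hp0 : 0 < p := by linarith
  obtain ⟨c, hcm, hc⟩ := exists_cells (S := S)
  obtain ⟨e, he⟩ := exists_surjective_nat (ℕ × ℕ × (ℕ × ℕ →₀ ℕ))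
  have mh : ∀ m, Measurable (hfam (c (e m).1) (e m).2.1 (e m).2.2) :=
    fun m => meas_hfam (hcm _) _ _
  obtain ⟨Q, hQ⟩ := sel_abs (fun m ω => ((κ₁ ω).prod (κ₂ ω)).withDensity
      (cplH (κ₁ ω) (κ₂ ω) (nrmH (κ₁ ω) (κ₂ ω) (hfam (c (e m).1) (e m).2.1 (e m).2.2))))
    (fun m => meas_T κ₁ κ₂ (mh m)) (fun z : S × S => edist z.1 z.2 ^ p) (by fun_prop) ε hε
  refine ⟨Q, fun ω => ?_, fun ω ⟨x₀, hx₀⟩ => ?_⟩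
  · obtain ⟨m, hm, -⟩ := hQ ω
    rw [hm]
    exact cplH_mem _ _ (meas_nrmH _ _ (mh _)) (nrmH_U _ _ (mh _)) (nrmH_V _ _ (mh _))
  · obtain ⟨m, hm, hle⟩ := hQ ω
    rw [hm]
    refine hle.trans (add_le_add ?_ le_rfl)
    set M := ⨅ m, ∫⁻ z, edist z.1 z.2 ^ p ∂(((κ₁ ω).prod (κ₂ ω)).withDensity
      (cplH (κ₁ ω) (κ₂ ω) (nrmH (κ₁ ω) (κ₂ ω) (hfam (c (e m).1) (e m).2.1 (e m).2.2)))) with hM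
    have key : ∀ π ∈ Cpl (κ₁ ω) (κ₂ ω), M ≤ ∫⁻ z, edist z.1 z.2 ^ p ∂π := by
      intro π hπ
      by_cases hfin : ∫⁻ z, edist z.1 z.2 ^ p ∂π = ∞
      · rw [hfin]; exact le_top
      refine ENNReal.le_of_forall_pos_le_add fun ε' hε' _ => ?_
      obtain ⟨k, n, q, hq⟩ := approx_metric (κ₁ ω) (κ₂ ω) p hp c hcm hc x₀ hx₀ π hπ hfin ε'
        (by exact_mod_cast hε'.ne')
      obtain ⟨m, hm⟩ := he (k, n, q)
      refine (iInf_le _ m).trans ?_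
      rw [hm]
      exact hq
    have : M ^ (1 / p) ≤ Wp p edist (κ₁ ω) (κ₂ ω) :=
      le_iInf₂ fun π hπ => ENNReal.rpow_le_rpow (key π hπ) (by positivity)
    have h2 := ENNReal.rpow_le_rpow this hp0.le
    rwa [← ENNReal.rpow_mul, one_div_mul_cancel hp0.ne', ENNReal.rpow_one] at h2

end Metric1

section Final

variable {A B : Type*} [MeasurableSpace A] [MeasurableSpace B] [Nonempty B]

open Classical in
/-- A measurable retraction of measures onto probability measures. -/
def fixP (m : Measure B) : Measure B :=
  if m Set.univ = 1 then m else Measure.dirac (Classical.arbitrary B)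

lemma measurable_fixP : Measurable (fixP (B := B)) := by
  classical
  exact Measurable.ite (Measure.measurable_coe MeasurableSet.univ (measurableSet_singleton 1))
    measurable_id measurable_const

lemma fixP_prob (m : Measure B) : IsProbabilityMeasure (fixP m) := by
  unfold fixP
  split_ifs with h
  · exact ⟨h⟩
  · infer_instance

lemma fixP_eq (m : Measure B) (h : IsProbabilityMeasure m) : fixP m = m := by
  unfold fixP
  rw [if_pos h.measure_univ]

/-- The evaluation kernel. -/
def evK (A B : Type*) [MeasurableSpace A] [MeasurableSpace B] [Nonempty B] :
    Kernel (A × Measure B) B :=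
  ⟨fun z => fixP z.2, measurable_fixP.comp measurable_snd⟩

lemma evK_apply (z : A × Measure B) : evK A B z = fixP z.2 := rfl

instance evK_markov : IsMarkovKernel (evK A B) := ⟨fun z => fixP_prob z.2⟩

lemma lintegral_und (μ : Measure (A × Measure B)) [IsProbabilityMeasure μ]
    (hμ : ∀ᵐ z ∂μ, IsProbabilityMeasure z.2) {f : A × B → ℝ≥0∞} (hf : Measurable f) :
    ∫⁻ w, f w ∂(und μ) = ∫⁻ z, ∫⁻ x, f (z.1, x) ∂(evK A B z) ∂μ := by
  have hae : (fun z : A × Measure B => (Measure.dirac z.1).prod z.2) =ᵐ[μ]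
      ((Kernel.deterministic Prod.fst measurable_fst) ×ₖ (evK A B)) := by
    filter_upwards [hμ] with z hz
    rw [Kernel.prod_apply, Kernel.deterministic_apply, evK_apply, fixP_eq _ hz]
  unfold und
  rw [Measure.lintegral_bind ⟨_, Kernel.measurable _, hae⟩ hf.aemeasurable]
  refine lintegral_congr_ae ?_
  filter_upwards [hae] with z hz
  rw [hz, Kernel.prod_apply, Kernel.deterministic_apply, Measure.dirac_prod,
    lintegral_map hf (by fun_prop)]

end Final

section Main

variable {X1 X2 : Type} [MetricSpace X1] [CompleteSpace X1] [SecondCountableTopology X1]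
    [MeasurableSpace X1] [BorelSpace X1] [Nonempty X1]
    [MetricSpace X2] [CompleteSpace X2] [SecondCountableTopology X2]
    [MeasurableSpace X2] [BorelSpace X2] [Nonempty X2]

lemma main_eps (p : ℝ) (hp : 1 ≤ p) (μ ν : Measure (X1 × Measure X2))
    [IsProbabilityMeasure μ] [IsProbabilityMeasure ν]
    (hμ : ∀ᵐ z ∂μ, MemPp p edist z.2) (hν : ∀ᵐ z ∂ν, MemPp p edist z.2)
    (γ : Measure ((X1 × Measure X2) × (X1 × Measure X2))) (hγ : γ ∈ Cpl μ ν)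
    (η : (X1 × Measure X2) × (X1 × Measure X2) → Measure X2) (hη : IsCondBar γ η)
    (ε : ℝ≥0∞) (hε : ε ≠ 0) :
    ∃ π ∈ Cpl (und μ) (und ν), ∫⁻ z, prodDist p edist edist z.1 z.2 ^ p ∂π ≤
      ∫⁻ z, (edist z.1.1 z.2.1 ^ p + Wp p edist (η z) z.2.2 ^ p) ∂γ + ε := by
  have hp0 : 0 < p := by linarith
  obtain ⟨hγ1, hγ2⟩ := hγ
  obtain ⟨⟨g, hg, hηg⟩, hηp, hbar⟩ := hη
  have hγp : IsProbabilityMeasure γ := by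
    constructor
    have : γ.map Prod.fst Set.univ = 1 := by rw [hγ1]; simp
    rwa [Measure.map_apply measurable_fst MeasurableSet.univ] at this
  let κ : Kernel (X1 × Measure X2) X2 := ⟨g, hg⟩
  have hκ : ∀ w, κ w = g w := fun w => rfl
  have hκm : IsMarkovKernel κ := ⟨fun w => by
    have := hηp (w, w)
    rwa [hηg] at this⟩
  set K := evK X1 X2 with hK
  obtain ⟨Q, hQ, hQc⟩ := exists_sel κ K p hp ε hε
  have hQm : IsMarkovKernel Q := ⟨fun w => by
    constructor
    have : (Q w).map Prod.fst Set.univ = 1 := by rw [(hQ w).1]; simp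
    rwa [Measure.map_apply measurable_fst MeasurableSet.univ] at this⟩
  have hQfst : Q.fst = κ := by
    ext1 w
    rw [Kernel.fst_apply]
    exact (hQ w).1
  have hdis : κ ⊗ₖ Q.condKernel = Q := by
    have := Kernel.disintegrate Q Q.condKernel
    rwa [hQfst] at this
  -- almost sure facts under `γ`
  have hγμ : ∀ᵐ z ∂γ, IsProbabilityMeasure z.1.2 := by
    have : ∀ᵐ z ∂(γ.map Prod.fst), MemPp p edist z.2 := by rw [hγ1]; exact hμ
    filter_upwards [ae_of_ae_map measurable_fst.aemeasurable this] with z hz using hz.1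
  have hγν : ∀ᵐ z ∂γ, MemPp p edist z.2.2 := by
    have : ∀ᵐ z ∂(γ.map Prod.snd), MemPp p edist z.2 := by rw [hγ2]; exact hν
    exact ae_of_ae_map measurable_snd.aemeasurable this
  let Λ0 := γ ⊗ₘ (K.comap Prod.fst measurable_fst)
  have mproj : Measurable fun w : ((X1 × Measure X2) × (X1 × Measure X2)) × X2 =>
    (w.1.2, w.2) := by fun_prop
  have E1 : Λ0.map (fun w => (w.1.2, w.2)) = ν ⊗ₘ κ := by
    refine Measure.ext_prod fun {s t} hs ht => ?_
    rw [Measure.map_apply mproj (hs.prod ht)]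
    have e0 : (fun w : ((X1 × Measure X2) × (X1 × Measure X2)) × X2 => (w.1.2, w.2)) ⁻¹' (s ×ˢ t)
        = {z : (X1 × Measure X2) × (X1 × Measure X2) | z.2 ∈ s} ×ˢ t := by
      ext w; simp
    have hs' : MeasurableSet {z : (X1 × Measure X2) × (X1 × Measure X2) | z.2 ∈ s} :=
      measurable_snd hs
    rw [e0]
    change (γ ⊗ₘ (K.comap Prod.fst measurable_fst)) _ = _
    rw [Measure.compProd_apply_prod hs' ht, Measure.compProd_apply_prod hs ht]
    have e1 : ∫⁻ z in {z | z.2 ∈ s}, ((K.comap Prod.fst measurable_fst : Kernel ((X1 × Measure X2) × (X1 × Measure X2)) X2)) z t ∂γ =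
        ∫⁻ z in {z | z.2 ∈ s}, z.1.2 t ∂γ := by
      refine lintegral_congr_ae ?_
      filter_upwards [ae_restrict_of_ae hγμ] with z hz
      rw [Kernel.comap_apply, hK, evK_apply, fixP_eq _ hz]
    rw [e1, ← hbar s hs t ht, ← hγ2, setLIntegral_map hs (Kernel.measurable_coe _ ht)
      measurable_snd]
    refine lintegral_congr fun z => ?_
    rw [hηg]; rfl
  let Λ := Λ0 ⊗ₘ (Q.condKernel.comap _ mproj)
  have E2 : ∀ f : (X1 × Measure X2) × (X2 × X2) → ℝ≥0∞, Measurable f →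
      ∫⁻ w, f (w.1.1.2, (w.1.2, w.2)) ∂Λ = ∫⁻ w, ∫⁻ x, f (w, x) ∂(Q w) ∂ν := by
    intro f hf
    have m1 : Measurable fun w : (((X1 × Measure X2) × (X1 × Measure X2)) × X2) × X2 =>
        f (w.1.1.2, (w.1.2, w.2)) := by fun_prop
    have m2 : Measurable fun v : (X1 × Measure X2) × X2 =>
        ∫⁻ y, f (v.1, (v.2, y)) ∂(Q.condKernel v) :=
      Measurable.lintegral_kernel_prod_right' (κ := Q.condKernel)
        (f := fun u : ((X1 × Measure X2) × X2) × X2 => f (u.1.1, (u.1.2, u.2))) (by fun_prop)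
    calc ∫⁻ w, f (w.1.1.2, (w.1.2, w.2)) ∂Λ
        = ∫⁻ w, ∫⁻ y, f (w.1.2, (w.2, y)) ∂(Q.condKernel (w.1.2, w.2)) ∂Λ0 :=
          Measure.lintegral_compProd m1
      _ = ∫⁻ v, ∫⁻ y, f (v.1, (v.2, y)) ∂(Q.condKernel v) ∂(ν ⊗ₘ κ) := by
          rw [← E1, lintegral_map m2 mproj]
      _ = ∫⁻ w, ∫⁻ x, ∫⁻ y, f (w, (x, y)) ∂(Q.condKernel (w, x)) ∂(κ w) ∂ν :=
          Measure.lintegral_compProd m2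
      _ = ∫⁻ w, ∫⁻ x, f (w, x) ∂(Q w) ∂ν := by
          refine lintegral_congr fun w => ?_
          conv_rhs => rw [← hdis]
          rw [Kernel.lintegral_compProd _ _ _ (by fun_prop)]
  have E3 : ∀ f : ((X1 × Measure X2) × (X1 × Measure X2)) × X2 → ℝ≥0∞, Measurable f →
      ∫⁻ w, f w.1 ∂Λ = ∫⁻ z, ∫⁻ x, f (z, x) ∂(K z.1) ∂γ := by
    intro f hf
    calc ∫⁻ w, f w.1 ∂Λ = ∫⁻ w, ∫⁻ _y, f w ∂(Q.condKernel (w.1.2, w.2)) ∂Λ0 :=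
          Measure.lintegral_compProd (f := fun w => f w.1) (by fun_prop)
      _ = ∫⁻ w, f w ∂Λ0 := by simp
      _ = _ := Measure.lintegral_compProd hf
  have mG : Measurable fun w : (((X1 × Measure X2) × (X1 × Measure X2)) × X2) × X2 =>
      (((w.1.1.1.1, w.1.2), (w.1.1.2.1, w.2)) : (X1 × X2) × (X1 × X2)) := by fun_prop
  refine ⟨Λ.map (fun w => ((w.1.1.1.1, w.1.2), (w.1.1.2.1, w.2))), ⟨?_, ?_⟩, ?_⟩
  · refine Measure.ext_of_lintegral _ fun f hf => ?_
    rw [lintegral_map hf measurable_fst, lintegral_map (by fun_prop) mG,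
      lintegral_und μ (hμ.mono fun z hz => hz.1) hf]
    have m3 : Measurable fun z : X1 × Measure X2 => ∫⁻ x, f (z.1, x) ∂(K z) :=
      Measurable.lintegral_kernel_prod_right' (κ := K)
        (f := fun u : (X1 × Measure X2) × X2 => f (u.1.1, u.2)) (by fun_prop)
    rw [E3 (fun w => f (w.1.1.1, w.2)) (by fun_prop), ← hγ1, lintegral_map m3 measurable_fst]
  · refine Measure.ext_of_lintegral _ fun f hf => ?_
    rw [lintegral_map hf measurable_snd, lintegral_map (by fun_prop) mG,
      lintegral_und ν (hν.mono fun z hz => hz.1) hf]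
    rw [E2 (fun w => f (w.1.1, w.2.2)) (by fun_prop)]
    refine lintegral_congr fun w => ?_
    rw [← hK, ← (hQ w).2, lintegral_map (by fun_prop) measurable_snd]
  · have mP : Measurable fun z : (X1 × X2) × (X1 × X2) => edist z.1.1 z.2.1 ^ p
        + edist z.1.2 z.2.2 ^ p := by fun_prop
    have eP : ∀ z : (X1 × X2) × (X1 × X2), prodDist p edist edist z.1 z.2 ^ p =
        edist z.1.1 z.2.1 ^ p + edist z.1.2 z.2.2 ^ p := by
      intro z
      unfold prodDist
      rw [← ENNReal.rpow_mul, one_div_mul_cancel hp0.ne', ENNReal.rpow_one]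
    simp_rw [eP]
    rw [lintegral_map mP mG, lintegral_add_left (by fun_prop)]
    rw [E3 (fun w => edist w.1.1.1 w.1.2.1 ^ p) (by fun_prop),
      E2 (fun w => edist w.2.1 w.2.2 ^ p) (by fun_prop)]
    simp only [lintegral_const, measure_univ, mul_one]
    rw [lintegral_add_left (by fun_prop), add_assoc]
    gcongr
    have m4 : Measurable fun w : X1 × Measure X2 =>
        ∫⁻ x : X2 × X2, edist x.1 x.2 ^ p ∂(Q w) :=
      Measurable.lintegral_kernel_prod_right' (κ := Q)
        (f := fun u : (X1 × Measure X2) × (X2 × X2) => edist u.2.1 u.2.2 ^ p) (by fun_prop)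
    rw [← hγ2, lintegral_map m4 measurable_snd]
    calc ∫⁻ z, ∫⁻ x : X2 × X2, edist x.1 x.2 ^ p ∂(Q z.2) ∂γ
        ≤ ∫⁻ z, (Wp p edist (η z) z.2.2 ^ p + ε) ∂γ := by
          refine lintegral_mono_ae ?_
          filter_upwards [hγν] with z hz
          have hKz : K z.2 = z.2.2 := by rw [hK, evK_apply, fixP_eq _ hz.1]
          have := hQc z.2 (by rw [hKz]; exact hz.2)
          rwa [hKz, hκ, ← hηg] at this
      _ = _ := by rw [lintegral_add_right _ measurable_const]; simp

lemma main_ineq (p : ℝ) (hp : 1 ≤ p) (μ ν : Measure (X1 × Measure X2))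
    (hμ : MemPpLift p edist edist μ) (hν : MemPpLift p edist edist ν) :
    Wp p (prodDist p edist edist) (und μ) (und ν) ≤ CWbar p edist edist μ ν := by
  have hp0 : 0 < p := by linarith
  have := hμ.1
  have := hν.1
  refine le_iInf₂ fun γ hγ => le_iInf₂ fun η hη => ?_
  have key : Wp p (prodDist p edist edist) (und μ) (und ν) ^ p ≤
      ∫⁻ z, (edist z.1.1 z.2.1 ^ p + Wp p edist (η z) z.2.2 ^ p) ∂γ := by
    refine ENNReal.le_of_forall_pos_le_add fun ε hε _ => ?_
    obtain ⟨π, hπ, hle⟩ := main_eps p hp μ ν hμ.2.1 hν.2.1 γ hγ η hη ε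
      (by exact_mod_cast hε.ne')
    refine le_trans ?_ hle
    have h1 : Wp p (prodDist p edist edist) (und μ) (und ν) ≤
        (∫⁻ z, prodDist p edist edist z.1 z.2 ^ p ∂π) ^ (1 / p) := iInf₂_le π hπ
    have h2 := ENNReal.rpow_le_rpow h1 hp0.le
    rwa [← ENNReal.rpow_mul, one_div_mul_cancel hp0.ne', ENNReal.rpow_one] at h2
  have h3 := ENNReal.rpow_le_rpow key (z := 1 / p) (by positivity)
  rwa [← ENNReal.rpow_mul, mul_one_div_cancel hp0.ne', ENNReal.rpow_one] at h3

end Main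


/-- **Lemma 4.14.**  The intensity map `und` is a contraction from
`(𝒫_p(𝒳₁ × 𝒫_p(𝒳₂)), SCW̄_p)` to `(𝒫_p(𝒳₁ × 𝒳₂), 𝒲_p)`; more precisely
`𝒲_p(und μ, und ν) ≤ CW̄_p(μ, ν)`. -/
theorem und_contraction
    {X1 X2 : Type} [MetricSpace X1] [CompleteSpace X1] [SecondCountableTopology X1]
    [MeasurableSpace X1] [BorelSpace X1] [Nonempty X1]
    [MetricSpace X2] [CompleteSpace X2] [SecondCountableTopology X2]
    [MeasurableSpace X2] [BorelSpace X2] [Nonempty X2]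
    (p : ℝ) (hp : 1 ≤ p) :
    let dA : X1 → X1 → ℝ≥0∞ := edist
    let dB : X2 → X2 → ℝ≥0∞ := edist
    (∀ μ ν : Measure (X1 × Measure X2), MemPpLift p dA dB μ → MemPpLift p dA dB ν →
        Wp p (prodDist p dA dB) (und μ) (und ν) ≤ CWbar p dA dB μ ν) ∧
    (∀ μ ν : Measure (X1 × Measure X2), MemPpLift p dA dB μ → MemPpLift p dA dB ν →
        Wp p (prodDist p dA dB) (und μ) (und ν) ≤ SCWbar p dA dB μ ν) := by
  intro dA dB
  refine ⟨fun μ ν hμ hν => main_ineq p hp μ ν hμ hν, fun μ ν hμ hν => ?_⟩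
  exact (main_ineq p hp μ ν hμ hν).trans (le_max_left _ _)

end AWPaper
end
end
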